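/- arXiv:2308.14193 — 4 statements merged into one kernel-verified Lean document; each statement's English description precedes it below -/
import Mathlib

section
/- In a Hilbert space X, for T : X ⇉ X and (x̄, x̄*) ∈ gph T, local maximal monotonicity of type (A) around (x̄, x̄*) is equivalent to local maximal monotonicity of type (B) around (x̄, x̄*). -/
open Set Filter Topology RealInnerProductSpace

variable {X : Type*} [NormedAddCommGroup X] [InnerProductSpace ℝ X] [CompleteSpace X]

/-- Graph of a set-valued map. -/
def gph (T : X → Set X) : Set (X × X) := {p | p.2 ∈ T p.1}

/-- Monotone set-valued operator on a Hilbert space. -/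
def Mono (T : X → Set X) : Prop :=
  ∀ p ∈ gph T, ∀ q ∈ gph T, 0 ≤ ⟪p.2 - q.2, p.1 - q.1⟫

/-- Maximal monotone operator. -/
def MaxMono (T : X → Set X) : Prop :=
  Mono T ∧ ∀ S : X → Set X, Mono S → gph T ⊆ gph S → gph S = gph T

/-- σ-strongly monotone operator. -/
def StrMono (σ : ℝ) (T : X → Set X) : Prop :=
  ∀ p ∈ gph T, ∀ q ∈ gph T, σ * ‖p.1 - q.1‖ ^ 2 ≤ ⟪p.2 - q.2, p.1 - q.1⟫

/-- σ-strongly maximal monotone operator. -/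
def StrMaxMono (σ : ℝ) (T : X → Set X) : Prop :=
  StrMono σ T ∧ ∀ S : X → Set X, StrMono σ S → gph T ⊆ gph S → gph S = gph T

/-- Monotone with respect to a set `W ⊆ X × X`. -/
def MonoOn' (T : X → Set X) (W : Set (X × X)) : Prop :=
  ∀ p ∈ gph T ∩ W, ∀ q ∈ gph T ∩ W, 0 ≤ ⟪p.2 - q.2, p.1 - q.1⟫

/-- σ-strongly monotone with respect to a set `W ⊆ X × X`. -/
def StrMonoOn' (σ : ℝ) (T : X → Set X) (W : Set (X × X)) : Prop :=
  ∀ p ∈ gph T ∩ W, ∀ q ∈ gph T ∩ W, σ * ‖p.1 - q.1‖ ^ 2 ≤ ⟪p.2 - q.2, p.1 - q.1⟫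

/-- Locally maximal monotone of type (A) with respect to `W`. -/
def LocMaxA (T : X → Set X) (W : Set (X × X)) : Prop :=
  MonoOn' T W ∧ ∀ S : X → Set X, MonoOn' S W → gph T ∩ W ⊆ gph S ∩ W →
    gph S ∩ W = gph T ∩ W

/-- Locally maximal monotone of type (A) around a graph point. -/
def LocMaxAAt (T : X → Set X) (x v : X) : Prop :=
  ∃ U ∈ 𝓝 x, ∃ V ∈ 𝓝 v, LocMaxA T (U ×ˢ V)

/-- Locally maximal monotone of type (B) around a graph point. -/
def LocMaxBAt (T : X → Set X) (x v : X) : Prop :=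
  ∃ U ∈ 𝓝 x, ∃ V ∈ 𝓝 v, ∃ G : X → Set X, MaxMono G ∧
    gph G ∩ U ×ˢ V = gph T ∩ U ×ˢ V

/-- Locally monotone around a graph point. -/
def LocMonoAt (T : X → Set X) (x v : X) : Prop :=
  ∃ U ∈ 𝓝 x, ∃ V ∈ 𝓝 v, ∃ G : X → Set X, Mono G ∧
    gph G ∩ U ×ˢ V = gph T ∩ U ×ˢ V

/-- Locally strongly maximal monotone of type (A) around a graph point with modulus σ. -/
def LocStrMaxAAt (σ : ℝ) (T : X → Set X) (x v : X) : Prop :=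
  ∃ U ∈ 𝓝 x, ∃ V ∈ 𝓝 v, StrMonoOn' σ T (U ×ˢ V) ∧
    ∀ S : X → Set X, MonoOn' S (U ×ˢ V) → gph T ∩ U ×ˢ V ⊆ gph S ∩ U ×ˢ V →
      gph S ∩ U ×ˢ V = gph T ∩ U ×ˢ V

/-- Locally strongly maximal monotone of type (B) around a graph point with modulus σ. -/
def LocStrMaxBAt (σ : ℝ) (T : X → Set X) (x v : X) : Prop :=
  ∃ U ∈ 𝓝 x, ∃ V ∈ 𝓝 v, ∃ G : X → Set X, StrMaxMono σ G ∧
    gph G ∩ U ×ˢ V = gph T ∩ U ×ˢ V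

/-- Pointwise sum of set-valued maps. -/
def addMap (T S : X → Set X) : X → Set X :=
  fun x => {v | ∃ a ∈ T x, ∃ b ∈ S x, v = a + b}

/-- The shift `T + σ I`. -/
def shiftI (σ : ℝ) (T : X → Set X) : X → Set X :=
  fun x => (fun v => v + σ • x) '' T x

/-- Set-valued inverse. -/
def invMap (T : X → Set X) : X → Set X := fun v => {x | v ∈ T x}

/-- Resolvent `(I + λ T)⁻¹` as a set-valued map. -/
def res (lam : ℝ) (T : X → Set X) : X → Set X :=
  fun y => {x | ∃ v ∈ T x, y = x + lam • v}

/-- `F` has a single-valued localization around `(ȳ, x̄) ∈ gph F`. -/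
def HasSVLoc (F : X → Set X) (ybar xbar : X) : Prop :=
  ∃ W ∈ 𝓝 ybar, ∃ Q ∈ 𝓝 xbar, ∃ f : X → X, (∀ y ∈ W, f y ∈ Q) ∧
    ∀ y x, (x ∈ F y ∧ y ∈ W ∧ x ∈ Q) ↔ (y ∈ W ∧ x = f y)

/-- `F` has a continuous single-valued localization around `(ȳ, x̄) ∈ gph F`. -/
def HasCSVLoc (F : X → Set X) (ybar xbar : X) : Prop :=
  ∃ W ∈ 𝓝 ybar, ∃ Q ∈ 𝓝 xbar, ∃ f : X → X, ContinuousOn f W ∧ (∀ y ∈ W, f y ∈ Q) ∧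
    ∀ y x, (x ∈ F y ∧ y ∈ W ∧ x ∈ Q) ↔ (y ∈ W ∧ x = f y)

/-- Hypomonotone with modulus `r` with respect to `W`. -/
def HypoOn (r : ℝ) (T : X → Set X) (W : Set (X × X)) : Prop :=
  ∀ p ∈ gph T ∩ W, ∀ q ∈ gph T ∩ W,
    -(r * ‖p.1 - q.1‖ ^ 2) ≤ ⟪p.2 - q.2, p.1 - q.1⟫

/-- Locally hypomonotone with modulus `r` around a graph point. -/
def LocHypoAt (r : ℝ) (T : X → Set X) (x v : X) : Prop :=
  ∃ W ∈ 𝓝 ((x, v) : X × X), HypoOn r T W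

/-- The regular (Fréchet) normal cone to `Ω ⊆ X × X` at `p`, using the sum norm. -/
def rnc (Ω : Set (X × X)) (p : X × X) : Set (X × X) :=
  {q | ∀ ε > 0, ∀ᶠ u in 𝓝[Ω] p,
    ⟪q.1, u.1 - p.1⟫ + ⟪q.2, u.2 - p.2⟫ ≤ ε * (‖u.1 - p.1‖ + ‖u.2 - p.2‖)}

/-- The regular coderivative of `F` at `(x, v) ∈ gph F` applied to `w`. -/
def coderiv (F : X → Set X) (x v w : X) : Set X :=
  {z | ((z, -w) : X × X) ∈ rnc (gph F) (x, v)}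

/-- The graph of `T` is locally closed around `p`. -/
def LocClosedAt (Ω : Set (X × X)) (p : X × X) : Prop :=
  ∃ ε > 0, IsClosed (Ω ∩ Metric.closedBall p ε)

/-- Monotone set of pairs, together with maximality in pointwise form. -/
def MM8 (A : Set (X × X)) : Prop :=
  (∀ p ∈ A, ∀ q ∈ A, 0 ≤ ⟪p.2 - q.2, p.1 - q.1⟫) ∧
  ∀ p : X × X, (∀ q ∈ A, 0 ≤ ⟪p.2 - q.2, p.1 - q.1⟫) → p ∈ A

/-- Minty's theorem, via the Fitzpatrick function. -/
theorem minty8 (A : Set (X × X)) (hA : MM8 A) (hne : A.Nonempty) :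
    ∃ p ∈ A, p.1 + p.2 = 0 := by
  obtain ⟨hmono, hmax⟩ := hA
  let C : Set (X × X × ℝ) :=
    {z | ∀ a ∈ A, ⟪a.1, z.2.1⟫ + ⟪z.1, a.2⟫ - ⟪a.1, a.2⟫ ≤ z.2.2}
  let h : X × X × ℝ → ℝ := fun z => z.2.2 + ‖z.1‖ ^ 2 / 2 + ‖z.2.1‖ ^ 2 / 2
  have hexp : ∀ a b x v : X, ⟪v - b, x - a⟫ = ⟪x, v⟫ - (⟪a, v⟫ + ⟪x, b⟫ - ⟪a, b⟫) := by
    intro a b x v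
    simp only [inner_sub_left, inner_sub_right]
    rw [real_inner_comm v x, real_inner_comm v a, real_inner_comm b x, real_inner_comm b a]
    ring
  have hF : ∀ z ∈ C, ⟪z.1, z.2.1⟫ ≤ z.2.2 := by
    intro z hz
    by_contra! hlt
    have hzA : (z.1, z.2.1) ∈ A := by
      apply hmax
      intro q hq
      have := hz q hq
      simp only [hexp]
      linarith
    have := hz _ hzA
    simp only at this
    linarith
  have hAC : ∀ a ∈ A, (a.1, a.2, ⟪a.1, a.2⟫) ∈ C := by
    intro a ha b hb
    have := hmono a ha b hb
    rw [hexp] at this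
    simp only
    linarith
  have hpos : ∀ z ∈ C, 0 ≤ h z := by
    intro z hz
    have h1 := hF z hz
    have h2 := norm_add_sq_real z.1 z.2.1
    have h3 := sq_nonneg ‖z.1 + z.2.1‖
    simp only [h]
    nlinarith
  have hconv : ∀ z ∈ C, ∀ z' ∈ C, ∀ s : ℝ, 0 ≤ s → s ≤ 1 →
      (z.1 + s • (z'.1 - z.1), z.2.1 + s • (z'.2.1 - z.2.1),
        z.2.2 + s * (z'.2.2 - z.2.2)) ∈ C := by
    intro z hz z' hz' s hs0 hs1 a ha
    have h1 := hz a ha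
    have h2 := hz' a ha
    simp only [inner_add_left, inner_add_right, inner_smul_left, inner_smul_right,
      inner_sub_left, inner_sub_right, conj_trivial]
    nlinarith [mul_le_mul_of_nonneg_left h1 (sub_nonneg.2 hs1), mul_le_mul_of_nonneg_left h2 hs0]
  have hval : ∀ z z' : X × X × ℝ, ∀ s : ℝ,
      h (z.1 + s • (z'.1 - z.1), z.2.1 + s • (z'.2.1 - z.2.1), z.2.2 + s * (z'.2.2 - z.2.2))
      = h z + s * ((z'.2.2 - z.2.2) + ⟪z.1, z'.1 - z.1⟫ + ⟪z.2.1, z'.2.1 - z.2.1⟫)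
        + s ^ 2 * (‖z'.1 - z.1‖ ^ 2 / 2 + ‖z'.2.1 - z.2.1‖ ^ 2 / 2) := by
    intro z z' s
    simp only [h]
    rw [norm_add_sq_real, norm_add_sq_real, norm_smul, norm_smul, mul_pow, mul_pow,
      inner_smul_right, inner_smul_right, Real.norm_eq_abs, sq_abs]
    ring
  obtain ⟨a0, ha0⟩ := hne
  set m := sInf (h '' C) with hm
  have hbdd : BddBelow (h '' C) := ⟨0, by rintro _ ⟨z, hz, rfl⟩; exact hpos z hz⟩
  have hmle : ∀ z ∈ C, m ≤ h z := fun z hz => csInf_le hbdd ⟨z, hz, rfl⟩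
  have hseq : ∀ n : ℕ, ∃ z ∈ C, h z < m + 1 / ((n : ℝ) + 1) := by
    intro n
    have : (h '' C).Nonempty := ⟨_, _, hAC a0 ha0, rfl⟩
    obtain ⟨_, ⟨z, hz, rfl⟩, hlt⟩ := Real.lt_sInf_add_pos this
      (ε := 1 / ((n : ℝ) + 1)) (by positivity)
    exact ⟨z, hz, hlt⟩
  choose z hzC hzlt using hseq
  have hpar : ∀ z ∈ C, ∀ z' ∈ C,
      ‖z'.1 - z.1‖ ^ 2 + ‖z'.2.1 - z.2.1‖ ^ 2 ≤ 4 * (h z - m) + 4 * (h z' - m) := by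
    intro z hz z' hz'
    have h1 := hmle _ (hconv z hz z' hz' (1/2) (by norm_num) (by norm_num))
    have h2 := hval z z' (1/2)
    have h3 := hval z z' 1
    have h4 : h (z.1 + (1:ℝ) • (z'.1 - z.1), z.2.1 + (1:ℝ) • (z'.2.1 - z.2.1),
      z.2.2 + 1 * (z'.2.2 - z.2.2)) = h z' := by simp [h]
    rw [h4] at h3
    rw [h2] at h1
    linarith
  have hlim : Tendsto (fun n : ℕ => 1 / ((n : ℝ) + 1)) atTop (𝓝 0) :=
    tendsto_one_div_add_atTop_nhds_zero_nat
  have hb : ∀ N n k : ℕ, N ≤ n → N ≤ k →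
      ‖(z k).1 - (z n).1‖ ^ 2 + ‖(z k).2.1 - (z n).2.1‖ ^ 2 ≤ 8 * (1 / ((N : ℝ) + 1)) := by
    intro N n k hn hk
    have h1 := hpar _ (hzC n) _ (hzC k)
    have h2 := hzlt n
    have h3 := hzlt k
    have h4 := Nat.one_div_le_one_div (α := ℝ) hn
    have h5 := Nat.one_div_le_one_div (α := ℝ) hk
    linarith
  have hsq : Tendsto (fun N : ℕ => √(8 * (1 / ((N : ℝ) + 1)))) atTop (𝓝 0) := by
    have := (hlim.const_mul 8).sqrt
    simpa using this
  have hc1 : CauchySeq (fun n => (z n).1) := by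
    refine cauchySeq_of_le_tendsto_0 _ (fun n k N hn hk => ?_) hsq
    rw [dist_comm, dist_eq_norm]
    apply Real.le_sqrt_of_sq_le
    have := hb N n k hn hk
    nlinarith [sq_nonneg ‖(z k).2.1 - (z n).2.1‖]
  have hc2 : CauchySeq (fun n => (z n).2.1) := by
    refine cauchySeq_of_le_tendsto_0 _ (fun n k N hn hk => ?_) hsq
    rw [dist_comm, dist_eq_norm]
    apply Real.le_sqrt_of_sq_le
    have := hb N n k hn hk
    nlinarith [sq_nonneg ‖(z k).1 - (z n).1‖]
  obtain ⟨x0, hx0⟩ := cauchySeq_tendsto_of_complete hc1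
  obtain ⟨v0, hv0⟩ := cauchySeq_tendsto_of_complete hc2
  have hh : Tendsto (fun n => h (z n)) atTop (𝓝 m) := by
    refine tendsto_of_tendsto_of_tendsto_of_le_of_le tendsto_const_nhds
      (h := fun n : ℕ => m + 1 / ((n : ℝ) + 1)) ?_ (fun n => hmle _ (hzC n))
      (fun n => (hzlt n).le)
    simpa using hlim.const_add m
  set t0 := m - ‖x0‖ ^ 2 / 2 - ‖v0‖ ^ 2 / 2 with ht0def
  have ht0 : Tendsto (fun n => (z n).2.2) atTop (𝓝 t0) := by
    have := (hh.sub ((hx0.norm.pow 2).div_const 2)).sub ((hv0.norm.pow 2).div_const 2)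
    refine this.congr (fun n => ?_)
    simp only [h]
    ring
  have hz0 : (x0, v0, t0) ∈ C := by
    intro a ha
    refine le_of_tendsto_of_tendsto' ?_ ht0 (fun n => hzC n a ha)
    exact ((tendsto_const_nhds.inner hv0).add (hx0.inner tendsto_const_nhds)).sub
      tendsto_const_nhds
  have hh0 : h (x0, v0, t0) = m := by simp only [h, ht0def]; ring
  have hopt : ∀ a ∈ A, 0 ≤ (⟪a.1, a.2⟫ - t0) + ⟪x0, a.1 - x0⟫ + ⟪v0, a.2 - v0⟫ := by
    intro a ha
    by_contra! hneg
    set B := (⟪a.1, a.2⟫ - t0) + ⟪x0, a.1 - x0⟫ + ⟪v0, a.2 - v0⟫ with hB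
    set Q := ‖a.1 - x0‖ ^ 2 / 2 + ‖a.2 - v0‖ ^ 2 / 2 with hQ
    have hQ0 : 0 ≤ Q := by positivity
    have key : ∀ s : ℝ, 0 ≤ s → s ≤ 1 → 0 ≤ s * B + s ^ 2 * Q := by
      intro s hs hs1
      have h1 := hmle _ (hconv _ hz0 _ (hAC a ha) s hs hs1)
      rw [hval, hh0] at h1
      simp only at h1
      rw [← hB, ← hQ] at h1
      linarith
    have hden : 0 < Q - B + 1 := by linarith
    have hs0 : 0 < -B / (Q - B + 1) := div_pos (by linarith) hden
    have hs1 : -B / (Q - B + 1) ≤ 1 := by rw [div_le_one hden]; linarith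
    have h2 := key _ hs0.le hs1
    have h3 : (-B / (Q - B + 1)) * (Q - B + 1) = -B := div_mul_cancel₀ _ hden.ne'
    set s := -B / (Q - B + 1)
    have h4 : 0 ≤ s * (B + s * Q) := by nlinarith
    have h5 : 0 ≤ B + s * Q := by
      by_contra! hc
      nlinarith [mul_neg_of_pos_of_neg hs0 hc]
    nlinarith
  have hF0 := hF _ hz0
  simp only at hF0
  have hrel : ∀ a ∈ A, ‖x0 + v0‖ ^ 2 ≤ ⟪-x0 - a.2, -v0 - a.1⟫ := by
    intro a ha
    have h1 := hopt a ha
    rw [hexp, norm_add_sq_real]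
    simp only [inner_sub_right, inner_neg_left, inner_neg_right, real_inner_self_eq_norm_sq]
      at h1 ⊢
    rw [real_inner_comm x0 v0, real_inner_comm x0 a.1]
    linarith
  have hin : (-v0, -x0) ∈ A := by
    apply hmax
    intro q hq
    exact (sq_nonneg _).trans (hrel q hq)
  refine ⟨_, hin, ?_⟩
  have h1 := hrel _ hin
  simp only [sub_self, inner_zero_left] at h1
  have h2 : x0 + v0 = 0 := by
    rw [← norm_eq_zero]
    exact pow_eq_zero_iff (two_ne_zero) |>.1 (le_antisymm h1 (sq_nonneg _))
  rw [← neg_add, add_comm, h2, neg_zero]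

/-- Resolvents of a maximal monotone set are everywhere defined. -/
theorem res8 (A : Set (X × X)) (hA : MM8 A) (hne : A.Nonempty) (k : ℝ) (hk : 0 < k) (c : X) :
    ∃ p ∈ A, p.1 + k • p.2 = c := by
  have hsc : ∀ p q : X × X, ⟪k⁻¹ • p.2 - k⁻¹ • q.2, (p.1 + c) - (q.1 + c)⟫
      = k⁻¹ * ⟪p.2 - q.2, p.1 - q.1⟫ := by
    intro p q
    rw [← smul_sub, inner_smul_left, add_sub_add_right_eq_sub]
    simp
  have hki : 0 < k⁻¹ := inv_pos.2 hk
  have key := minty8 {p : X × X | (p.1 + c, k⁻¹ • p.2) ∈ A} ⟨?_, ?_⟩ ?_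
  · obtain ⟨p, hp, hp0⟩ := key
    refine ⟨_, hp, ?_⟩
    simp only [smul_smul, mul_inv_cancel₀ hk.ne', one_smul]
    rw [add_right_comm, hp0, zero_add]
  · intro p hp q hq
    have := hA.1 _ hp _ hq
    simp only [hsc] at this
    exact nonneg_of_mul_nonneg_right this hki
  · intro p hp
    refine hA.2 _ (fun q hq => ?_)
    have h1 := hp (q.1 - c, k • q.2) (by
      simpa [smul_smul, inv_mul_cancel₀ hk.ne'] using hq)
    have h2 := hsc p (q.1 - c, k • q.2)
    simp only [smul_smul, inv_mul_cancel₀ hk.ne', one_smul, sub_add_cancel] at h2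
    simp only at h1 ⊢
    rw [h2]
    positivity
  · obtain ⟨q, hq⟩ := hne
    exact ⟨(q.1 - c, k • q.2), by simpa [smul_smul, inv_mul_cancel₀ hk.ne'] using hq⟩

/-- Local maximality in a product of balls centered at the origin. -/
theorem core8 (A : Set (X × X)) (hA : MM8 A) (h0 : ((0 : X), (0 : X)) ∈ A) (r : ℝ)
    (p q : X) (hp : ‖p‖ < r) (hq : ‖q‖ < r)
    (hrel : ∀ a ∈ A, ‖a.1‖ < r → ‖a.2‖ < r → 0 ≤ ⟪q - a.2, p - a.1⟫) : (p, q) ∈ A := by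
  obtain ⟨R, hqR, hRr⟩ := exists_between hq
  have hR : 0 < R := (norm_nonneg q).trans_lt hqR
  have hr : 0 < r := hR.trans hRr
  set d := (r - ‖p‖) / (2 * r) with hd
  have hd0 : 0 < d := div_pos (by linarith) (by linarith)
  have hdr : d * r = (r - ‖p‖) / 2 := by rw [hd]; field_simp
  set c := p + d • q with hc
  have hcr : ‖c‖ < r := by
    calc ‖c‖ ≤ ‖p‖ + ‖d • q‖ := norm_add_le _ _
      _ = ‖p‖ + d * ‖q‖ := by rw [norm_smul, Real.norm_of_nonneg hd0.le]
      _ < r := by nlinarith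
  have hex : ∀ k : ℝ, ∃ a : X × X, 0 < k → a ∈ A ∧ a.1 + k • a.2 = c := by
    intro k
    by_cases hk : 0 < k
    · obtain ⟨a, ha, ha'⟩ := res8 A hA ⟨_, h0⟩ k hk c
      exact ⟨a, fun _ => ⟨ha, ha'⟩⟩
    · exact ⟨(0, 0), fun h => absurd h hk⟩
  choose f hf using hex
  have hpos : ∀ a ∈ A, 0 ≤ ⟪a.2, a.1⟫ := by
    intro a ha
    simpa using hA.1 a ha _ h0
  have hy : ∀ k : ℝ, 0 < k → ‖(f k).1‖ ≤ ‖c‖ := by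
    intro k hk
    obtain ⟨h1, h2⟩ := hf k hk
    have h3 := hpos _ h1
    have h4 : ⟪c, (f k).1⟫ = ‖(f k).1‖ ^ 2 + k * ⟪(f k).2, (f k).1⟫ := by
      rw [← h2, inner_add_left, inner_smul_left, real_inner_self_eq_norm_sq]
      simp
    have h5 := real_inner_le_norm c (f k).1
    have h6 : 0 ≤ k * ⟪(f k).2, (f k).1⟫ := by positivity
    by_contra! hlt
    nlinarith [norm_nonneg c]
  have hw : ∀ k : ℝ, 0 < k → k * ‖(f k).2‖ ≤ ‖c‖ := by
    intro k hk
    obtain ⟨h1, h2⟩ := hf k hk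
    have h3 := hpos _ h1
    have h4 : ⟪c, (f k).2⟫ = k * ‖(f k).2‖ ^ 2 + ⟪(f k).2, (f k).1⟫ := by
      rw [← h2, inner_add_left, inner_smul_left, real_inner_self_eq_norm_sq,
        real_inner_comm (f k).2 (f k).1]
      simp
      ring
    have h5 := real_inner_le_norm c (f k).2
    by_contra! hlt
    have h7 : 0 < ‖(f k).2‖ := by
      by_contra! hle
      nlinarith [norm_nonneg c]
    nlinarith
  have hlip : ∀ k ∈ Ici d, ∀ l ∈ Ici d, d * ‖(f k).2 - (f l).2‖ ≤ |k - l| * (‖c‖ / d) := by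
    intro k hk l hl
    have hk0 : 0 < k := hd0.trans_le hk
    have hl0 : 0 < l := hd0.trans_le hl
    obtain ⟨h1, h2⟩ := hf k hk0
    obtain ⟨h3, h4⟩ := hf l hl0
    have h5 := hA.1 _ h1 _ h3
    have h6 : (f k).1 - (f l).1 = (l - k) • (f l).2 - k • ((f k).2 - (f l).2) := by
      rw [eq_sub_of_add_eq h2, eq_sub_of_add_eq h4]
      module
    rw [h6, inner_sub_right, inner_smul_right, inner_smul_right, real_inner_self_eq_norm_sq] at h5
    have h7 : (l - k) * ⟪(f k).2 - (f l).2, (f l).2⟫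
        ≤ |k - l| * (‖(f k).2 - (f l).2‖ * ‖(f l).2‖) := by
      refine (le_abs_self _).trans ?_
      rw [abs_mul, abs_sub_comm]
      gcongr
      exact abs_real_inner_le_norm _ _
    have h8 : ‖(f l).2‖ ≤ ‖c‖ / d := by
      rw [le_div_iff₀ hd0]
      have := hw l hl0
      have hl' : d ≤ l := hl
      nlinarith [norm_nonneg (f l).2]
    have h9 : k * ‖(f k).2 - (f l).2‖ ≤ |k - l| * ‖(f l).2‖ := by
      by_contra! hlt
      have hn : 0 < ‖(f k).2 - (f l).2‖ := by
        by_contra! hle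
        have : ‖(f k).2 - (f l).2‖ = 0 := le_antisymm hle (norm_nonneg _)
        rw [this, mul_zero] at hlt
        have : 0 ≤ |k - l| * ‖(f l).2‖ := by positivity
        linarith
      nlinarith
    have hk' : d ≤ k := hk
    calc d * ‖(f k).2 - (f l).2‖ ≤ k * ‖(f k).2 - (f l).2‖ := by gcongr
      _ ≤ _ := h9
      _ ≤ _ := by gcongr
  have hcont : ContinuousOn (fun k => ‖(f k).2‖) (Ici d) := by
    apply ContinuousOn.norm
    have hK : 0 ≤ ‖c‖ / d / d := by positivity
    have : LipschitzOnWith (Real.toNNReal (‖c‖ / d / d)) (fun k => (f k).2) (Ici d) := by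
      apply LipschitzOnWith.of_dist_le_mul
      intro k hk l hl
      rw [Real.coe_toNNReal _ hK, dist_eq_norm, Real.dist_eq]
      have := hlip k hk l hl
      rw [div_mul_eq_mul_div, le_div_iff₀ hd0]
      linarith
    exact this.continuousOn
  -- choose the parameter
  obtain ⟨k, hk, hkR, hkeq⟩ : ∃ k, d ≤ k ∧ ‖(f k).2‖ ≤ R ∧ (k = d ∨ ‖(f k).2‖ = R) := by
    by_cases hcase : ‖(f d).2‖ ≤ R
    · exact ⟨d, le_rfl, hcase, Or.inl rfl⟩
    · push Not at hcase
      set M := d + ‖c‖ / R with hM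
      have hdM : d ≤ M := by
        have : 0 ≤ ‖c‖ / R := by positivity
        linarith
      have hM0 : 0 < M := hd0.trans_le hdM
      have hMR : ‖(f M).2‖ ≤ R := by
        have h1 := hw M hM0
        have h2 : M * R = d * R + ‖c‖ := by rw [hM]; field_simp
        by_contra! hlt
        nlinarith
      obtain ⟨k, hk, hkR⟩ := intermediate_value_Icc' hdM
        (hcont.mono Icc_subset_Ici_self) ⟨hMR, hcase.le⟩
      exact ⟨k, hk.1, hkR.le, Or.inr hkR⟩
  have hk0 : 0 < k := hd0.trans_le hk
  obtain ⟨hin, heq⟩ := hf k hk0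
  have hre := hrel _ hin ((hy k hk0).trans_lt hcr) (hkR.trans_lt hRr)
  set y := (f k).1
  set w := (f k).2
  have hpy : p - y = -(d • (q - w)) + (k - d) • w := by
    have : p = y + k • w - d • q := by rw [heq, hc]; abel
    rw [this]
    module
  have hD : ⟪q - w, p - y⟫ = -(d * ‖q - w‖ ^ 2) + (k - d) * (⟪q, w⟫ - ‖w‖ ^ 2) := by
    rw [hpy, inner_add_right, inner_neg_right, inner_smul_right, inner_smul_right,
      real_inner_self_eq_norm_sq, inner_sub_left, real_inner_self_eq_norm_sq]
  rw [hD] at hre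
  have hqw : (k - d) * (⟪q, w⟫ - ‖w‖ ^ 2) ≤ 0 := by
    rcases hkeq with h | h
    · simp [h]
    · have h1 := real_inner_le_norm q w
      rw [h] at h1 ⊢
      apply mul_nonpos_of_nonneg_of_nonpos (by linarith)
      nlinarith
  have hwq : q - w = 0 := by
    rw [← norm_eq_zero]
    have : ‖q - w‖ ^ 2 ≤ 0 := by
      by_contra! hlt
      nlinarith [mul_pos hd0 hlt]
    exact pow_eq_zero_iff (two_ne_zero) |>.1 (le_antisymm this (sq_nonneg _))
  have hwq' : q = w := sub_eq_zero.1 hwq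
  have hkd : k = d := by
    rcases hkeq with h | h
    · exact h
    · rw [← hwq'] at h
      linarith
  have hpy' : p = y := by
    rw [← sub_eq_zero, hpy, hwq, hkd]
    simp
  rw [hpy', hwq']
  exact hin

theorem mm8_of_maxMono {G : X → Set X} (hG : MaxMono G) : MM8 (gph G) := by
  refine ⟨hG.1, fun p hp => ?_⟩
  have := hG.2 (fun x => {v | (x, v) ∈ insert p (gph G)}) ?_ ?_
  · rw [← this]
    show (p.1, p.2) ∈ insert p (gph G)
    exact mem_insert _ _
  · intro a ha b hb
    have ha' : a = p ∨ a ∈ gph G := ha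
    have hb' : b = p ∨ b ∈ gph G := hb
    rcases ha' with h1 | h1 <;> rcases hb' with h2 | h2
    · rw [h1, h2]
      simp
    · rw [h1]
      exact hp b h2
    · rw [h2]
      have := hp a h1
      rwa [← neg_sub a.2, ← neg_sub a.1, inner_neg_neg] at this
    · exact hG.1 a h1 b h2
  · intro a ha
    exact mem_insert_of_mem _ ha

theorem extend8 (B : Set (X × X)) (hB : ∀ p ∈ B, ∀ q ∈ B, 0 ≤ ⟪p.2 - q.2, p.1 - q.1⟫) :
    ∃ G : X → Set X, MaxMono G ∧ B ⊆ gph G := by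
  obtain ⟨M, hBM, hM⟩ := zorn_subset_nonempty
    {D : Set (X × X) | ∀ p ∈ D, ∀ q ∈ D, 0 ≤ ⟪p.2 - q.2, p.1 - q.1⟫} (by
      intro c hc hch hne
      refine ⟨⋃₀ c, ?_, fun s hs => subset_sUnion_of_mem hs⟩
      rintro p ⟨s, hs, hps⟩ q ⟨t, ht, hqt⟩
      rcases hch.total hs ht with h | h
      · exact hc ht p (h hps) q hqt
      · exact hc hs p hps q (h hqt)) B hB
  refine ⟨fun x => {v | (x, v) ∈ M}, ⟨hM.prop, fun S hS hsub => ?_⟩, hBM⟩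
  exact Subset.antisymm (hM.le_of_ge hS hsub) hsub

/-- In a Hilbert space, local maximal monotonicity of type (A) around a graph point
is equivalent to local maximal monotonicity of type (B) around that point. -/
theorem stmt_8 (T : X → Set X) (xbar vbar : X) (hx : vbar ∈ T xbar) :
    LocMaxAAt T xbar vbar ↔ LocMaxBAt T xbar vbar := by
  constructor
  · rintro ⟨U, hU, V, hV, hmono, hmax⟩
    obtain ⟨G, hG, hsub⟩ := extend8 (gph T ∩ U ×ˢ V) hmono
    refine ⟨U, hU, V, hV, G, hG, hmax G ?_ ?_⟩
    · exact fun p hp q hq => hG.1 p hp.1 q hq.1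
    · exact fun p hp => ⟨hsub hp, hp.2⟩
  · rintro ⟨U, hU, V, hV, G, hG, hGT⟩
    obtain ⟨e1, he1, hb1⟩ := Metric.mem_nhds_iff.1 hU
    obtain ⟨e2, he2, hb2⟩ := Metric.mem_nhds_iff.1 hV
    set r := min e1 e2
    have hr : 0 < r := lt_min he1 he2
    have hb1' : Metric.ball xbar r ⊆ U := (Metric.ball_subset_ball (min_le_left _ _)).trans hb1
    have hb2' : Metric.ball vbar r ⊆ V := (Metric.ball_subset_ball (min_le_right _ _)).trans hb2
    have hiff : ∀ a ∈ Metric.ball xbar r ×ˢ Metric.ball vbar r, a ∈ gph G ↔ a ∈ gph T := by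
      intro a ha
      have haW : a ∈ U ×ˢ V := ⟨hb1' ha.1, hb2' ha.2⟩
      have := Set.ext_iff.1 hGT a
      simpa [haW] using this
    have h0 : (xbar, vbar) ∈ gph G :=
      (hiff _ ⟨Metric.mem_ball_self hr, Metric.mem_ball_self hr⟩).2 hx
    refine ⟨_, Metric.ball_mem_nhds xbar hr, _, Metric.ball_mem_nhds vbar hr, ?_, ?_⟩
    · exact fun p hp q hq => hG.1 p ((hiff p hp.2).2 hp.1) q ((hiff q hq.2).2 hq.1)
    · intro S hS hsub
      refine Subset.antisymm (fun p hp => ⟨(hiff p hp.2).1 ?_, hp.2⟩) hsub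
      obtain ⟨hm1, hm2⟩ := mm8_of_maxMono hG
      have := core8 {a : X × X | (a.1 + xbar, a.2 + vbar) ∈ gph G} ⟨?_, ?_⟩ (by simpa using h0)
        r (p.1 - xbar) (p.2 - vbar) (by simpa [dist_eq_norm] using hp.2.1)
        (by simpa [dist_eq_norm] using hp.2.2) ?_
      · simpa using this
      · intro a ha b hb
        simpa using hm1 _ ha _ hb
      · intro a ha
        refine hm2 _ (fun b hb => ?_)
        have := ha (b.1 - xbar, b.2 - vbar) (by simpa using hb)
        simpa [sub_sub_eq_add_sub] using this
      · intro a ha h1 h2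
        have haW : (a.1 + xbar, a.2 + vbar) ∈ Metric.ball xbar r ×ˢ Metric.ball vbar r :=
          ⟨by simpa [dist_eq_norm] using h1, by simpa [dist_eq_norm] using h2⟩
        have := hS p hp _ (hsub ⟨(hiff _ haW).1 ha, haW⟩)
        simp only at this
        rwa [sub_sub, sub_sub, add_comm vbar, add_comm xbar]
end

section
/- Let X be a Hilbert space, σ > 0, and T : X ⇉ X locally strongly maximal monotone of type (A) around (x̄, x̄*) ∈ gph T with modulus σ. Then T − σI is locally maximal monotone of type (A) around (x̄, x̄* − σx̄). -/
open Set Filter Topology RealInnerProductSpace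

variable {X : Type*} [NormedAddCommGroup X] [InnerProductSpace ℝ X] [CompleteSpace X]

/-- Separation of a convex set from the cone `r‖α‖ + s‖β‖ < γ`. -/
theorem sep_aux (r s : ℝ) (hr : 0 ≤ r) (hs : 0 ≤ s) (E : Set (X × X × ℝ)) (hE : Convex ℝ E)
    (hne : E.Nonempty) (h : ∀ d ∈ E, d.2.2 ≤ r * ‖d.1‖ + s * ‖d.2.1‖) :
    ∃ y w : X, ‖y‖ ≤ r ∧ ‖w‖ ≤ s ∧ ∀ d ∈ E, ⟪y, d.1⟫ + ⟪w, d.2.1⟫ + d.2.2 ≤ 0 := by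
  set Q : Set (X × X × ℝ) := {d | r * ‖d.1‖ + s * ‖d.2.1‖ < d.2.2} with hQ
  have hQo : IsOpen Q := isOpen_lt (by fun_prop) (by fun_prop)
  have hQc : Convex ℝ Q := by
    rintro ⟨a, b, g⟩ h1 ⟨a', b', g'⟩ h2 t t' ht ht' htt
    simp only [hQ, mem_ofPred_eq, Prod.smul_mk, Prod.mk_add_mk, smul_eq_mul] at h1 h2 ⊢
    have e1 : ‖t • a + t' • a'‖ ≤ t * ‖a‖ + t' * ‖a'‖ := by
      refine (norm_add_le _ _).trans ?_
      rw [norm_smul, norm_smul, Real.norm_of_nonneg ht, Real.norm_of_nonneg ht']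
    have e2 : ‖t • b + t' • b'‖ ≤ t * ‖b‖ + t' * ‖b'‖ := by
      refine (norm_add_le _ _).trans ?_
      rw [norm_smul, norm_smul, Real.norm_of_nonneg ht, Real.norm_of_nonneg ht']
    have e3 := mul_le_mul_of_nonneg_left e1 hr
    have e4 := mul_le_mul_of_nonneg_left e2 hs
    rcases ht.eq_or_lt with h0 | h0
    · subst h0
      have : t' = 1 := by linarith
      subst this
      nlinarith
    · have := mul_lt_mul_of_pos_left h1 h0
      have := mul_le_mul_of_nonneg_left h2.le ht'
      nlinarith
  have hdis : Disjoint Q E := by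
    rw [Set.disjoint_left]
    intro d hd hd'
    exact absurd (h d hd') (not_le.mpr hd)
  obtain ⟨F, u, hF1, hF2⟩ := geometric_hahn_banach_open hQc hQo hE hdis
  set c : ℝ := F (0, 0, 1) with hc
  set F1 : StrongDual ℝ X := F.comp (ContinuousLinearMap.inl ℝ X (X × ℝ)) with hF1d
  set F2 : StrongDual ℝ X := (F.comp (ContinuousLinearMap.inr ℝ X (X × ℝ))).comp
    (ContinuousLinearMap.inl ℝ X ℝ) with hF2d
  have hdec : ∀ a b g, F (a, b, g) = F1 a + F2 b + g * c := by
    intro a b g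
    have : ((a, b, g) : X × X × ℝ) = (a, 0, 0) + (0, b, 0) + g • (0, 0, 1) := by simp
    rw [this, map_add, map_add, map_smul]
    simp only [hF1d, hF2d, hc, ContinuousLinearMap.comp_apply, ContinuousLinearMap.inl_apply,
      ContinuousLinearMap.inr_apply, smul_eq_mul]
    rfl
  have hscale : ∀ d ∈ Q, ∀ t : ℝ, 0 < t → t * F d < u := by
    rintro ⟨a, b, g⟩ hd t ht
    have : t • ((a, b, g) : X × X × ℝ) ∈ Q := by
      simp only [hQ, mem_ofPred_eq, Prod.smul_mk, smul_eq_mul, norm_smul,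
        Real.norm_of_nonneg ht.le] at hd ⊢
      have := mul_lt_mul_of_pos_left hd ht
      nlinarith
    have := hF1 _ this
    rwa [map_smul, smul_eq_mul] at this
  have hle : ∀ d ∈ Q, F d ≤ 0 := by
    intro d hd
    by_contra hcon
    push Not at hcon
    have h1 := hscale d hd ((|u| + 1) / F d) (by positivity)
    rw [div_mul_cancel₀ _ hcon.ne'] at h1
    linarith [le_abs_self u]
  have h01 : ((0, 0, 1) : X × X × ℝ) ∈ Q := by simp [hQ]
  have hu : 0 ≤ u := by
    by_contra hcon
    push Not at hcon
    have hc0 : c ≤ 0 := hle _ h01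
    have h1 := hscale _ h01 ((-u / 2) / (1 - c)) (div_pos (by linarith) (by linarith))
    rw [← hc] at h1
    have h2 : (-u / 2) / (1 - c) * c = (u / 2) * (-c / (1 - c)) := by ring
    have h3 : -c / (1 - c) ≤ 1 := by rw [div_le_one (by linarith)]; linarith
    have h4 : 0 ≤ -c / (1 - c) := div_nonneg (by linarith) (by linarith)
    nlinarith
  have hbd : ∀ a b : X, F1 a + F2 b + (r * ‖a‖ + s * ‖b‖) * c ≤ 0 := by
    intro a b
    have hc0 : c ≤ 0 := hle _ h01
    refine le_of_forall_pos_le_add fun e he => ?_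
    have h1 := hle (a, b, r * ‖a‖ + s * ‖b‖ + e / (1 - c)) (by
      simp only [hQ, mem_ofPred_eq]
      have : 0 < e / (1 - c) := div_pos he (by linarith)
      linarith)
    rw [hdec] at h1
    have h3 : -c / (1 - c) ≤ 1 := by rw [div_le_one (by linarith)]; linarith
    have h4 : e / (1 - c) * c = - (e * (-c / (1 - c))) := by ring
    nlinarith
  have hcneg : c < 0 := by
    have hcle : c ≤ 0 := hle _ h01
    rcases lt_or_eq_of_le hcle with h0 | h0
    · exact h0
    exfalso
    have z1 : ∀ a, F1 a = 0 := by
      intro a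
      have h1 := hbd a 0
      have h2 := hbd (-a) 0
      rw [h0] at h1 h2
      simp at h1 h2
      linarith
    have z2 : ∀ a, F2 a = 0 := by
      intro a
      have h1 := hbd 0 a
      have h2 := hbd 0 (-a)
      rw [h0] at h1 h2
      simp at h1 h2
      linarith
    obtain ⟨⟨a, b, g⟩, hd⟩ := hne
    have h1 := hF2 _ hd
    have h2 := hF1 _ h01
    rw [hdec, z1, z2, h0] at h1 h2
    linarith
  have k1 : ∀ a, ⟪(InnerProductSpace.toDual ℝ X).symm F1, a⟫ = F1 a := by simp
  have k2 : ∀ a, ⟪(InnerProductSpace.toDual ℝ X).symm F2, a⟫ = F2 a := by simp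
  set y0 := (InnerProductSpace.toDual ℝ X).symm F1
  set w0 := (InnerProductSpace.toDual ℝ X).symm F2
  have n1 : ‖y0‖ ≤ r * (-c) := by
    have h1 := hbd y0 0
    rw [← k1, real_inner_self_eq_norm_sq] at h1
    simp at h1
    by_contra hcon
    push Not at hcon
    have : 0 < ‖y0‖ := lt_of_le_of_lt (mul_nonneg hr (by linarith)) hcon
    nlinarith
  have n2 : ‖w0‖ ≤ s * (-c) := by
    have h1 := hbd 0 w0
    rw [← k2, real_inner_self_eq_norm_sq] at h1
    simp at h1
    by_contra hcon
    push Not at hcon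
    have : 0 < ‖w0‖ := lt_of_le_of_lt (mul_nonneg hs (by linarith)) hcon
    nlinarith
  have hci : 0 < (-c)⁻¹ := inv_pos.mpr (by linarith)
  have hcc : (-c)⁻¹ * (-c) = 1 := inv_mul_cancel₀ (by linarith)
  have hcc' : c⁻¹ * c = 1 := inv_mul_cancel₀ (by linarith)
  refine ⟨c⁻¹ • y0, c⁻¹ • w0, ?_, ?_, ?_⟩
  · rw [norm_smul, norm_inv, Real.norm_of_nonpos hcneg.le]
    have := mul_le_mul_of_nonneg_left n1 hci.le
    nlinarith
  · rw [norm_smul, norm_inv, Real.norm_of_nonpos hcneg.le]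
    have := mul_le_mul_of_nonneg_left n2 hci.le
    nlinarith
  · rintro ⟨a, b, g⟩ hd
    have h1 := hF2 _ hd
    rw [hdec, ← k1, ← k2] at h1
    rw [real_inner_smul_left, real_inner_smul_left]
    have h2 : c⁻¹ < 0 := inv_lt_zero.mpr hcneg
    have h3 : c⁻¹ * (⟪y0, a⟫ + ⟪w0, b⟫ + g * c) ≤ 0 :=
      mul_nonpos_of_nonpos_of_nonneg h2.le (hu.trans h1)
    have h4 : c⁻¹ * (g * c) = g := by rw [mul_left_comm, hcc', mul_one]
    simp only
    linarith [mul_add c⁻¹ (⟪y0, a⟫ + ⟪w0, b⟫) (g * c), mul_add c⁻¹ (⟪y0, a⟫) (⟪w0, b⟫)]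

/-- Radial projection onto a ball. -/
theorem proj_aux (r : ℝ) (hr : 0 ≤ r) (a : X) :
    ∃ θ : ℝ, 0 ≤ θ ∧ θ ≤ 1 ∧ ‖θ • a‖ ≤ r ∧ ∀ z : X, ‖z‖ ≤ r → ‖θ • a - z‖ ≤ ‖a - z‖ := by
  rcases le_or_gt ‖a‖ r with h | h
  · exact ⟨1, by norm_num, le_rfl, by simpa using h, fun z _ => by simp⟩
  have ha : 0 < ‖a‖ := hr.trans_lt h
  have hθ : r / ‖a‖ ≤ 1 := (div_le_one ha).mpr h.le
  have hθ0 : 0 ≤ r / ‖a‖ := by positivity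
  have hθa : r / ‖a‖ * ‖a‖ = r := div_mul_cancel₀ _ ha.ne'
  set θ := r / ‖a‖
  refine ⟨θ, hθ0, hθ, ?_, fun z hz => ?_⟩
  · rw [norm_smul, Real.norm_of_nonneg hθ0, hθa]
  · refine abs_le_of_sq_le_sq' ?_ (norm_nonneg _) |>.2
    rw [norm_sub_sq_real, norm_sub_sq_real, norm_smul, Real.norm_of_nonneg hθ0, hθa,
      real_inner_smul_left]
    have h1 : ⟪a, z⟫ ≤ ‖a‖ * r := (real_inner_le_norm a z).trans (by gcongr)
    have h2 : (1 - θ) * ⟪a, z⟫ ≤ (1 - θ) * (‖a‖ * r) :=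
      mul_le_mul_of_nonneg_left h1 (by linarith)
    nlinarith [sq_nonneg (‖a‖ - r)]

theorem hull_aux (M : Set (X × X)) (h0 : ((0, 0) : X × X) ∈ M)
    (hM : ∀ p ∈ M, ∀ q ∈ M, 0 ≤ ⟪p.2 - q.2, p.1 - q.1⟫)
    (h : X × X × ℝ)
    (hh : h ∈ convexHull ℝ ((fun p : X × X => ((p.1, p.2, ⟪p.2, p.1⟫) : X × X × ℝ)) '' M)) :
    0 ≤ h.2.2 ∧ ⟪h.2.1, h.1⟫ ≤ h.2.2 := by
  set D := (fun p : X × X => ((p.1, p.2, ⟪p.2, p.1⟫) : X × X × ℝ)) '' M with hD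
  have hconv : ∀ (a b : X) (c : ℝ),
      Convex ℝ {h : X × X × ℝ | ⟪h.2.1, a⟫ + ⟪b, h.1⟫ ≤ h.2.2 + c} := by
    rintro a b c ⟨x1, x2, x3⟩ h1 ⟨y1, y2, y3⟩ h2 t t' ht ht' htt
    simp only [mem_ofPred_eq, Prod.smul_mk, Prod.mk_add_mk, smul_eq_mul, inner_add_left,
      inner_add_right, real_inner_smul_left, real_inner_smul_right] at h1 h2 ⊢
    have e1 := mul_le_mul_of_nonneg_left h1 ht
    have e2 := mul_le_mul_of_nonneg_left h2 ht'
    have e3 : c = t * c + t' * c := by rw [← add_mul, htt, one_mul]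
    nlinarith
  have s1 : ∀ h ∈ convexHull ℝ D, ∀ p ∈ M,
      ⟪h.2.1, p.1⟫ + ⟪p.2, h.1⟫ ≤ h.2.2 + ⟪p.2, p.1⟫ := by
    intro h hh p hp
    refine convexHull_min ?_ (hconv p.1 p.2 ⟪p.2, p.1⟫) hh
    rintro _ ⟨q, hq, rfl⟩
    have := hM p hp q hq
    simp only [inner_sub_left, inner_sub_right] at this
    simp only [mem_ofPred_eq]
    linarith
  have s2 : ∀ h ∈ convexHull ℝ D, ∀ k ∈ convexHull ℝ D,
      ⟪k.2.1, h.1⟫ + ⟪h.2.1, k.1⟫ ≤ k.2.2 + h.2.2 := by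
    intro h hh k hk
    refine convexHull_min ?_ (hconv h.1 h.2.1 h.2.2) hk
    rintro _ ⟨q, hq, rfl⟩
    have := s1 h hh q hq
    simp only [mem_ofPred_eq]
    linarith
  have a1 := s1 h hh _ h0
  have a2 := s2 h hh h hh
  simp at a1
  exact ⟨a1, by linarith⟩

theorem minimax_aux (M : Set (X × X)) (h0 : ((0, 0) : X × X) ∈ M)
    (hM : ∀ p ∈ M, ∀ q ∈ M, 0 ≤ ⟪p.2 - q.2, p.1 - q.1⟫)
    (r s ε : ℝ) (hr : 0 ≤ r) (hε : 0 ≤ ε) (x v : X) (hv : ‖v‖ + ε ≤ s) :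
    ∃ y w : X, ‖y‖ ≤ r ∧ ‖w‖ ≤ s ∧ ∀ p ∈ M, ∀ z : X, ‖z‖ ≤ r →
      ε * ‖y - x‖ - ⟪v, y⟫ - ⟪w, z⟫ + ⟪v, z⟫ - ε * ‖z - x‖ + ⟪p.2, y⟫ + ⟪w, p.1⟫
        - ⟪p.2, p.1⟫ ≤ 0 := by
  set H := convexHull ℝ ((fun p : X × X => ((p.1, p.2, ⟪p.2, p.1⟫) : X × X × ℝ)) '' M) with hH
  have hHc : Convex ℝ H := convex_convexHull ℝ _
  have hMH : ∀ p ∈ M, ((p.1, p.2, ⟪p.2, p.1⟫) : X × X × ℝ) ∈ H := fun p hp =>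
    subset_convexHull ℝ _ ⟨p, hp, rfl⟩
  set E : Set (X × X × ℝ) := {d | ∃ u z a b : X, ∃ q : ℝ, ‖u‖ ≤ 1 ∧ ‖z‖ ≤ r ∧ (a, b, q) ∈ H ∧
    d.1 = ε • u - v + b ∧ d.2.1 = a - z ∧
    d.2.2 ≤ -(ε * ⟪u, x⟫) + ⟪v, z⟫ - ε * ‖z - x‖ - q} with hE
  have hs : 0 ≤ s := by linarith [norm_nonneg v]
  have hsep : ∃ y w : X, ‖y‖ ≤ r ∧ ‖w‖ ≤ s ∧
      ∀ d ∈ E, ⟪y, d.1⟫ + ⟪w, d.2.1⟫ + d.2.2 ≤ 0 := by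
   refine sep_aux r s hr hs E ?_ ?_ ?_
   · rintro ⟨_, _, g⟩ ⟨u, z, a, b, q, hu, hz, hab, rfl, rfl, hg⟩
       ⟨_, _, g'⟩ ⟨u', z', a', b', q', hu', hz', hab', rfl, rfl, hg'⟩ t t' ht ht' htt
     refine ⟨t • u + t' • u', t • z + t' • z', t • a + t' • a', t • b + t' • b',
       t * q + t' * q', ?_, ?_, ?_, ?_, ?_, ?_⟩
     · have := convex_closedBall (0 : X) 1 (mem_closedBall_zero_iff.2 hu)
         (mem_closedBall_zero_iff.2 hu') ht ht' htt
       simpa using this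
     · have := convex_closedBall (0 : X) r (mem_closedBall_zero_iff.2 hz)
         (mem_closedBall_zero_iff.2 hz') ht ht' htt
       simpa using this
     · simpa using hHc hab hab' ht ht' htt
     · have : v = t • v + t' • v := by rw [← add_smul, htt, one_smul]
       simp only [Prod.smul_mk, Prod.mk_add_mk]
       nth_rw 3 [this]
       module
     · simp only [Prod.smul_mk, Prod.mk_add_mk]
       module
     · simp only [Prod.smul_mk, Prod.mk_add_mk, smul_eq_mul, inner_add_left, inner_add_right,
         real_inner_smul_left, real_inner_smul_right] at hg hg' ⊢
       have e0 : t • z + t' • z' - x = t • (z - x) + t' • (z' - x) := by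
         have : x = t • x + t' • x := by rw [← add_smul, htt, one_smul]
         nth_rw 1 [this]
         module
       have e1 : ‖t • z + t' • z' - x‖ ≤ t * ‖z - x‖ + t' * ‖z' - x‖ := by
         rw [e0]
         refine (norm_add_le _ _).trans ?_
         rw [norm_smul, norm_smul, Real.norm_of_nonneg ht, Real.norm_of_nonneg ht']
       have e2 := mul_le_mul_of_nonneg_left e1 hε
       have e3 := mul_le_mul_of_nonneg_left hg ht
       have e4 := mul_le_mul_of_nonneg_left hg' ht'
       nlinarith
   · exact ⟨(ε • (0 : X) - v + 0, (0 : X) - 0, -(ε * ⟪(0 : X), x⟫) + ⟪v, (0 : X)⟫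
      - ε * ‖(0 : X) - x‖ - ⟪(0 : X), (0 : X)⟫),
      0, 0, 0, 0, _, by simp, by simpa using hr, hMH _ h0, rfl, rfl, le_rfl⟩
   · rintro ⟨_, _, g⟩ ⟨u, z, a, b, q, hu, hz, hab, rfl, rfl, hg⟩
     obtain ⟨q0, q1⟩ := hull_aux M h0 hM _ hab
     obtain ⟨θ, t0, t1, tr, tz⟩ := proj_aux r hr a
     have hz1 := tz z hz
     have hθ : ⟪b, θ • a⟫ ≤ q := by
       rw [real_inner_smul_right]
       simp only at q0 q1
       nlinarith
     set y := θ • a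
     simp only at hg ⊢
     have i1 : -⟪ε • u - v + b, y⟫ ≤ ‖ε • u - v + b‖ * r := by
       rw [← inner_neg_left]
       refine (real_inner_le_norm _ _).trans ?_
       rw [norm_neg]
       gcongr
     have i2 : ⟪u, y - x⟫ ≤ ‖y - x‖ := by
       refine (real_inner_le_norm _ _).trans ?_
       nlinarith [norm_nonneg (y - x)]
     have i3 : ‖y - x‖ ≤ ‖y - z‖ + ‖z - x‖ := norm_sub_le_norm_sub_add_norm_sub y z x
     have i4 : ⟪v, z - y⟫ ≤ ‖v‖ * ‖y - z‖ := by
       rw [norm_sub_rev y z]; exact real_inner_le_norm _ _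
     have i5 : (‖v‖ + ε) * ‖y - z‖ ≤ s * ‖a - z‖ := by gcongr
     have i6 := mul_le_mul_of_nonneg_left (i2.trans i3) hε
     simp only [inner_add_left, inner_sub_left, inner_sub_right, real_inner_smul_left] at i1 i4 i6
     linarith
  obtain ⟨y, w, hy, hw, hyw⟩ := hsep
  · refine ⟨y, w, hy, hw, fun p hp z hz => ?_⟩
    obtain ⟨u, hu, huy⟩ : ∃ u : X, ‖u‖ ≤ 1 ∧ ⟪u, y - x⟫ = ‖y - x‖ := by
      by_cases hyx : y - x = 0
      · exact ⟨0, by simp, by simp [hyx]⟩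
      · have hn : ‖y - x‖ ≠ 0 := by simpa using hyx
        refine ⟨‖y - x‖⁻¹ • (y - x), ?_, ?_⟩
        · rw [norm_smul, norm_inv, norm_norm, inv_mul_cancel₀ hn]
        · rw [real_inner_smul_left, real_inner_self_eq_norm_sq]
          field_simp
    have := hyw (ε • u - v + p.2, p.1 - z, -(ε * ⟪u, x⟫) + ⟪v, z⟫ - ε * ‖z - x‖ - ⟪p.2, p.1⟫)
      ⟨u, z, p.1, p.2, _, hu, hz, hMH p hp, rfl, rfl, le_rfl⟩
    simp only [inner_add_right, inner_sub_right, real_inner_smul_right] at this huy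
    rw [← huy]
    rw [real_inner_comm u y, real_inner_comm v y, real_inner_comm p.2 y] at this
    linarith

theorem local_aux (M : Set (X × X)) (h0 : ((0, 0) : X × X) ∈ M)
    (hM : ∀ p ∈ M, ∀ q ∈ M, 0 ≤ ⟪p.2 - q.2, p.1 - q.1⟫) (r s : ℝ)
    (hmax : ∀ p : X × X, ‖p.1‖ < r → ‖p.2‖ < s →
      (∀ q ∈ M, 0 ≤ ⟪p.2 - q.2, p.1 - q.1⟫) → p ∈ M)
    (x v : X) (hx : ‖x‖ < r) (hv : ‖v‖ < s)
    (hrel : ∀ q ∈ M, ‖q.1‖ < r → ‖q.2‖ < s → 0 ≤ ⟪v - q.2, x - q.1⟫) : (x, v) ∈ M := by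
  have key : ∀ ε : ℝ, 0 < ε → ‖v‖ + ε < s → ∃ w, (x, w) ∈ M ∧ ‖v - w‖ ≤ ε := by
    intro ε hε hvε
    obtain ⟨r', hr1, hr2⟩ := exists_between hx
    have hr' : 0 ≤ r' := (norm_nonneg x).trans hr1.le
    obtain ⟨y, w, hy, hw, H⟩ := minimax_aux M h0 hM r' (‖v‖ + ε) ε hr' hε.le x v le_rfl
    have hyw : (y, w) ∈ M := by
      refine hmax _ (hy.trans_lt hr2) (hw.trans_lt hvε) fun q hq => ?_
      have := H q hq y hy
      simp only [inner_sub_left, inner_sub_right]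
      linarith
    have h1 := hrel _ hyw (hy.trans_lt hr2) (hw.trans_lt hvε)
    have h2 := H _ hyw x hr1.le
    have hyx : y = x := by
      simp only [inner_sub_left, inner_sub_right, sub_self, norm_zero] at h1 h2
      have : ε * ‖y - x‖ ≤ 0 := by linarith
      have : ‖y - x‖ ≤ 0 := by
        by_contra hcon
        push Not at hcon
        nlinarith
      exact sub_eq_zero.mp (norm_le_zero_iff.mp this)
    subst hyx
    refine ⟨w, hyw, ?_⟩
    by_contra hcon
    push Not at hcon
    have hn : 0 < ‖v - w‖ := hε.trans hcon
    set k := (r' - ‖y‖) / ‖v - w‖ with hk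
    have hkp : 0 < k := div_pos (by linarith) hn
    have hkn : k * ‖v - w‖ = r' - ‖y‖ := div_mul_cancel₀ _ hn.ne'
    have hkk : ‖k • (v - w)‖ = k * ‖v - w‖ := by rw [norm_smul, Real.norm_of_nonneg hkp.le]
    have h3 := H _ hyw (y + k • (v - w)) (by
      refine (norm_add_le _ _).trans ?_
      rw [hkk, hkn]; linarith)
    rw [add_sub_cancel_left, hkk] at h3
    simp only [sub_self, norm_zero, inner_add_right, real_inner_smul_right] at h3
    have h4 : ⟪v, v - w⟫ - ⟪w, v - w⟫ = ‖v - w‖ ^ 2 := by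
      rw [← inner_sub_left, real_inner_self_eq_norm_sq]
    have h5 : k * (‖v - w‖ * (‖v - w‖ - ε)) ≤ 0 := by
      have : k * (⟪v, v - w⟫ - ⟪w, v - w⟫) = k * ‖v - w‖ ^ 2 := by rw [h4]
      nlinarith
    have : 0 < k * (‖v - w‖ * (‖v - w‖ - ε)) := by
      have : 0 < ‖v - w‖ - ε := by linarith
      positivity
    linarith
  refine hmax _ hx hv fun q hq => ?_
  refine le_of_forall_pos_le_add fun e he => ?_
  set N := ‖x - q.1‖ with hN
  have hN0 : 0 ≤ N := norm_nonneg _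
  obtain ⟨w, hw, hvw⟩ := key (min ((s - ‖v‖) / 2) (e / (N + 1)))
    (lt_min (by linarith) (by positivity))
    (by linarith [min_le_left ((s - ‖v‖) / 2) (e / (N + 1))])
  have h1 := hM _ hw q hq
  have h2 : ⟪w - v, x - q.1⟫ ≤ ‖v - w‖ * N := by
    rw [norm_sub_rev]; exact real_inner_le_norm _ _
  have h3 : ‖v - w‖ * N ≤ e / (N + 1) * N := by
    gcongr; exact hvw.trans (min_le_right _ _)
  have h4 : e / (N + 1) * N ≤ e := by
    rw [div_mul_eq_mul_div, div_le_iff₀ (by linarith)]; nlinarith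
  simp only [inner_sub_left] at h1 h2 ⊢
  linarith

/-- If `T` is locally strongly maximal monotone of type (A) around `(x̄, x̄*)` with
modulus σ, then `T − σI` is locally maximal monotone of type (A) around `(x̄, x̄* − σx̄)`. -/
theorem stmt_14 (σ : ℝ) (hσ : 0 < σ) (T : X → Set X) (xbar vbar : X)
    (hx : vbar ∈ T xbar) (hA : LocStrMaxAAt σ T xbar vbar) :
    LocMaxAAt (shiftI (-σ) T) xbar (vbar - σ • xbar) := by
  obtain ⟨U, hU, V, hV, hstr, hmax⟩ := hA
  set v0 := vbar - σ • xbar with hv0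
  have hmem : ∀ a b : X, b ∈ shiftI (-σ) T a ↔ b + σ • a ∈ T a := by
    intro a b
    constructor
    · rintro ⟨c, hc, rfl⟩
      simpa using hc
    · intro h
      exact ⟨_, h, by simp⟩
  -- the sheared neighbourhood contains a product of balls
  have hcont : Tendsto (fun p : X × X => p.2 + σ • p.1) (𝓝 (xbar, v0)) (𝓝 vbar) := by
    have : Continuous (fun p : X × X => p.2 + σ • p.1) := by fun_prop
    have h := this.tendsto (xbar, v0)
    simpa [hv0] using h
  have hW : {p : X × X | p.1 ∈ U ∧ p.2 + σ • p.1 ∈ V} ∈ 𝓝 (xbar, v0) :=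
    Filter.inter_mem (continuous_fst.tendsto (xbar, v0) hU) (hcont hV)
  obtain ⟨δ, hδ, hball⟩ := Metric.mem_nhds_iff.mp hW
  have hin : ∀ a b : X, ‖a - xbar‖ < δ → ‖b - v0‖ < δ → a ∈ U ∧ b + σ • a ∈ V := by
    intro a b ha hb
    have : (a, b) ∈ Metric.ball (xbar, v0) δ := by
      rw [← ball_prod_same]
      exact ⟨by simpa [dist_eq_norm] using ha, by simpa [dist_eq_norm] using hb⟩
    exact hball this
  set M : Set (X × X) := {p | p.1 + xbar ∈ U ∧ (p.2 + v0) + σ • (p.1 + xbar) ∈ V ∧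
    (p.2 + v0) + σ • (p.1 + xbar) ∈ T (p.1 + xbar)} with hMdef
  have hM : ∀ p ∈ M, ∀ q ∈ M, 0 ≤ ⟪p.2 - q.2, p.1 - q.1⟫ := by
    rintro ⟨a, b⟩ ⟨h1, h2, h3⟩ ⟨a', b'⟩ ⟨h1', h2', h3'⟩
    have := hstr (a + xbar, b + v0 + σ • (a + xbar)) ⟨h3, h1, h2⟩
      (a' + xbar, b' + v0 + σ • (a' + xbar)) ⟨h3', h1', h2'⟩
    simp only at this ⊢
    have e1 : a + xbar - (a' + xbar) = a - a' := by abel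
    have e2 : b + v0 + σ • (a + xbar) - (b' + v0 + σ • (a' + xbar))
        = (b - b') + σ • (a - a') := by module
    rw [e1, e2, inner_add_left, real_inner_smul_left, real_inner_self_eq_norm_sq] at this
    linarith
  have hM0 : ((0, 0) : X × X) ∈ M := by
    refine ⟨?_, ?_, ?_⟩
    · simpa using mem_of_mem_nhds hU
    · simpa [hv0] using mem_of_mem_nhds hV
    · simpa [hv0] using hx
  have hMmax : ∀ p : X × X, ‖p.1‖ < δ → ‖p.2‖ < δ →
      (∀ q ∈ M, 0 ≤ ⟪p.2 - q.2, p.1 - q.1⟫) → p ∈ M := by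
    rintro ⟨a, b⟩ ha hb hrel
    obtain ⟨i1, i2⟩ := hin (a + xbar) (b + v0) (by simpa using ha) (by simpa using hb)
    set P : X × X := (a + xbar, b + v0 + σ • (a + xbar)) with hP
    set S : X → Set X := fun y => {w | w ∈ T y ∨ (y, w) = P} with hS
    have hrelT : ∀ q ∈ gph T ∩ U ×ˢ V, 0 ≤ ⟪P.2 - q.2, P.1 - q.1⟫ := by
      rintro ⟨c, d⟩ ⟨g1, g2, g3⟩
      have h := hrel (c - xbar, d - σ • c - v0)
        ⟨by simpa using g2, by simpa using g3, by simpa [gph] using g1⟩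
      simp only at h
      have e1 : a + xbar - c = a - (c - xbar) := by abel
      have e2 : b + v0 + σ • (a + xbar) - d
        = (b - (d - σ • c - v0)) + σ • (a - (c - xbar)) := by module
      simp only [hP]
      rw [e1, e2, inner_add_left, real_inner_smul_left, real_inner_self_eq_norm_sq]
      positivity
    have hSm : MonoOn' S (U ×ˢ V) := by
      rintro p ⟨hp | hp, hpW⟩ q ⟨hq | hq, hqW⟩
      · have := hstr p ⟨hp, hpW⟩ q ⟨hq, hqW⟩
        exact le_trans (by positivity) this
      · have hq' : q = P := hq
        have := hrelT p ⟨hp, hpW⟩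
        rw [hq', ← inner_neg_neg, neg_sub, neg_sub]
        exact this
      · have hp' : p = P := hp
        rw [hp']
        exact hrelT q ⟨hq, hqW⟩
      · have hp' : p = P := hp
        have hq' : q = P := hq
        rw [hp', hq']
        simp
    have heq := hmax S hSm (fun p hp => ⟨Or.inl hp.1, hp.2⟩)
    have hPS : P ∈ gph S ∩ U ×ˢ V := ⟨Or.inr rfl, i1, i2⟩
    rw [heq] at hPS
    exact ⟨i1, i2, hPS.1⟩
  refine ⟨Metric.ball xbar δ, Metric.ball_mem_nhds _ hδ, Metric.ball v0 δ,
    Metric.ball_mem_nhds _ hδ, ?_, ?_⟩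
  · rintro ⟨a, b⟩ ⟨h1, h2, h3⟩ ⟨a', b'⟩ ⟨h1', h2', h3'⟩
    have j := hin a b (by simpa [dist_eq_norm] using h2) (by simpa [dist_eq_norm] using h3)
    have j' := hin a' b' (by simpa [dist_eq_norm] using h2') (by simpa [dist_eq_norm] using h3')
    have k := (hmem a b).1 h1
    have k' := (hmem a' b').1 h1'
    have := hM (a - xbar, b - v0) ⟨by simpa using j.1, by simpa using j.2, by simpa using k⟩
      (a' - xbar, b' - v0) ⟨by simpa using j'.1, by simpa using j'.2, by simpa using k'⟩
    simpa using this
  · intro S hS hsub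
    refine Subset.antisymm ?_ hsub
    rintro ⟨a, b⟩ ⟨hab, ha, hb⟩
    refine ⟨?_, ha, hb⟩
    have ha' : ‖a - xbar‖ < δ := by simpa [dist_eq_norm] using ha
    have hb' : ‖b - v0‖ < δ := by simpa [dist_eq_norm] using hb
    have := local_aux M hM0 hM δ δ hMmax (a - xbar) (b - v0) ha' hb' (by
      rintro ⟨c, d⟩ ⟨q1, q2, q3⟩ n1 n2
      have hcd : ((c + xbar, d + v0) : X × X) ∈
          gph (shiftI (-σ) T) ∩ Metric.ball xbar δ ×ˢ Metric.ball v0 δ :=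
        ⟨(hmem _ _).2 q3, by simpa [dist_eq_norm] using n1, by simpa [dist_eq_norm] using n2⟩
      have h := hS (a, b) ⟨hab, ha, hb⟩ _ (hsub hcd)
      simp only at h ⊢
      have e1 : a - xbar - c = a - (c + xbar) := by abel
      have e2 : b - v0 - d = b - (d + v0) := by abel
      rw [e1, e2]
      exact h)
    obtain ⟨-, -, k⟩ := this
    refine (hmem a b).2 ?_
    simpa using k
end

section
/- Let X be a Hilbert space and T : X ⇉ X have locally closed graph around (x̄, v̄) ∈ gph T. Then T is locally maximal monotone around (x̄, v̄) if and only if T is locally hypomonotone around (x̄, v̄) with some modulus r > 0 and there exists a neighborhood W of (x̄, v̄) such that ⟨z, w⟩ ≥ 0 whenever z ∈ D̂*T(u, v)(w) and (u, v) ∈ gph T ∩ W. -/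
open Set Filter Topology RealInnerProductSpace

variable {X : Type*} [NormedAddCommGroup X] [InnerProductSpace ℝ X] [CompleteSpace X]

theorem aux_svp (S : Set X) (hS : IsClosed S) (f : X → ℝ) (hf : ContinuousOn f S)
    (m : ℝ) (hm : ∀ y ∈ S, m ≤ f y) (b : X) (hb : b ∈ S) (ε : ℝ) (hε : 0 < ε) :
    ∃ y₀ ∈ S, f y₀ ≤ f b ∧ ∃ η : X, ‖η‖ ≤ ε ∧ ∃ C : ℝ, ∀ y ∈ S,
      f y₀ + ⟪η, y - y₀⟫ - C * ‖y - y₀‖ ^ 2 ≤ f y := by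
  have hpick : ∀ (F : X → ℝ) (δ : ℝ) (x : X), ∃ x' : X, (∀ y ∈ S, m ≤ F y) → 0 < δ → x ∈ S →
      (x' ∈ S ∧ F x' ≤ F x ∧ ∀ y ∈ S, F x' ≤ F y + δ) := by
    intro F δ x
    by_cases h : (∀ y ∈ S, m ≤ F y) ∧ 0 < δ ∧ x ∈ S
    · obtain ⟨h1, h2, h3⟩ := h
      have hne : (F '' S).Nonempty := ⟨F x, x, h3, rfl⟩
      have hbd : BddBelow (F '' S) := ⟨m, by rintro _ ⟨y, hy, rfl⟩; exact h1 y hy⟩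
      obtain ⟨_, ⟨x₁, hx₁, rfl⟩, hlt⟩ := exists_lt_of_csInf_lt hne (lt_add_of_pos_right (sInf (F '' S)) h2)
      have key : ∀ y ∈ S, F x₁ ≤ F y + δ := by
        intro y hy
        have := csInf_le hbd ⟨y, hy, rfl⟩
        linarith
      by_cases h4 : F x₁ ≤ F x
      · exact ⟨x₁, fun _ _ _ => ⟨hx₁, h4, key⟩⟩
      · refine ⟨x, fun _ _ _ => ⟨h3, le_rfl, fun y hy => ?_⟩⟩
        have := key y hy
        linarith
    · exact ⟨x, fun a b c => absurd ⟨a, b, c⟩ h⟩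
  choose pick hpick using hpick
  set μ : ℝ := ε / 4 with hμ
  have hμ0 : 0 < μ := by positivity
  let mu : ℕ → ℝ := fun n => μ / 2 / 2 ^ n
  have hmu : ∀ n, 0 < mu n := fun n => by positivity
  let del : ℕ → ℝ := fun n => mu n * (1 / 2 ^ n) ^ 2
  have hdel : ∀ n, 0 < del n := fun n => mul_pos (hmu n) (by positivity)
  let s : ℕ → X × (X → ℝ) := fun n => Nat.rec (pick f (del 0) b, fun _ => 0)
    (fun n st => (pick (fun y => f y + (st.2 y + mu n * ‖y - st.1‖ ^ 2)) (del (n + 1)) st.1,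
      fun y => st.2 y + mu n * ‖y - st.1‖ ^ 2)) n
  let x : ℕ → X := fun n => (s n).1
  let g : ℕ → X → ℝ := fun n => (s n).2
  have hg0 : g 0 = fun _ => 0 := rfl
  have hgs : ∀ n, g (n + 1) = fun y => g n y + mu n * ‖y - x n‖ ^ 2 := fun n => rfl
  have hx0 : x 0 = pick f (del 0) b := rfl
  have hxs : ∀ n, x (n + 1) = pick (fun y => f y + g (n + 1) y) (del (n + 1)) (x n) := fun n => rfl
  have hgpos : ∀ n y, 0 ≤ g n y := by
    intro n
    induction n with
    | zero => intro y; rw [hg0]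
    | succ n ih =>
      intro y; rw [hgs]
      have := ih y
      have := hmu n
      positivity
  have hmain : ∀ n, x n ∈ S ∧ f (x n) + g n (x n) ≤ f b ∧
      ∀ y ∈ S, f (x n) + g n (x n) ≤ f y + g n y + del n := by
    intro n
    induction n with
    | zero =>
      obtain ⟨h1, h2, h3⟩ := hpick f (del 0) b hm (hdel 0) hb
      rw [← hx0] at h1 h2 h3
      rw [hg0]
      simpa using ⟨h1, h2, h3⟩
    | succ n ih =>
      obtain ⟨i1, i2, i3⟩ := ih
      obtain ⟨h1, h2, h3⟩ := hpick (fun y => f y + g (n + 1) y) (del (n + 1)) (x n)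
        (fun y hy => by have := hm y hy; have := hgpos (n + 1) y; linarith) (hdel _) i1
      rw [← hxs] at h1 h2 h3
      refine ⟨h1, ?_, h3⟩
      refine h2.trans ?_
      rw [hgs]
      simpa using i2
  have hdist : ∀ n, dist (x n) (x (n + 1)) ≤ 2 / 2 / 2 ^ n := by
    intro n
    obtain ⟨i1, i2, i3⟩ := hmain n
    obtain ⟨h1, h2, h3⟩ := hpick (fun y => f y + g (n + 1) y) (del (n + 1)) (x n)
        (fun y hy => by have := hm y hy; have := hgpos (n + 1) y; linarith) (hdel _) i1
    rw [← hxs] at h1 h2 h3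
    have h4 := i3 _ h1
    simp only [hgs, sub_self, norm_zero] at h2
    have h5 : mu n * ‖x (n + 1) - x n‖ ^ 2 ≤ mu n * (1 / 2 ^ n) ^ 2 := by
      have : del n = mu n * (1 / 2 ^ n) ^ 2 := rfl
      rw [← this]; nlinarith
    have h6 := le_of_mul_le_mul_left h5 (hmu n)
    have h7 := (sq_le_sq₀ (norm_nonneg _) (by positivity)).1 h6
    rw [dist_comm, dist_eq_norm]
    simpa using h7
  obtain ⟨y₀, hy₀⟩ := cauchySeq_tendsto_of_complete (cauchySeq_of_le_geometric_two hdist)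
  have hy₀S : y₀ ∈ S := hS.mem_of_tendsto hy₀ (Eventually.of_forall fun n => (hmain n).1)
  have hxy : ∀ n, ‖x n - y₀‖ ≤ 2 := by
    intro n
    have := dist_le_of_le_geometric_two_of_tendsto hdist hy₀ n
    rw [dist_eq_norm] at this
    refine this.trans ?_
    exact div_le_self (by norm_num) (one_le_pow₀ (by norm_num))
  have hfx : Tendsto (fun n => f (x n)) atTop (𝓝 (f y₀)) := by
    have h1 : Tendsto x atTop (𝓝[S] y₀) :=
      tendsto_nhdsWithin_iff.2 ⟨hy₀, Eventually.of_forall fun n => (hmain n).1⟩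
    exact (hf y₀ hy₀S).tendsto.comp h1
  let v : ℕ → X := fun n => (2 * mu n) • (x n - y₀)
  have hv : ∀ n, ‖v n‖ ≤ (4 * μ) / 2 / 2 ^ n := by
    intro n
    have h1 := hmu n
    simp only [v]
    rw [norm_smul, Real.norm_of_nonneg (by positivity)]
    calc 2 * mu n * ‖x n - y₀‖ ≤ 2 * mu n * 2 := by
          have := hxy n
          gcongr
      _ = (4 * μ) / 2 / 2 ^ n := by simp only [mu]; ring
  have hvs : Summable v := Summable.of_norm_bounded (hasSum_geometric_two' (4 * μ)).summable hv
  have hηlim := hvs.hasSum.tendsto_sum_nat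
  have hA : ∀ n, ∑ i ∈ Finset.range n, mu i ≤ μ := fun n =>
    sum_le_hasSum _ (fun i _ => (hmu i).le) (hasSum_geometric_two' μ)
  have hgd : ∀ n y, g n y - g n y₀ = - ⟪∑ i ∈ Finset.range n, v i, y - y₀⟫
      + (∑ i ∈ Finset.range n, mu i) * ‖y - y₀‖ ^ 2 := by
    intro n y
    induction n with
    | zero => simp [hg0]
    | succ n ih =>
      rw [Finset.sum_range_succ, Finset.sum_range_succ, inner_add_left, hgs]
      have e : ‖y - x n‖ ^ 2 = ‖y - y₀‖ ^ 2 - 2 * ⟪x n - y₀, y - y₀⟫ + ‖x n - y₀‖ ^ 2 := by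
        rw [show y - x n = (y - y₀) - (x n - y₀) by abel, norm_sub_sq_real, real_inner_comm]
      have e2 : ⟪v n, y - y₀⟫ = 2 * mu n * ⟪x n - y₀, y - y₀⟫ := real_inner_smul_left _ _ _
      rw [e2]
      have e3 : ‖y₀ - x n‖ = ‖x n - y₀‖ := norm_sub_rev _ _
      simp only [e3]
      rw [e]
      linarith
  refine ⟨y₀, hy₀S, ?_, ∑' n, v n, ?_, μ, ?_⟩
  · refine le_of_tendsto hfx (Eventually.of_forall fun n => ?_)
    have := (hmain n).2.1
    have := hgpos n (x n)
    linarith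
  · have := tsum_of_norm_bounded (hasSum_geometric_two' (4 * μ)) hv
    refine this.trans (by rw [hμ]; linarith)
  · intro y hy
    have hδ : Tendsto del atTop (𝓝 0) := by
      have h1 : Tendsto mu atTop (𝓝 0) := (hasSum_geometric_two' μ).summable.tendsto_atTop_zero
      refine squeeze_zero (fun n => (hdel n).le) (fun n => ?_) h1
      refine mul_le_of_le_one_right (hmu n).le ?_
      refine pow_le_one₀ (by positivity) ?_
      rw [div_le_one (by positivity)]
      exact one_le_pow₀ (by norm_num)
    have hx' : Tendsto (fun n => x n - y₀) atTop (𝓝 0) := by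
      simpa using hy₀.sub_const y₀
    have hlim : Tendsto (fun n => f (x n) - ⟪∑ i ∈ Finset.range n, v i, x n - y₀⟫
        + ⟪∑ i ∈ Finset.range n, v i, y - y₀⟫ - μ * ‖y - y₀‖ ^ 2 - del n) atTop
        (𝓝 (f y₀ - ⟪∑' n, v n, (0 : X)⟫ + ⟪∑' n, v n, y - y₀⟫ - μ * ‖y - y₀‖ ^ 2 - 0)) :=
      (((hfx.sub (hηlim.inner hx')).add (hηlim.inner tendsto_const_nhds)).sub
        tendsto_const_nhds).sub hδ
    rw [inner_zero_right, sub_zero, sub_zero] at hlim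
    refine le_of_tendsto hlim (Eventually.of_forall fun n => ?_)
    have h1 := (hmain n).2.2 y hy
    have h2 := hgd n y
    have h3 := hgd n (x n)
    have h4 : (∑ i ∈ Finset.range n, mu i) * ‖y - y₀‖ ^ 2 ≤ μ * ‖y - y₀‖ ^ 2 :=
      mul_le_mul_of_nonneg_right (hA n) (by positivity)
    have h5 : 0 ≤ (∑ i ∈ Finset.range n, mu i) * ‖x n - y₀‖ ^ 2 :=
      mul_nonneg (Finset.sum_nonneg fun i _ => (hmu i).le) (by positivity)
    linarith

theorem aux_finite_minty {ι : Type*} [Fintype ι] [Nonempty ι] (a b : ι → X)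
    (h : ∀ i j, 0 ≤ ⟪b i - b j, a i - a j⟫) : ∃ x : X, ∀ i, ⟪b i + x, x - a i⟫ ≤ 0 := by
  classical
  let c : (ι → ℝ) → X := fun l => ∑ j, l j • (a j - b j)
  let β : (ι → ℝ) → ℝ := fun l => ∑ j, l j * ⟪b j, a j⟫
  let g : (ι → ℝ) → ℝ := fun l => - ‖c l‖ ^ 2 / 4 - β l
  have hg : Continuous g := by
    simp only [g, c, β]
    fun_prop
  obtain ⟨i₀⟩ := ‹Nonempty ι›
  obtain ⟨l, hl, hmax⟩ := (isCompact_stdSimplex ℝ ι).exists_isMaxOn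
    ⟨Pi.single i₀ 1, single_mem_stdSimplex ℝ i₀⟩ hg.continuousOn
  have hgle : g l ≤ 0 := by
    have h1 : 0 ≤ ∑ i, ∑ j, l i * l j * ⟪b i - b j, a i - a j⟫ :=
      Finset.sum_nonneg fun i _ => Finset.sum_nonneg fun j _ =>
        mul_nonneg (mul_nonneg (hl.1 i) (hl.1 j)) (h i j)
    have hsum := hl.2
    have e1 : ∑ i, ∑ j, l i * l j * ⟪b i, a i⟫ = β l := by
      simp only [β]
      refine Finset.sum_congr rfl fun i _ => ?_
      rw [← Finset.sum_mul, ← Finset.mul_sum, hsum, mul_one]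
    have e2 : ∑ i, ∑ j, l i * l j * ⟪b j, a j⟫ = β l := by
      rw [Finset.sum_comm, ← e1]
      refine Finset.sum_congr rfl fun i _ => Finset.sum_congr rfl fun j _ => by ring
    have e3 : ∑ i, ∑ j, l i * l j * ⟪b i, a j⟫ = ⟪∑ i, l i • b i, ∑ i, l i • a i⟫ := by
      rw [sum_inner]
      refine Finset.sum_congr rfl fun i _ => ?_
      rw [inner_sum]
      refine Finset.sum_congr rfl fun j _ => ?_
      rw [real_inner_smul_left, real_inner_smul_right]; ring
    have e4 : ∑ i, ∑ j, l i * l j * ⟪b j, a i⟫ = ⟪∑ i, l i • b i, ∑ i, l i • a i⟫ := by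
      rw [Finset.sum_comm, ← e3]
      refine Finset.sum_congr rfl fun i _ => Finset.sum_congr rfl fun j _ => by ring
    have e5 : ∑ i, ∑ j, l i * l j * ⟪b i - b j, a i - a j⟫ =
        2 * β l - 2 * ⟪∑ i, l i • b i, ∑ i, l i • a i⟫ := by
      have : ∀ i j, l i * l j * ⟪b i - b j, a i - a j⟫ = l i * l j * ⟪b i, a i⟫
        - l i * l j * ⟪b i, a j⟫ - l i * l j * ⟪b j, a i⟫ + l i * l j * ⟪b j, a j⟫ := by
        intro i j
        simp only [inner_sub_left, inner_sub_right]; ring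
      simp only [this, Finset.sum_add_distrib, Finset.sum_sub_distrib]
      rw [e1, e2, e3, e4]; ring
    have e6 : c l = ∑ i, l i • a i - ∑ i, l i • b i := by
      simp only [c, smul_sub, Finset.sum_sub_distrib]
    rw [e5] at h1
    simp only [g]
    rw [e6, norm_sub_sq_real, real_inner_comm]
    have h2 : 0 ≤ ‖∑ i, l i • a i + ∑ i, l i • b i‖ ^ 2 := by positivity
    rw [norm_add_sq_real, real_inner_comm] at h2
    linarith
  refine ⟨(1 / 2 : ℝ) • c l, fun i => ?_⟩
  have key : -⟪c l, (a i - b i) - c l⟫ / 2 - (⟪b i, a i⟫ - β l) ≤ 0 := by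
    by_contra! hcon
    set d := (a i - b i) - c l with hd
    set K := -⟪c l, d⟫ / 2 - (⟪b i, a i⟫ - β l) with hK
    have hstep : ∀ t : ℝ, 0 < t → t ≤ 1 → K ≤ t * (‖d‖ ^ 2 / 4) := by
      intro t ht ht1
      have hmem : (1 - t) • l + t • Pi.single i (1 : ℝ) ∈ stdSimplex ℝ ι :=
        convex_stdSimplex ℝ ι hl (single_mem_stdSimplex ℝ i) (by linarith) ht.le (by ring)
      have h1 : g ((1 - t) • l + t • Pi.single i (1 : ℝ)) ≤ g l := hmax hmem
      have e1 : c ((1 - t) • l + t • Pi.single i (1 : ℝ)) = c l + t • d := by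
        have : c ((1 - t) • l + t • Pi.single i (1 : ℝ)) = (1 - t) • c l + t • (a i - b i) := by
          simp only [c, Pi.add_apply, Pi.smul_apply, smul_eq_mul, add_smul, Finset.sum_add_distrib,
            mul_smul, ← Finset.smul_sum]
          simp [Pi.single_apply, ite_smul]
        rw [this, hd]; module
      have e2 : β ((1 - t) • l + t • Pi.single i (1 : ℝ)) = (1 - t) * β l + t * ⟪b i, a i⟫ := by
        simp only [β, Pi.add_apply, Pi.smul_apply, smul_eq_mul, add_mul, Finset.sum_add_distrib,
            mul_assoc, ← Finset.mul_sum]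
        simp [Pi.single_apply]
      simp only [g] at h1
      rw [e1, e2, norm_add_sq_real, norm_smul, real_inner_smul_right, mul_pow,
        Real.norm_of_nonneg ht.le] at h1
      have h2 : t * K ≤ t * (t * (‖d‖ ^ 2 / 4)) := by rw [hK]; linarith
      exact le_of_mul_le_mul_left h2 ht
    have hd0 : 0 ≤ ‖d‖ ^ 2 / 4 := by positivity
    have h1 := hstep (min 1 (K / (2 * (‖d‖ ^ 2 / 4 + 1)))) (by positivity) (min_le_left _ _)
    have h2 : min 1 (K / (2 * (‖d‖ ^ 2 / 4 + 1))) * (‖d‖ ^ 2 / 4) ≤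
        K / (2 * (‖d‖ ^ 2 / 4 + 1)) * (‖d‖ ^ 2 / 4 + 1) := by
      gcongr
      · exact min_le_right _ _
      · linarith
    have h3 : K / (2 * (‖d‖ ^ 2 / 4 + 1)) * (‖d‖ ^ 2 / 4 + 1) = K / 2 := by
      field_simp
    linarith
  simp only [g] at hgle
  simp only [inner_add_left, inner_sub_right, real_inner_smul_left, real_inner_smul_right,
    real_inner_self_eq_norm_sq] at key ⊢
  rw [real_inner_comm (c l) (b i)] at *
  have hhalf : ‖(1 / 2 : ℝ) • c l‖ ^ 2 = ‖c l‖ ^ 2 / 4 := by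
    rw [norm_smul, mul_pow, Real.norm_of_nonneg (by norm_num)]; ring
  linarith

theorem aux_minty (G : X → Set X) (hG : MaxMono G) (y : X) :
    ∃ p ∈ gph G, p.1 + p.2 = y := by
  classical
  have hsuff : ∃ x : X, ∀ p ∈ gph G, ⟪(p.2 - y) + x, x - p.1⟫ ≤ 0 := by
    by_cases hne : (gph G).Nonempty
    swap
    · rw [Set.not_nonempty_iff_eq_empty] at hne
      exact ⟨0, by simp [hne]⟩
    obtain ⟨p₀, hp₀⟩ := hne
    let B : X × X → Set (WeakDual ℝ X) := fun p =>
      WeakDual.toStrongDual ⁻¹' Metric.closedBall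
        (InnerProductSpace.toDual ℝ X ((1 / 2 : ℝ) • (p.1 + (y - p.2)))) (‖(y - p.2) - p.1‖ / 2)
    have hB : ∀ p x, WeakDual.toStrongDual.symm (InnerProductSpace.toDual ℝ X x) ∈ B p ↔
        ⟪(p.2 - y) + x, x - p.1⟫ ≤ 0 := by
      intro p x
      simp only [B, Set.mem_preimage, LinearEquiv.apply_symm_apply, Metric.mem_closedBall]
      rw [LinearIsometryEquiv.dist_map, dist_eq_norm,
        ← sq_le_sq₀ (norm_nonneg _) (by positivity)]
      have e : ⟪(p.2 - y) + x, x - p.1⟫ = ‖x - (1 / 2 : ℝ) • (p.1 + (y - p.2))‖ ^ 2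
          - (‖(y - p.2) - p.1‖ / 2) ^ 2 := by
        rw [div_pow, ← real_inner_self_eq_norm_sq, ← real_inner_self_eq_norm_sq]
        simp only [inner_add_left, inner_sub_right, inner_sub_left, inner_add_right,
          real_inner_smul_left, real_inner_smul_right]
        rw [real_inner_comm x y, real_inner_comm x p.1, real_inner_comm x p.2,
          real_inner_comm y p.1, real_inner_comm y p.2, real_inner_comm p.1 p.2]
        ring
      rw [e]
      constructor <;> intro h <;> linarith
    have hcpt : IsCompact (B p₀) := WeakDual.isCompact_closedBall _ _
    have hclo : ∀ p, IsClosed (B p) := fun p => WeakDual.isClosed_closedBall _ _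
    obtain ⟨φ, -, hφ⟩ := hcpt.inter_iInter_nonempty (fun p : gph G => B p.1) (fun p => hclo _)
      (by
        intro u
        let u' : Finset (gph G) := insert ⟨p₀, hp₀⟩ u
        have : Nonempty u' := ⟨⟨⟨p₀, hp₀⟩, Finset.mem_insert_self _ _⟩⟩
        obtain ⟨x, hx⟩ := aux_finite_minty (fun i : u' => i.1.1.1) (fun i : u' => i.1.1.2 - y)
          (fun i j => by
            rw [sub_sub_sub_cancel_right]
            exact hG.1 _ i.1.2 _ j.1.2)
        refine ⟨WeakDual.toStrongDual.symm (InnerProductSpace.toDual ℝ X x), ?_, ?_⟩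
        · rw [hB]
          exact hx ⟨⟨p₀, hp₀⟩, Finset.mem_insert_self _ _⟩
        · simp only [Set.mem_iInter]
          intro i hi
          rw [hB]
          exact hx ⟨i, Finset.mem_insert_of_mem hi⟩)
    refine ⟨(InnerProductSpace.toDual ℝ X).symm (WeakDual.toStrongDual φ), fun p hp => ?_⟩
    rw [← hB]
    have := Set.mem_iInter.1 hφ ⟨p, hp⟩
    simpa using this
  obtain ⟨x, hx⟩ := hsuff
  let S : X → Set X := fun u => {v | v ∈ G u ∨ (u = x ∧ v = y - x)}
  have hS : Mono S := by
    have hx' : ∀ p ∈ gph G, 0 ≤ ⟪p.2 - (y - x), p.1 - x⟫ := by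
      intro p hp
      have := hx p hp
      rw [show p.2 - (y - x) = (p.2 - y) + x by abel, ← neg_sub x p.1, inner_neg_right]
      linarith
    rintro ⟨p1, p2⟩ (hp | ⟨hp1, hp2⟩) ⟨q1, q2⟩ (hq | ⟨hq1, hq2⟩)
    · exact hG.1 _ hp _ hq
    · simp only at hq1 hq2; subst hq1 hq2
      exact hx' _ hp
    · simp only at hp1 hp2; subst hp1 hp2
      have := hx' _ hq
      rw [← inner_neg_neg, neg_sub, neg_sub]
      exact this
    · simp only at hp1 hp2 hq1 hq2; subst hp1 hp2 hq1 hq2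
      simp
  have := hG.2 S hS (fun p hp => Or.inl hp)
  have hmem : (x, y - x) ∈ gph S := Or.inr ⟨rfl, rfl⟩
  rw [this] at hmem
  exact ⟨_, hmem, by simp⟩

theorem aux_zorn (K : Set (X × X)) (hK : ∀ p ∈ K, ∀ q ∈ K, 0 ≤ ⟪p.2 - q.2, p.1 - q.1⟫) :
    ∃ G : X → Set X, MaxMono G ∧ K ⊆ gph G := by
  obtain ⟨M, hKM, hM⟩ := zorn_subset_nonempty
    {A : Set (X × X) | ∀ p ∈ A, ∀ q ∈ A, 0 ≤ ⟪p.2 - q.2, p.1 - q.1⟫}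
    (by
      intro c hc hchain _
      refine ⟨⋃₀ c, ?_, fun s hs => Set.subset_sUnion_of_mem hs⟩
      rintro p ⟨A, hA, hpA⟩ q ⟨A', hA', hqA'⟩
      rcases hchain.total hA hA' with h | h
      · exact hc hA' p (h hpA) q hqA'
      · exact hc hA p hpA q (h hqA')) K hK
  refine ⟨fun u => {v | (u, v) ∈ M}, ⟨fun p hp q hq => hM.1 p hp q hq, ?_⟩, hKM⟩
  intro S hS hsub
  exact Set.Subset.antisymm (hM.2 hS hsub) hsub

theorem aux_forward_coderiv (G : X → Set X) (hG : MaxMono G) (T : X → Set X) (p : X × X)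
    (hp : p ∈ gph G) (N : Set (X × X)) (hN : N ∈ 𝓝 p) (hGT : ∀ q ∈ N, q ∈ gph G → q ∈ gph T)
    (w z : X) (hz : z ∈ coderiv T p.1 p.2 w) : 0 ≤ ⟪z, w⟫ := by
  have hz' : ∀ ε > 0, ∀ᶠ u in 𝓝[gph T] p,
    ⟪z, u.1 - p.1⟫ + ⟪-w, u.2 - p.2⟫ ≤ ε * (‖u.1 - p.1‖ + ‖u.2 - p.2‖) := hz
  choose P hPG hPy using aux_minty G hG
  set d := z - w with hd
  -- main estimate
  have hest : ∀ ε > 0, ⟪d, d⟫ - ‖z + w‖ * ‖d‖ ≤ 2 * (ε * (2 * ‖d‖)) := by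
    intro ε hε
    have h1 := hz' ε hε
    rw [eventually_nhdsWithin_iff] at h1
    have h2 := h1.and hN
    obtain ⟨r, hr, hball⟩ := Metric.eventually_nhds_iff.1 h2
    set t : ℝ := r / (2 * (‖d‖ + 1)) with ht
    have ht0 : 0 < t := by positivity
    have htd : t * ‖d‖ < r := by
      rw [ht, div_mul_eq_mul_div, div_lt_iff₀ (by positivity)]
      nlinarith [norm_nonneg d]
    set u := P (p.1 + p.2 + t • d) with hu
    have huG : u ∈ gph G := hPG _
    have hsum : (u.1 - p.1) + (u.2 - p.2) = t • d := by
      have : u.1 + u.2 = _ := hPy (p.1 + p.2 + t • d)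
      rw [show (u.1 - p.1) + (u.2 - p.2) = (u.1 + u.2) - (p.1 + p.2) by abel, this]; abel
    have hmon : 0 ≤ ⟪u.2 - p.2, u.1 - p.1⟫ := hG.1 _ huG _ hp
    set α := u.1 - p.1 with hα
    set γ := u.2 - p.2 with hγ
    have hnd : ‖t • d‖ = t * ‖d‖ := by rw [norm_smul, Real.norm_of_nonneg ht0.le]
    have hsq : ‖α‖ ^ 2 + ‖γ‖ ^ 2 ≤ (t * ‖d‖) ^ 2 := by
      rw [← hnd, ← hsum, norm_add_sq_real, real_inner_comm]; linarith
    have hαn : ‖α‖ ≤ t * ‖d‖ := by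
      refine abs_le_of_sq_le_sq' (by nlinarith [sq_nonneg ‖γ‖]) (by positivity) |>.2
    have hγn : ‖γ‖ ≤ t * ‖d‖ := by
      refine abs_le_of_sq_le_sq' (by nlinarith [sq_nonneg ‖α‖]) (by positivity) |>.2
    have hdist : dist u p < r := by
      rw [Prod.dist_eq, dist_eq_norm, dist_eq_norm]
      exact max_lt (hαn.trans_lt htd) (hγn.trans_lt htd)
    obtain ⟨hA, hB⟩ := hball hdist
    have hC := hA (hGT u hB huG)
    have hdiff : ‖α - γ‖ ≤ t * ‖d‖ := by
      refine abs_le_of_sq_le_sq' ?_ (by positivity) |>.2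
      rw [← hnd, ← hsum, norm_sub_sq_real, norm_add_sq_real]
      rw [real_inner_comm] at hmon
      linarith
    have hCS : -(‖z + w‖ * (t * ‖d‖)) ≤ ⟪z + w, α - γ⟫ := by
      have h3 := abs_real_inner_le_norm (z + w) (α - γ)
      have h4 : ‖z + w‖ * ‖α - γ‖ ≤ ‖z + w‖ * (t * ‖d‖) := by gcongr
      have h5 := neg_abs_le ⟪z + w, α - γ⟫
      linarith
    have hid : 2 * (⟪z, α⟫ + ⟪-w, γ⟫) = ⟪z + w, α - γ⟫ + t * ⟪d, d⟫ := by
      rw [← real_inner_smul_right, ← hsum, hd]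
      simp only [inner_add_left, inner_sub_left, inner_add_right, inner_sub_right, inner_neg_left]
      ring
    have hbd : ε * (‖α‖ + ‖γ‖) ≤ ε * (t * ‖d‖ + t * ‖d‖) := by gcongr
    have hfin : t * (⟪d, d⟫ - ‖z + w‖ * ‖d‖) ≤ t * (2 * (ε * (2 * ‖d‖))) := by
      nlinarith
    exact le_of_mul_le_mul_left hfin ht0
  have h0 : ⟪d, d⟫ - ‖z + w‖ * ‖d‖ ≤ 0 := by
    by_contra! hcon
    have h1 := hest ((⟪d, d⟫ - ‖z + w‖ * ‖d‖) / (8 * (‖d‖ + 1))) (by positivity)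
    have h2 : 2 * ((⟪d, d⟫ - ‖z + w‖ * ‖d‖) / (8 * (‖d‖ + 1)) * (2 * ‖d‖)) ≤
      2 * ((⟪d, d⟫ - ‖z + w‖ * ‖d‖) / (8 * (‖d‖ + 1)) * (2 * (‖d‖ + 1))) := by
      gcongr; linarith
    have h3 : 2 * ((⟪d, d⟫ - ‖z + w‖ * ‖d‖) / (8 * (‖d‖ + 1)) * (2 * (‖d‖ + 1))) =
      (⟪d, d⟫ - ‖z + w‖ * ‖d‖) / 2 := by
      field_simp; ring
    linarith
  rw [real_inner_self_eq_norm_sq] at h0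
  have hle : ‖d‖ ≤ ‖z + w‖ := by
    by_contra! hcon
    nlinarith [norm_nonneg d, norm_nonneg (z + w)]
  have : ‖d‖ ^ 2 ≤ ‖z + w‖ ^ 2 := by gcongr
  rw [hd, norm_sub_sq_real, norm_add_sq_real] at this
  linarith

theorem aux_forward (T : X → Set X) (xbar vbar : X) (h : LocMaxBAt T xbar vbar) :
      ((∃ r > 0, LocHypoAt r T xbar vbar) ∧
        ∃ W ∈ 𝓝 ((xbar, vbar) : X × X), ∀ p ∈ gph T ∩ W, ∀ w z : X,
          z ∈ coderiv T p.1 p.2 w → 0 ≤ ⟪z, w⟫) := by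
  obtain ⟨U, hU, V, hV, G, hG, hGT⟩ := h
  have hUV : U ×ˢ V ∈ 𝓝 ((xbar, vbar) : X × X) := prod_mem_nhds hU hV
  refine ⟨⟨1, one_pos, U ×ˢ V, hUV, ?_⟩, interior (U ×ˢ V), interior_mem_nhds.2 hUV, ?_⟩
  · intro p hp q hq
    rw [← hGT] at hp hq
    have := hG.1 p hp.1 q hq.1
    have : 0 ≤ ‖p.1 - q.1‖ ^ 2 := by positivity
    linarith
  · rintro p ⟨hpT, hpI⟩ w z hz
    have hp : p ∈ gph G ∩ U ×ˢ V := by rw [hGT]; exact ⟨hpT, interior_subset hpI⟩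
    refine aux_forward_coderiv G hG T p hp.1 (U ×ˢ V) (mem_interior_iff_mem_nhds.1 hpI) ?_ w z hz
    intro q hq hqG
    have : q ∈ gph T ∩ U ×ˢ V := by rw [← hGT]; exact ⟨hqG, hq⟩
    exact this.1

/-- The core variational estimate. -/
theorem aux_core (D : Set X) (hD : IsClosed D) (φ : X → ℝ) (hφ : ContinuousOn φ D)
    (a : X) (κ N H : ℝ) (hH : 0 ≤ H) (hκ : H < κ) (hN : 0 ≤ N)
    (m : ℝ) (hm : ∀ y ∈ D, m ≤ φ y + κ * ‖y - a‖ + N * ‖y - a‖ ^ 2)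
    (b : X) (hb : b ∈ D)
    (hloc : ∀ y ∈ D, φ y + κ * ‖y - a‖ + N * ‖y - a‖ ^ 2 ≤
      φ b + κ * ‖b - a‖ + N * ‖b - a‖ ^ 2 → y ≠ a ∧ ∀ ζ : X, ∀ C : ℝ,
        (∀ y' ∈ D, φ y + ⟪ζ, y' - y⟫ - C * ‖y' - y‖ ^ 2 ≤ φ y') → ‖ζ‖ ≤ H) : False := by
  obtain ⟨y, hy, hyb, η, hη, C, hC⟩ := aux_svp D hD
    (fun y => φ y + κ * ‖y - a‖ + N * ‖y - a‖ ^ 2) (by fun_prop) m hm b hb ((κ - H) / 2)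
    (by linarith)
  obtain ⟨hya, hζ⟩ := hloc y hy hyb
  set t := ‖y - a‖ with ht
  have ht0 : 0 < t := norm_pos_iff.2 (sub_ne_zero.2 hya)
  have hκ0 : 0 < κ := by linarith
  have h1 := hζ (η - (κ / t + 2 * N) • (y - a)) (C + κ / (2 * t) + N) (by
    intro y' hy'
    have h2 := hC y' hy'
    have e1 : ‖y' - a‖ ^ 2 = ‖y' - y‖ ^ 2 + 2 * ⟪y - a, y' - y⟫ + t ^ 2 := by
      rw [show y' - a = (y' - y) + (y - a) by abel, norm_add_sq_real, real_inner_comm, ht]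
    have e2 : κ * ‖y' - a‖ ≤ κ * ((‖y' - a‖ ^ 2 + t ^ 2) / (2 * t)) := by
      gcongr
      rw [le_div_iff₀ (by positivity)]
      nlinarith [sq_nonneg (‖y' - a‖ - t)]
    have e3 : κ * ((‖y' - a‖ ^ 2 + t ^ 2) / (2 * t)) =
        κ * t + κ / t * ⟪y - a, y' - y⟫ + κ / (2 * t) * ‖y' - y‖ ^ 2 := by
      rw [e1]; field_simp; ring
    rw [e3] at e2
    rw [e1] at h2
    rw [inner_sub_left, real_inner_smul_left]
    linarith)
  have h3 : ‖(κ / t + 2 * N) • (y - a)‖ = κ + 2 * N * t := by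
    rw [norm_smul, Real.norm_of_nonneg (by positivity), ← ht]; field_simp
  have h4 : ‖(κ / t + 2 * N) • (y - a)‖ - ‖η‖ ≤ ‖η - (κ / t + 2 * N) • (y - a)‖ := by
    rw [norm_sub_rev]; exact norm_sub_norm_le _ _
  have : 0 ≤ 2 * N * t := by positivity
  linarith

theorem aux_open (D : Set X) (hD : IsClosed D) (c : X) (hc : c ∈ D) (ρ : ℝ)
    (hsub : ∀ y ∈ D, ‖y - c‖ < ρ → ∀ ζ : X, ∀ C : ℝ,
      (∀ y' ∈ D, ⟪ζ, y' - y⟫ - C * ‖y' - y‖ ^ 2 ≤ 0) → ζ = 0) :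
    ∀ a, ‖a - c‖ < ρ / 2 → a ∈ D := by
  intro a ha
  by_contra haD
  refine aux_core D hD (fun _ => 0) continuousOn_const a 1 0 0 le_rfl one_pos le_rfl 0
    (fun y _ => by simp) c hc ?_
  intro y hy hle
  refine ⟨fun h => haD (h ▸ hy), fun ζ C h => ?_⟩
  simp only [zero_add, one_mul, zero_mul, add_zero] at hle h
  have : ‖y - c‖ < ρ := by
    have h1 : ‖y - c‖ ≤ ‖y - a‖ + ‖a - c‖ := norm_sub_le_norm_sub_add_norm_sub _ _ _
    rw [norm_sub_rev c a] at hle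
    linarith
  rw [hsub y hy this ζ C h, norm_zero]

theorem aux_lip (D : Set X) (hD : IsClosed D) (R : X → X) (L : ℝ) (hL : 0 ≤ L)
    (hR : ∀ x ∈ D, ∀ y ∈ D, ‖R x - R y‖ ≤ L * ‖x - y‖)
    (c : X) (ρ : ℝ) (hρ : 0 < ρ) (hball : ∀ a, ‖a - c‖ < ρ / 2 → a ∈ D)
    (hsub : ∀ y ∈ D, ‖y - c‖ < ρ → ∀ ζ h : X, ∀ C : ℝ,
      (∀ y' ∈ D, ⟪h, R y⟫ + ⟪ζ, y' - y⟫ - C * ‖y' - y‖ ^ 2 ≤ ⟪h, R y'⟫) → ‖ζ‖ ≤ ‖h‖) :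
    ∀ a b, ‖a - c‖ < ρ / 2 → ‖b - c‖ < ρ / 2 → ‖R a - R b‖ ≤ ‖a - b‖ := by
  have hRc : ContinuousOn R D := by
    have : LipschitzOnWith (Real.toNNReal L) R D := by
      refine LipschitzOnWith.of_dist_le_mul fun x hx y hy => ?_
      rw [dist_eq_norm, dist_eq_norm, Real.coe_toNNReal _ hL]
      exact hR x hx y hy
    exact this.continuousOn
  -- first estimate
  have step1 : ∀ h : X, ∃ N : ℝ, 0 ≤ N ∧ ∀ κ, ‖h‖ < κ → ∀ a, ‖a - c‖ < ρ / 2 → ∀ b ∈ D,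
      ⟪h, R a⟫ ≤ ⟪h, R b⟫ + κ * ‖b - a‖ + N * ‖b - a‖ ^ 2 := by
    intro h
    set Q := ‖h‖ * L + 1 with hQ
    have hQ0 : 0 < Q := by positivity
    refine ⟨Q * (2 / ρ), by positivity, ?_⟩
    set N := Q * (2 / ρ) with hNdef
    have hN0 : 0 < N := by positivity
    intro κ hκ a ha b hb
    have haD := hball a ha
    by_contra! hcon
    have hlow : ∀ y ∈ D, ⟪h, R a⟫ - Q * ‖y - a‖ ≤ ⟪h, R y⟫ := by
      intro y hy
      have h1 := real_inner_le_norm h (R a - R y)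
      have h2 := hR a haD y hy
      rw [norm_sub_rev a y] at h2
      have h3 : ‖h‖ * ‖R a - R y‖ ≤ ‖h‖ * (L * ‖y - a‖) := by gcongr
      rw [inner_sub_right] at h1
      rw [hQ]
      nlinarith [norm_nonneg (y - a)]
    have hκ0 : 0 ≤ κ := (norm_nonneg h).trans hκ.le
    refine aux_core D hD (fun y => ⟪h, R y⟫) (by fun_prop) a κ N ‖h‖ (norm_nonneg _) hκ hN0.le
      (⟪h, R a⟫ - Q ^ 2 / (4 * N)) ?_ b hb ?_
    · intro y hy
      have h1 := hlow y hy
      have h2 : 0 ≤ κ * ‖y - a‖ := by positivity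
      have h3 : Q * ‖y - a‖ ≤ N * ‖y - a‖ ^ 2 + Q ^ 2 / (4 * N) := by
        have : N * ‖y - a‖ ^ 2 + Q ^ 2 / (4 * N) - Q * ‖y - a‖ =
          (2 * N * ‖y - a‖ - Q) ^ 2 / (4 * N) := by field_simp; ring
        have : 0 ≤ (2 * N * ‖y - a‖ - Q) ^ 2 / (4 * N) := by positivity
        linarith
      linarith
    · intro y hy hle
      have hlt : ⟪h, R y⟫ + κ * ‖y - a‖ + N * ‖y - a‖ ^ 2 < ⟪h, R a⟫ := lt_of_le_of_lt hle hcon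
      refine ⟨?_, ?_⟩
      · rintro rfl
        simp at hlt
      · have h1 := hlow y hy
        have h2 : 0 ≤ κ * ‖y - a‖ := by positivity
        have h3 : N * ‖y - a‖ ^ 2 < Q * ‖y - a‖ := by linarith
        have h4 : ‖y - a‖ < ρ / 2 := by
          by_contra! h5
          have h6 : N * (ρ / 2) = Q := by rw [hNdef]; field_simp
          have h7 : Q ≤ N * ‖y - a‖ := by rw [← h6]; gcongr
          nlinarith [norm_nonneg (y - a)]
        have h8 : ‖y - c‖ < ρ := by
          have h1 : ‖y - c‖ ≤ ‖y - a‖ + ‖a - c‖ := norm_sub_le_norm_sub_add_norm_sub _ _ _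
          linarith
        intro ζ C hC
        exact hsub y hy h8 ζ h C hC
  -- subdivide
  have step2 : ∀ h a b : X, ‖a - c‖ < ρ / 2 → ‖b - c‖ < ρ / 2 →
      ⟪h, R a⟫ ≤ ⟪h, R b⟫ + ‖h‖ * ‖b - a‖ := by
    intro h a b ha hb
    obtain ⟨N, hN, hstep⟩ := step1 h
    have hstep' : ∀ a, ‖a - c‖ < ρ / 2 → ∀ b ∈ D,
      ⟪h, R a⟫ ≤ ⟪h, R b⟫ + ‖h‖ * ‖b - a‖ + N * ‖b - a‖ ^ 2 := by
      intro a ha b hb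
      refine le_of_forall_pos_le_add fun ε hε => ?_
      have h1 := hstep (‖h‖ + ε / (‖b - a‖ + 1)) (by
        have : 0 < ε / (‖b - a‖ + 1) := by positivity
        linarith) a ha b hb
      have h2 : ε / (‖b - a‖ + 1) * ‖b - a‖ ≤ ε := by
        rw [div_mul_eq_mul_div, div_le_iff₀ (by positivity)]
        nlinarith [norm_nonneg (b - a)]
      linarith
    set d := ‖b - a‖ with hd
    have hn : ∀ n : ℕ, ⟪h, R a⟫ ≤ ⟪h, R b⟫ + ‖h‖ * d + N * d ^ 2 * (1 / ((n : ℝ) + 1)) := by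
      intro n
      have hn0 : (0 : ℝ) < (n : ℝ) + 1 := by positivity
      let q : ℕ → X := fun i => a + ((i : ℝ) / ((n : ℝ) + 1)) • (b - a)
      have hq : ∀ i ≤ n + 1, ‖q i - c‖ < ρ / 2 := by
        intro i hi
        have h0 : (0 : ℝ) ≤ (i : ℝ) / ((n : ℝ) + 1) := by positivity
        have h1 : (i : ℝ) / ((n : ℝ) + 1) ≤ 1 := by
          rw [div_le_one hn0]; exact_mod_cast hi
        have hconv := convex_ball c (ρ / 2)
        have := hconv.add_smul_sub_mem (x := a) (y := b) (by rwa [mem_ball_iff_norm])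
          (by rwa [mem_ball_iff_norm]) ⟨h0, h1⟩
        rwa [mem_ball_iff_norm] at this
      have hind : ∀ i ≤ n + 1, ⟪h, R a⟫ ≤ ⟪h, R (q i)⟫ +
          i * (‖h‖ * (d / ((n : ℝ) + 1)) + N * (d / ((n : ℝ) + 1)) ^ 2) := by
        intro i
        induction i with
        | zero => intro _; simp [q]
        | succ i ih =>
          intro hi
          have h1 := ih (by omega)
          have h2 := hstep' (q i) (hq i (by omega)) (q (i + 1)) (hball _ (hq _ hi))
          have h3 : ‖q (i + 1) - q i‖ = d / ((n : ℝ) + 1) := by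
            have : q (i + 1) - q i = (1 / ((n : ℝ) + 1)) • (b - a) := by
              simp only [q]; push_cast
              rw [add_sub_add_left_eq_sub, ← sub_smul]; congr 1; ring
            rw [this, norm_smul, Real.norm_of_nonneg (by positivity), hd]; ring
          rw [h3] at h2
          push_cast
          linarith
      have h1 := hind (n + 1) le_rfl
      have h2 : q (n + 1) = b := by
        simp only [q]; push_cast
        rw [div_self hn0.ne', one_smul]; abel
      rw [h2] at h1
      push_cast at h1
      refine h1.trans (le_of_eq ?_)
      field_simp
      ring
    have hlim : Tendsto (fun n : ℕ => ⟪h, R b⟫ + ‖h‖ * d + N * d ^ 2 * (1 / ((n : ℝ) + 1))) atTop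
        (𝓝 (⟪h, R b⟫ + ‖h‖ * d + N * d ^ 2 * 0)) :=
      tendsto_const_nhds.add (tendsto_const_nhds.mul tendsto_one_div_add_atTop_nhds_zero_nat)
    have := ge_of_tendsto' hlim hn
    linarith
  intro a b ha hb
  have h1 := step2 (R a - R b) a b ha hb
  have h2 : ‖R a - R b‖ ^ 2 ≤ ‖R a - R b‖ * ‖a - b‖ := by
    rw [← real_inner_self_eq_norm_sq, inner_sub_right, norm_sub_rev a b]; linarith
  by_contra! hcon
  nlinarith [norm_nonneg (a - b), norm_nonneg (R a - R b)]

theorem aux_normal (T : X → Set X) (K : Set (X × X)) (p : X × X) (hK : K ∩ gph T ∈ 𝓝[gph T] p)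
    (lam : ℝ) (hlam : 0 < lam) (ζ h : X) (C : ℝ)
    (hC : ∀ q ∈ K ∩ gph T, ⟪h, p.1 - lam • p.2⟫ + ⟪ζ, (q.1 + lam • q.2) - (p.1 + lam • p.2)⟫
      - C * ‖(q.1 + lam • q.2) - (p.1 + lam • p.2)‖ ^ 2 ≤ ⟪h, q.1 - lam • q.2⟫)
    (hpos : ∀ w z : X, z ∈ coderiv T p.1 p.2 w → 0 ≤ ⟪z, w⟫) : ‖ζ‖ ≤ ‖h‖ := by
  have hmem : ζ - h ∈ coderiv T p.1 p.2 (-(lam • (ζ + h))) := by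
    change ∀ ε > 0, ∀ᶠ u in 𝓝[gph T] p, ⟪ζ - h, u.1 - p.1⟫ + ⟪-(-(lam • (ζ + h))), u.2 - p.2⟫ ≤
      ε * (‖u.1 - p.1‖ + ‖u.2 - p.2‖)
    intro ε hε
    have hcont : Tendsto (fun u : X × X =>
        |C| * (1 + lam) * ‖(u.1 + lam • u.2) - (p.1 + lam • p.2)‖) (𝓝[gph T] p) (𝓝 0) := by
      have : Continuous (fun u : X × X =>
        |C| * (1 + lam) * ‖(u.1 + lam • u.2) - (p.1 + lam • p.2)‖) := by fun_prop
      have h1 := this.tendsto p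
      simp only [sub_self, norm_zero, mul_zero] at h1
      exact h1.mono_left nhdsWithin_le_nhds
    filter_upwards [hK, hcont.eventually (gt_mem_nhds hε)] with u hu hlt
    have h1 := hC u hu
    set δ := (u.1 + lam • u.2) - (p.1 + lam • p.2) with hδ
    have e1 : δ = (u.1 - p.1) + lam • (u.2 - p.2) := by rw [hδ]; module
    have e2 : ‖δ‖ ≤ (1 + lam) * (‖u.1 - p.1‖ + ‖u.2 - p.2‖) := by
      rw [e1]
      refine (norm_add_le _ _).trans ?_
      rw [norm_smul, Real.norm_of_nonneg hlam.le]
      nlinarith [norm_nonneg (u.1 - p.1), norm_nonneg (u.2 - p.2)]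
    have e3 : ⟪ζ - h, u.1 - p.1⟫ + ⟪-(-(lam • (ζ + h))), u.2 - p.2⟫ =
        ⟪ζ, δ⟫ + ⟪h, p.1 - lam • p.2⟫ - ⟪h, u.1 - lam • u.2⟫ := by
      rw [e1, neg_neg]
      simp only [inner_add_left, inner_sub_left, inner_add_right, inner_sub_right,
        real_inner_smul_left, real_inner_smul_right]
      ring
    rw [e3]
    have e4 : C * ‖δ‖ ^ 2 ≤ |C| * ‖δ‖ * ((1 + lam) * (‖u.1 - p.1‖ + ‖u.2 - p.2‖)) := by
      calc C * ‖δ‖ ^ 2 ≤ |C| * ‖δ‖ ^ 2 := by gcongr; exact le_abs_self C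
        _ = |C| * ‖δ‖ * ‖δ‖ := by ring
        _ ≤ _ := by gcongr
    have e5 : |C| * (1 + lam) * ‖δ‖ * (‖u.1 - p.1‖ + ‖u.2 - p.2‖) ≤
        ε * (‖u.1 - p.1‖ + ‖u.2 - p.2‖) := by gcongr
    linarith
  have h1 := hpos _ _ hmem
  have h2 : ⟪ζ - h, -(lam • (ζ + h))⟫ = lam * (‖h‖ ^ 2 - ‖ζ‖ ^ 2) := by
    rw [inner_neg_right, real_inner_smul_right]
    simp only [inner_sub_left, inner_add_right, real_inner_self_eq_norm_sq]
    rw [real_inner_comm]; ring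
  rw [h2] at h1
  have h3 : 0 ≤ ‖h‖ ^ 2 - ‖ζ‖ ^ 2 := nonneg_of_mul_nonneg_right h1 hlam
  exact abs_le_of_sq_le_sq' (by linarith) (norm_nonneg _) |>.2

theorem aux_backward (T : X → Set X) (xbar vbar : X) (hx : vbar ∈ T xbar)
    (hcl : LocClosedAt (gph T) (xbar, vbar)) (r : ℝ) (hr : 0 < r)
    (hhypo : LocHypoAt r T xbar vbar)
    (hcod : ∃ W ∈ 𝓝 ((xbar, vbar) : X × X), ∀ p ∈ gph T ∩ W, ∀ w z : X,
          z ∈ coderiv T p.1 p.2 w → 0 ≤ ⟪z, w⟫) : LocMaxBAt T xbar vbar := by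
  obtain ⟨ε₁, hε₁, hclosed⟩ := hcl
  obtain ⟨W₁, hW₁, hhyp⟩ := hhypo
  obtain ⟨W₂, hW₂, hcod⟩ := hcod
  obtain ⟨ε₂, hε₂, hsubW⟩ := Metric.nhds_basis_closedBall.mem_iff.1 (inter_mem hW₁ hW₂)
  set ρ₀ := min ε₁ ε₂ with hρ₀
  have hρ₀pos : 0 < ρ₀ := lt_min hε₁ hε₂
  set B := Metric.closedBall ((xbar, vbar) : X × X) ρ₀ with hB
  have hBW : B ⊆ W₁ ∩ W₂ :=
    (Metric.closedBall_subset_closedBall (min_le_right _ _)).trans hsubW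
  set K := gph T ∩ B with hK
  have hKc : IsClosed K := by
    have : K = (gph T ∩ Metric.closedBall (xbar, vbar) ε₁) ∩ B := by
      rw [hK, inter_assoc, inter_eq_right.2
        (Metric.closedBall_subset_closedBall (min_le_left _ _))]
    rw [this]
    exact hclosed.inter Metric.isClosed_closedBall
  set lam := 1 / (2 * r) with hlam
  have hlam0 : 0 < lam := by positivity
  have hlamr : lam * r = 1 / 2 := by rw [hlam]; field_simp
  let P : X × X → X := fun p => p.1 + lam • p.2
  have hPc : Continuous P := by fun_prop
  -- expansion estimates
  have hest1 : ∀ p ∈ K, ∀ q ∈ K, ‖p.1 - q.1‖ ≤ 2 * ‖P p - P q‖ := by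
    intro p hp q hq
    have h1 := hhyp p ⟨hp.1, (hBW hp.2).1⟩ q ⟨hq.1, (hBW hq.2).1⟩
    have h2 : ⟪P p - P q, p.1 - q.1⟫ = ‖p.1 - q.1‖ ^ 2 + lam * ⟪p.2 - q.2, p.1 - q.1⟫ := by
      rw [show P p - P q = (p.1 - q.1) + lam • (p.2 - q.2) by simp only [P]; module,
        inner_add_left, real_inner_self_eq_norm_sq, real_inner_smul_left]
    have h3 := real_inner_le_norm (P p - P q) (p.1 - q.1)
    have h4 : lam * -(r * ‖p.1 - q.1‖ ^ 2) ≤ lam * ⟪p.2 - q.2, p.1 - q.1⟫ := by gcongr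
    have h5 : lam * -(r * ‖p.1 - q.1‖ ^ 2) = -(1 / 2 * ‖p.1 - q.1‖ ^ 2) := by
      rw [← hlamr]; ring
    by_contra! hcon
    nlinarith [norm_nonneg (P p - P q), norm_nonneg (p.1 - q.1)]
  have hest2 : ∀ p ∈ K, ∀ q ∈ K, lam * ‖p.2 - q.2‖ ≤ 3 * ‖P p - P q‖ := by
    intro p hp q hq
    have h1 := hest1 p hp q hq
    have h2 : lam • (p.2 - q.2) = (P p - P q) - (p.1 - q.1) := by simp only [P]; module
    have h3 := norm_sub_le (P p - P q) (p.1 - q.1)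
    rw [← h2, norm_smul, Real.norm_of_nonneg hlam0.le] at h3
    linarith
  set M := max 2 (3 / lam) with hM
  have hM0 : 0 < M := by positivity
  have hest3 : ∀ p ∈ K, ∀ q ∈ K, dist p q ≤ M * dist (P p) (P q) := by
    intro p hp q hq
    rw [Prod.dist_eq, dist_eq_norm, dist_eq_norm, dist_eq_norm]
    refine max_le ((hest1 p hp q hq).trans ?_) ?_
    · gcongr; exact le_max_left _ _
    · have : ‖p.2 - q.2‖ ≤ 3 / lam * ‖P p - P q‖ := by
        rw [div_mul_eq_mul_div, le_div_iff₀ hlam0]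
        have := hest2 p hp q hq
        linarith
      refine this.trans ?_
      gcongr; exact le_max_right _ _
  set D := P '' K with hD
  have hDc : IsClosed D := by
    have : CompleteSpace K := hKc.completeSpace_coe
    have hanti : AntilipschitzWith (Real.toNNReal M) (fun k : K => P k.1) := by
      refine AntilipschitzWith.of_le_mul_dist fun a b => ?_
      rw [Real.coe_toNNReal _ hM0.le]
      exact hest3 _ a.2 _ b.2
    have hLip : UniformContinuous (fun k : K => P k.1) := by
      have : UniformContinuous P :=
        uniformContinuous_fst.add (uniformContinuous_snd.const_smul lam)
      exact this.comp uniformContinuous_subtype_val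
    have hr := hanti.isClosed_range hLip
    have : Set.range (fun k : K => P k.1) = D := by
      ext y; simp [hD]
    rwa [this] at hr
  have hJ : ∀ y : X, ∃ p : X × X, y ∈ D → p ∈ K ∧ P p = y := by
    intro y
    by_cases hy : y ∈ D
    · obtain ⟨p, hp, rfl⟩ := hy
      exact ⟨p, fun _ => ⟨hp, rfl⟩⟩
    · exact ⟨0, fun h => absurd h hy⟩
  choose J hJ using hJ
  have hJP : ∀ p ∈ K, J (P p) = p := by
    intro p hp
    obtain ⟨h1, h2⟩ := hJ (P p) ⟨p, hp, rfl⟩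
    have := hest3 _ h1 _ hp
    rw [h2, dist_self, mul_zero] at this
    exact dist_le_zero.1 this
  let pbar : X × X := (xbar, vbar)
  have hpbar : pbar ∈ K := ⟨hx, Metric.mem_closedBall_self hρ₀pos.le⟩
  let R : X → X := fun y => (J y).1 - lam • (J y).2
  set ρ := ρ₀ / (M + 1) with hρ
  have hρpos : 0 < ρ := by positivity
  have hsub : ∀ y ∈ D, ‖y - P pbar‖ < ρ → ∀ ζ h : X, ∀ C : ℝ,
      (∀ y' ∈ D, ⟪h, R y⟫ + ⟪ζ, y' - y⟫ - C * ‖y' - y‖ ^ 2 ≤ ⟪h, R y'⟫) → ‖ζ‖ ≤ ‖h‖ := by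
    rintro _ ⟨p, hp, rfl⟩ hyρ ζ h C hC
    have hpB : dist p pbar < ρ₀ := by
      have h1 := hest3 p hp pbar hpbar
      rw [dist_eq_norm (P p)] at h1
      have h2 : M * ‖P p - P pbar‖ ≤ M * ρ := by gcongr
      have h3 : M * ρ < ρ₀ := by
        rw [hρ, mul_div_assoc', div_lt_iff₀ (by positivity)]
        nlinarith
      linarith
    have hBn : B ∈ 𝓝 p := by
      refine mem_of_superset (Metric.isOpen_ball.mem_nhds (Metric.mem_ball.2 hpB))
        Metric.ball_subset_closedBall
    refine aux_normal T B p (inter_mem (mem_nhdsWithin_of_mem_nhds hBn) self_mem_nhdsWithin)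
      lam hlam0 ζ h C ?_ (hcod p ⟨hp.1, (hBW hp.2).2⟩)
    rintro q ⟨hqB, hqT⟩
    have hq : q ∈ K := ⟨hqT, hqB⟩
    have h1 := hC (P q) ⟨q, hq, rfl⟩
    simp only [R] at h1
    rw [hJP p hp, hJP q hq] at h1
    exact h1
  have hball : ∀ a, ‖a - P pbar‖ < ρ / 2 → a ∈ D := by
    refine aux_open D hDc (P pbar) ⟨pbar, hpbar, rfl⟩ ρ ?_
    intro y hy hyρ ζ C hC
    have := hsub y hy hyρ ζ 0 C (by simpa using hC)
    simpa using this
  have hRL : ∀ x ∈ D, ∀ y ∈ D, ‖R x - R y‖ ≤ 5 * ‖x - y‖ := by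
    rintro _ ⟨p, hp, rfl⟩ _ ⟨q, hq, rfl⟩
    simp only [R]
    rw [hJP p hp, hJP q hq]
    have h1 := hest1 p hp q hq
    have h2 := hest2 p hp q hq
    have h3 := norm_sub_le (p.1 - q.1) (lam • (p.2 - q.2))
    rw [norm_smul, Real.norm_of_nonneg hlam0.le] at h3
    rw [show p.1 - lam • p.2 - (q.1 - lam • q.2) = (p.1 - q.1) - lam • (p.2 - q.2) by module]
    linarith
  have hlip := aux_lip D hDc R 5 (by norm_num) hRL (P pbar) ρ hρpos hball hsub
  -- monotone part
  set K₁ := {p | p ∈ K ∧ ‖P p - P pbar‖ < ρ / 2} with hK₁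
  obtain ⟨G, hG, hKG⟩ := aux_zorn K₁ (by
    rintro p ⟨hp, hpρ⟩ q ⟨hq, hqρ⟩
    have h1 := hlip (P p) (P q) hpρ hqρ
    simp only [R] at h1
    rw [hJP p hp, hJP q hq] at h1
    have h2 := pow_le_pow_left₀ (norm_nonneg _) h1 2
    rw [show p.1 - lam • p.2 - (q.1 - lam • q.2) = (p.1 - q.1) - lam • (p.2 - q.2) by module,
      show P p - P q = (p.1 - q.1) + lam • (p.2 - q.2) by simp only [P]; module,
      norm_sub_sq_real, norm_add_sq_real, real_inner_smul_right, real_inner_comm] at h2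
    refine nonneg_of_mul_nonneg_right (b := ⟪p.2 - q.2, p.1 - q.1⟫) (a := lam) ?_ hlam0
    linarith)
  have hnhds : B ∩ {p | ‖P p - P pbar‖ < ρ / 2} ∈ 𝓝 pbar := by
    refine inter_mem (Metric.closedBall_mem_nhds _ hρ₀pos) ?_
    have hopen : IsOpen {p | ‖P p - P pbar‖ < ρ / 2} :=
      isOpen_lt (by fun_prop) continuous_const
    refine hopen.mem_nhds ?_
    simp only [mem_setOf_eq, sub_self, norm_zero]
    positivity
  obtain ⟨U, hU, V, hV, hUV⟩ := mem_nhds_prod_iff.1 hnhds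
  refine ⟨U, hU, V, hV, G, hG, ?_⟩
  ext p
  constructor
  · rintro ⟨hpG, hpUV⟩
    obtain ⟨hpB, hpρ⟩ := hUV hpUV
    obtain ⟨hqK, hqP⟩ := hJ (P p) (hball _ hpρ)
    set q := J (P p) with hq
    have hqG : q ∈ gph G := hKG ⟨hqK, by rw [hqP]; exact hpρ⟩
    have h1 := hG.1 p hpG q hqG
    have h2 : p.1 - q.1 = -(lam • (p.2 - q.2)) := by
      have : q.1 + lam • q.2 = p.1 + lam • p.2 := hqP
      rw [smul_sub, neg_sub, sub_eq_sub_iff_add_eq_add, ← this, add_comm]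
    rw [h2, inner_neg_right, real_inner_smul_right, real_inner_self_eq_norm_sq] at h1
    have h3 : ‖p.2 - q.2‖ = 0 := by
      by_contra hne
      have : 0 < ‖p.2 - q.2‖ := lt_of_le_of_ne (norm_nonneg _) (Ne.symm hne)
      have : 0 < lam * ‖p.2 - q.2‖ ^ 2 := by positivity
      linarith
    have h4 : p.2 - q.2 = 0 := norm_eq_zero.1 h3
    rw [h4, smul_zero, neg_zero] at h2
    have h5 : p = q := Prod.ext (sub_eq_zero.1 h2) (sub_eq_zero.1 h4)
    exact ⟨by rw [h5]; exact hqK.1, hpUV⟩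
  · rintro ⟨hpT, hpUV⟩
    obtain ⟨hpB, hpρ⟩ := hUV hpUV
    exact ⟨hKG ⟨⟨hpT, hpB⟩, hpρ⟩, hpUV⟩

/-- Coderivative characterization of local maximal monotonicity in Hilbert spaces:
`T` is locally maximal monotone around `(x̄, v̄)` iff it is locally hypomonotone there
and its regular coderivative is positive-semidefinite near `(x̄, v̄)`. -/
theorem stmt_18 (T : X → Set X) (xbar vbar : X) (hx : vbar ∈ T xbar)
    (hcl : LocClosedAt (gph T) (xbar, vbar)) :
    LocMaxBAt T xbar vbar ↔
      ((∃ r > 0, LocHypoAt r T xbar vbar) ∧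
        ∃ W ∈ 𝓝 ((xbar, vbar) : X × X), ∀ p ∈ gph T ∩ W, ∀ w z : X,
          z ∈ coderiv T p.1 p.2 w → 0 ≤ ⟪z, w⟫) := by
  constructor
  · exact aux_forward T xbar vbar
  · rintro ⟨⟨r, hr, hhyp⟩, hcod⟩
    exact aux_backward T xbar vbar hx hcl r hr hhyp hcod
end

section
/- Let X be a Hilbert space, σ > 0, and T : X ⇉ X with closed graph around (x̄, v̄) ∈ gph T. Then T is locally strongly maximal monotone around (x̄, v̄) with modulus σ if and only if T is locally hypomonotone around (x̄, v̄) and there is a neighborhood W of (x̄, v̄) such that ⟨z, w⟩ ≥ σ‖w‖² whenever z ∈ D̂*T(u, v)(w) and (u, v) ∈ gph T ∩ W. -/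
open Set Filter Topology RealInnerProductSpace

variable {X : Type*} [NormedAddCommGroup X] [InnerProductSpace ℝ X] [CompleteSpace X]

lemma aux_pairs {ι : Type*} [Fintype ι] (n : ι → X) (l : ι → ℝ) (hl : ∑ i, l i = 1) :
    ∑ i, ∑ j, l i * l j * ‖n i - n j‖ ^ 2 =
      2 * (∑ i, l i * ‖n i‖ ^ 2) - 2 * ‖∑ i, l i • n i‖ ^ 2 := by
  have h1 : ‖∑ i, l i • n i‖ ^ 2 = ∑ i, ∑ j, l i * l j * ⟪n i, n j⟫ := by
    rw [← real_inner_self_eq_norm_sq, sum_inner]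
    refine Finset.sum_congr rfl fun i _ => ?_
    rw [inner_sum]
    refine Finset.sum_congr rfl fun j _ => ?_
    rw [real_inner_smul_left, real_inner_smul_right]; ring
  have h2 : ∑ i, ∑ j, l i * l j * ‖n i‖ ^ 2 = ∑ i, l i * ‖n i‖ ^ 2 := by
    refine Finset.sum_congr rfl fun i _ => ?_
    rw [← Finset.sum_mul, ← Finset.mul_sum, hl, mul_one]
  have h3 : ∑ i, ∑ j, l i * l j * ‖n j‖ ^ 2 = ∑ i, l i * ‖n i‖ ^ 2 := by
    rw [← h2, Finset.sum_comm]
    refine Finset.sum_congr rfl fun i _ => Finset.sum_congr rfl fun j _ => by ring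
  have h4 : ∑ i, ∑ j, l i * l j * ‖n i - n j‖ ^ 2 =
      (∑ i, ∑ j, l i * l j * ‖n i‖ ^ 2) + (∑ i, ∑ j, l i * l j * ‖n j‖ ^ 2)
        - 2 * ∑ i, ∑ j, l i * l j * ⟪n i, n j⟫ := by
    rw [Finset.mul_sum, ← Finset.sum_add_distrib, ← Finset.sum_sub_distrib]
    refine Finset.sum_congr rfl fun i _ => ?_
    rw [Finset.mul_sum, ← Finset.sum_add_distrib, ← Finset.sum_sub_distrib]
    refine Finset.sum_congr rfl fun j _ => ?_
    rw [norm_sub_sq_real]; ring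
  rw [h4, h2, h3, h1]; ring

lemma aux_small {A B : ℝ} (h : ∀ t : ℝ, 0 < t → t ≤ 1 → t * A ≤ t ^ 2 * B) : A ≤ 0 := by
  by_contra hA
  push Not at hA
  have hB : 0 < |B| + 1 := by positivity
  have ht : 0 < min 1 (A / (2 * (|B| + 1))) := by positivity
  have h1 := h _ ht (min_le_left _ _)
  set t := min 1 (A / (2 * (|B| + 1)))
  have h2 : t ≤ A / (2 * (|B| + 1)) := min_le_right _ _
  have h3 : A ≤ t * B := by
    have : t * A ≤ t * (t * B) := by nlinarith
    exact le_of_mul_le_mul_left this ht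
  have h4 : t * B ≤ t * (|B| + 1) := by
    apply mul_le_mul_of_nonneg_left _ ht.le
    linarith [le_abs_self B]
  rw [le_div_iff₀ (by positivity)] at h2
  nlinarith

lemma finite_balls {ι : Type*} [Fintype ι] [Nonempty ι] (n s : ι → X)
    (h : ∀ i j, ‖n i - n j‖ ≤ ‖s i - s j‖) :
    ∃ p, ∀ i, ‖p - n i‖ ≤ ‖s i‖ := by
  classical
  let g : (ι → ℝ) → ℝ := fun l => ∑ i, l i * (‖n i‖ ^ 2 - ‖s i‖ ^ 2) - ‖∑ i, l i • n i‖ ^ 2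
  have hg : Continuous g := by fun_prop
  obtain ⟨i0⟩ := ‹Nonempty ι›
  obtain ⟨l, hl, hmax⟩ := (isCompact_stdSimplex ℝ ι).exists_isMaxOn
    ⟨_, single_mem_stdSimplex ℝ i0⟩ hg.continuousOn
  set p := ∑ i, l i • n i with hp
  set L := ∑ i, l i * (‖n i‖ ^ 2 - ‖s i‖ ^ 2) with hL
  refine ⟨p, fun k => ?_⟩
  have h1 : ∀ t : ℝ, 0 < t → t ≤ 1 →
      t * (‖n k‖ ^ 2 - ‖s k‖ ^ 2 - L - 2 * ⟪p, n k - p⟫) ≤ t ^ 2 * ‖n k - p‖ ^ 2 := by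
    intro t ht ht1
    have hmem : (1 - t) • l + t • Pi.single k (1 : ℝ) ∈ stdSimplex ℝ ι :=
      convex_stdSimplex ℝ ι hl (single_mem_stdSimplex ℝ k) (by linarith) ht.le (by ring)
    have := hmax hmem
    simp only [mem_ofPred_eq] at this
    have e1 : ∑ i, ((1 - t) • l + t • Pi.single k (1 : ℝ) : ι → ℝ) i * (‖n i‖ ^ 2 - ‖s i‖ ^ 2)
        = (1 - t) * L + t * (‖n k‖ ^ 2 - ‖s k‖ ^ 2) := by
      simp only [Pi.add_apply, Pi.smul_apply, smul_eq_mul, add_mul, Finset.sum_add_distrib,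
        mul_assoc, ← Finset.mul_sum]
      congr 2
      simp [Pi.single_apply]
    have e2 : ∑ i, ((1 - t) • l + t • Pi.single k (1 : ℝ) : ι → ℝ) i • n i
        = p + t • (n k - p) := by
      simp only [Pi.add_apply, Pi.smul_apply, smul_eq_mul, add_smul, Finset.sum_add_distrib,
        mul_smul, ← Finset.smul_sum]
      have : ∑ i, (Pi.single k (1 : ℝ) : ι → ℝ) i • n i = n k := by
        simp [Pi.single_apply]
      rw [this, ← hp]
      module
    simp only [g] at this
    rw [e1, e2, norm_add_sq_real, real_inner_smul_right, norm_smul, Real.norm_eq_abs, mul_pow,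
      sq_abs] at this
    nlinarith
  have h2 := aux_small h1
  have h3 : ‖p - n k‖ ^ 2 - ‖s k‖ ^ 2 ≤ L - ‖p‖ ^ 2 := by
    rw [norm_sub_sq_real]
    rw [inner_sub_right, real_inner_self_eq_norm_sq] at h2
    linarith
  have h4 := aux_pairs n l hl.2
  have h5 := aux_pairs s l hl.2
  have h6 : ∑ i, ∑ j, l i * l j * ‖n i - n j‖ ^ 2 ≤ ∑ i, ∑ j, l i * l j * ‖s i - s j‖ ^ 2 := by
    refine Finset.sum_le_sum fun i _ => Finset.sum_le_sum fun j _ => ?_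
    apply mul_le_mul_of_nonneg_left _ (mul_nonneg (hl.1 i) (hl.1 j))
    exact pow_le_pow_left₀ (norm_nonneg _) (h i j) 2
  have h7 : L = ∑ i, l i * ‖n i‖ ^ 2 - ∑ i, l i * ‖s i‖ ^ 2 := by
    rw [hL, ← Finset.sum_sub_distrib]
    exact Finset.sum_congr rfl fun i _ => by ring
  have h8 : ‖p - n k‖ ^ 2 ≤ ‖s k‖ ^ 2 := by nlinarith [sq_nonneg ‖∑ i, l i • s i‖]
  exact (sq_le_sq₀ (norm_nonneg _) (norm_nonneg _)).1 h8

lemma balls_inter {ι : Type*} [Nonempty ι] (n : ι → X) (r : ι → ℝ)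
    (h : ∀ F : Finset ι, ∃ p, ∀ i ∈ F, ‖p - n i‖ ≤ r i) :
    ∃ p, ∀ i, ‖p - n i‖ ≤ r i := by
  classical
  let K : ι → Set (WeakDual ℝ X) := fun i =>
    WeakDual.toStrongDual ⁻¹' Metric.closedBall (InnerProductSpace.toDual ℝ X (n i)) (r i)
  have hK : ∀ i, IsCompact (K i) := fun i => WeakDual.isCompact_closedBall _ _
  have hKc : ∀ i, IsClosed (K i) := fun i => WeakDual.isClosed_closedBall _ _
  have key : ∀ p i, ‖p - n i‖ ≤ r i ↔
      StrongDual.toWeakDual (InnerProductSpace.toDual ℝ X p) ∈ K i := by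
    intro p i
    simp only [K, mem_preimage, mem_closedBall_iff_norm]
    rw [← LinearIsometryEquiv.norm_map (InnerProductSpace.toDual ℝ X) (p - n i), map_sub]
    rfl
  obtain ⟨i0⟩ := ‹Nonempty ι›
  obtain ⟨f, -, hf⟩ := (hK i0).inter_iInter_nonempty K hKc (by
    intro u
    obtain ⟨p, hp⟩ := h (insert i0 u)
    refine ⟨_, (key p i0).1 (hp _ (by simp)), ?_⟩
    simp only [mem_iInter]
    intro i hi
    exact (key p i).1 (hp _ (by simp [hi])))
  simp only [mem_iInter] at hf
  refine ⟨(InnerProductSpace.toDual ℝ X).symm (WeakDual.toStrongDual f), fun i => ?_⟩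
  rw [key, LinearIsometryEquiv.apply_symm_apply]
  exact hf i

lemma aux_inner4 (a b : X) : 4 * ⟪a, b⟫ = ‖a + b‖ ^ 2 - ‖a - b‖ ^ 2 := by
  rw [norm_add_sq_real, norm_sub_sq_real]; ring

lemma minty (M : Set (X × X)) (hM : ∀ p ∈ M, ∀ q ∈ M, 0 ≤ ⟪p.2 - q.2, p.1 - q.1⟫) (y : X) :
    ∃ x, ∀ p ∈ M, 0 ≤ ⟪y - x - p.2, x - p.1⟫ := by
  classical
  rcases M.eq_empty_or_nonempty with rfl | ⟨m0, hm0⟩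
  · exact ⟨0, by simp⟩
  have : Nonempty M := ⟨⟨m0, hm0⟩⟩
  obtain ⟨p, hp⟩ := balls_inter (ι := M) (fun m => m.1.1 - m.1.2)
    (fun m => ‖m.1.1 + m.1.2 - y‖) (by
      intro F
      rcases F.eq_empty_or_nonempty with rfl | ⟨f0, hf0⟩
      · exact ⟨0, by simp⟩
      have : Nonempty F := ⟨⟨f0, hf0⟩⟩
      obtain ⟨p, hp⟩ := finite_balls (ι := F) (fun m => m.1.1.1 - m.1.1.2)
        (fun m => m.1.1.1 + m.1.1.2 - y) (by
          intro i j
          have h := hM _ i.1.2 _ j.1.2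
          have h4 := aux_inner4 (i.1.1.2 - j.1.1.2) (i.1.1.1 - j.1.1.1)
          rw [← sq_le_sq₀ (norm_nonneg _) (norm_nonneg _)]
          have e1 : i.1.1.1 - i.1.1.2 - (j.1.1.1 - j.1.1.2) =
            -((i.1.1.2 - j.1.1.2) - (i.1.1.1 - j.1.1.1)) := by abel
          have e2 : i.1.1.1 + i.1.1.2 - y - (j.1.1.1 + j.1.1.2 - y) =
            (i.1.1.2 - j.1.1.2) + (i.1.1.1 - j.1.1.1) := by abel
          rw [e1, e2, norm_neg]
          linarith)
      exact ⟨p, fun i hi => hp ⟨i, hi⟩⟩)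
  refine ⟨(1 / 2 : ℝ) • (y + p), fun m hm => ?_⟩
  have h1 := hp ⟨m, hm⟩
  rw [← sq_le_sq₀ (norm_nonneg _) (norm_nonneg _)] at h1
  have h4 := aux_inner4 (y - (1 / 2 : ℝ) • (y + p) - m.2) ((1 / 2 : ℝ) • (y + p) - m.1)
  have e1 : y - (1 / 2 : ℝ) • (y + p) - m.2 + ((1 / 2 : ℝ) • (y + p) - m.1) =
    -(m.1 + m.2 - y) := by abel
  have e2 : y - (1 / 2 : ℝ) • (y + p) - m.2 - ((1 / 2 : ℝ) • (y + p) - m.1) =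
    -(p - (m.1 - m.2)) := by module
  rw [e1, e2, norm_neg, norm_neg] at h4
  simp only at h1
  linarith

lemma strMax_solve (σ : ℝ) (G : X → Set X) (hG : StrMaxMono σ G) (y : X) :
    ∃ x, y - x + σ • x ∈ G x := by
  obtain ⟨x, hx⟩ := minty ((fun p : X × X => (p.1, p.2 - σ • p.1)) '' gph G) (by
    rintro _ ⟨p, hp, rfl⟩ _ ⟨q, hq, rfl⟩
    have := hG.1 p hp q hq
    simp only
    rw [show p.2 - σ • p.1 - (q.2 - σ • q.1) = (p.2 - q.2) - σ • (p.1 - q.1) by module,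
      inner_sub_left, real_inner_smul_left, real_inner_self_eq_norm_sq]
    linarith) y
  have hx' : ∀ q ∈ gph G, σ * ‖x - q.1‖ ^ 2 ≤ ⟪y - x + σ • x - q.2, x - q.1⟫ := by
    intro q hq
    have := hx _ ⟨q, hq, rfl⟩
    simp only at this
    rw [show y - x - (q.2 - σ • q.1) = (y - x + σ • x - q.2) - σ • (x - q.1) by module,
      inner_sub_left, real_inner_smul_left, real_inner_self_eq_norm_sq] at this
    linarith
  let S : X → Set X := fun a => {b | (a, b) ∈ gph G ∨ (a, b) = (x, y - x + σ • x)}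
  have hS : StrMono σ S := by
    rintro p (hp | hp) q (hq | hq)
    · exact hG.1 p hp q hq
    · rw [show q = (x, y - x + σ • x) from hq]
      have := hx' p hp
      rw [norm_sub_rev, ← neg_sub x p.1, ← neg_sub _ p.2, inner_neg_neg]
      exact this
    · rw [show p = (x, y - x + σ • x) from hp]
      exact hx' q hq
    · rw [show p = (x, y - x + σ • x) from hp, show q = (x, y - x + σ • x) from hq]
      simp
  have := hG.2 S hS (fun p hp => Or.inl hp)
  have h2 : (x, y - x + σ • x) ∈ gph S := Or.inr rfl
  rw [this] at h2
  exact ⟨x, h2⟩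

lemma forward (σ : ℝ) (hσ : 0 < σ) (T : X → Set X) (xbar vbar : X)
    (h : LocStrMaxBAt σ T xbar vbar) :
      ((∃ r > 0, LocHypoAt r T xbar vbar) ∧
        ∃ W ∈ 𝓝 ((xbar, vbar) : X × X), ∀ p ∈ gph T ∩ W, ∀ w z : X,
          z ∈ coderiv T p.1 p.2 w → σ * ‖w‖ ^ 2 ≤ ⟪z, w⟫) := by
  obtain ⟨U, hU, V, hV, G, hG, hGT⟩ := h
  refine ⟨⟨1, one_pos, U ×ˢ V, prod_mem_nhds hU hV, ?_⟩, interior U ×ˢ interior V,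
    prod_mem_nhds (interior_mem_nhds.2 hU) (interior_mem_nhds.2 hV), ?_⟩
  · rw [HypoOn, ← hGT]
    intro p hp q hq
    have := hG.1 p hp.1 q hq.1
    have h2 : 0 ≤ σ * ‖p.1 - q.1‖ ^ 2 := by positivity
    nlinarith [sq_nonneg ‖p.1 - q.1‖]
  · rintro ⟨u, v⟩ ⟨hp, hu, hv⟩ w z hz
    simp only at hu hv hz ⊢
    have hUV : U ×ˢ V ∈ 𝓝 (u, v) :=
      prod_mem_nhds (mem_interior_iff_mem_nhds.1 hu) (mem_interior_iff_mem_nhds.1 hv)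
    have huvG : v ∈ G u := by
      have : ((u, v) : X × X) ∈ gph G ∩ U ×ˢ V := by
        rw [hGT]; exact ⟨hp, mem_of_mem_nhds hUV⟩
      exact this.1
    set z' := z - σ • w with hz'
    set d := z' - w with hd
    have key : ∀ ε > 0, ‖d‖ ^ 2 ≤ ‖z' + w‖ * ‖d‖ + ε * (2 * ((2 + σ) * ‖d‖)) := by
      intro ε hε
      have h1 := hz ε hε
      rw [eventually_nhdsWithin_iff] at h1
      obtain ⟨δ, hδ, hball⟩ := Metric.eventually_nhds_iff.1 (h1.and hUV)
      set t : ℝ := δ / (2 * ((1 + σ) * ‖d‖ + 1)) with ht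
      have htpos : 0 < t := by positivity
      obtain ⟨x, hx⟩ := strMax_solve σ G hG (u + (v - σ • u) + t • d)
      set v' := u + (v - σ • u) + t • d - x + σ • x with hv'
      set a := x - u with ha
      set b := t • d - a with hb
      have hc : v' - v = b + σ • a := by rw [hv', hb, ha]; module
      have hab : 0 ≤ ⟪a, b⟫ := by
        have := hG.1 (x, v') hx (u, v) huvG
        simp only at this
        rw [hc, ← ha, inner_add_left, real_inner_smul_left, real_inner_self_eq_norm_sq,
          real_inner_comm] at this
        linarith
      have hsum : a + b = t • d := by rw [hb]; abel
      have hsq : ‖a‖ ^ 2 + 2 * ⟪a, b⟫ + ‖b‖ ^ 2 = (t * ‖d‖) ^ 2 := by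
        rw [← norm_add_sq_real, hsum, norm_smul, Real.norm_of_nonneg htpos.le]
      have htd : 0 ≤ t * ‖d‖ := by positivity
      have hna : ‖a‖ ≤ t * ‖d‖ := by
        rw [← sq_le_sq₀ (norm_nonneg _) htd]; nlinarith [sq_nonneg ‖b‖]
      have hnb : ‖b‖ ≤ t * ‖d‖ := by
        rw [← sq_le_sq₀ (norm_nonneg _) htd]; nlinarith [sq_nonneg ‖a‖]
      have hnm : ‖a - b‖ ≤ t * ‖d‖ := by
        rw [← sq_le_sq₀ (norm_nonneg _) htd, norm_sub_sq_real]; linarith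
      have hnc : ‖v' - v‖ ≤ (1 + σ) * (t * ‖d‖) := by
        rw [hc]
        refine (norm_add_le _ _).trans ?_
        rw [norm_smul, Real.norm_of_nonneg hσ.le]
        nlinarith
      have hsmall : (1 + σ) * (t * ‖d‖) < δ := by
        have : t * (2 * ((1 + σ) * ‖d‖ + 1)) = δ := by rw [ht]; field_simp
        have h3 : 0 ≤ t * ((1 + σ) * ‖d‖) := by positivity
        nlinarith
      have hdist : dist ((x, v') : X × X) (u, v) < δ := by
        rw [Prod.dist_eq, max_lt_iff]
        simp only [dist_eq_norm]
        refine ⟨lt_of_le_of_lt (hna.trans ?_) hsmall, lt_of_le_of_lt hnc hsmall⟩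
        nlinarith
      obtain ⟨h2, h3⟩ := hball hdist
      have hmem : ((x, v') : X × X) ∈ gph T := by
        have : ((x, v') : X × X) ∈ gph T ∩ U ×ˢ V := by rw [← hGT]; exact ⟨hx, h3⟩
        exact this.1
      have h4 := h2 hmem
      simp only at h4
      rw [← ha, inner_neg_left] at h4
      have h5 : ⟪z, a⟫ - ⟪w, v' - v⟫ = (⟪d, a + b⟫ + ⟪z' + w, a - b⟫) / 2 := by
        rw [hc, hd, hz']
        simp only [inner_sub_left, inner_add_left, inner_add_right, inner_sub_right,
          real_inner_smul_left, real_inner_smul_right]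
        ring
      rw [hsum, real_inner_smul_right, real_inner_self_eq_norm_sq] at h5
      have h6 : -(‖z' + w‖ * (t * ‖d‖)) ≤ ⟪z' + w, a - b⟫ := by
        have := abs_le.1 (abs_real_inner_le_norm (z' + w) (a - b))
        have h7 := mul_le_mul_of_nonneg_left hnm (norm_nonneg (z' + w))
        linarith [this.1]
      have h8 : ε * (‖a‖ + ‖v' - v‖) ≤ ε * ((2 + σ) * (t * ‖d‖)) := by
        apply mul_le_mul_of_nonneg_left _ hε.le
        linarith
      have h9 : t * ‖d‖ ^ 2 ≤ t * (‖z' + w‖ * ‖d‖ + ε * (2 * ((2 + σ) * ‖d‖))) := by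
        nlinarith
      exact le_of_mul_le_mul_left h9 htpos
    have hle : ‖d‖ ^ 2 ≤ ‖z' + w‖ * ‖d‖ := by
      refine le_of_forall_pos_le_add fun η hη => ?_
      have hC : 0 < 2 * ((2 + σ) * ‖d‖) + 1 := by positivity
      have := key (η / (2 * ((2 + σ) * ‖d‖) + 1)) (by positivity)
      refine this.trans (add_le_add le_rfl ?_)
      rw [div_mul_eq_mul_div, div_le_iff₀ hC]
      nlinarith
    have hle2 : ‖d‖ ≤ ‖z' + w‖ := by
      rcases (norm_nonneg d).eq_or_lt with h0 | h0
      · rw [← h0]; exact norm_nonneg _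
      · rw [sq] at hle; exact le_of_mul_le_mul_right hle h0
    have h4 := aux_inner4 z' w
    rw [← hd] at h4
    have := pow_le_pow_left₀ (norm_nonneg _) hle2 2
    have h5 : 0 ≤ ⟪z', w⟫ := by linarith
    rw [hz', inner_sub_left, real_inner_smul_left, real_inner_self_eq_norm_sq] at h5
    linarith

lemma vp (S : Set X) (hS : IsClosed S) (hne : S.Nonempty) (M : ℝ) (hM : ∀ s ∈ S, ‖s‖ ≤ M)
    (g : X → ℝ) (hg : ContinuousOn g S) (m : ℝ) (hm : ∀ s ∈ S, m ≤ g s) (ε : ℝ) (hε : 0 < ε) :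
    ∃ s ∈ S, ∃ e : X, ‖e‖ ≤ ε ∧
      ∀ s' ∈ S, g s ≤ g s' + ⟪e, s' - s⟫ + ε * ‖s' - s‖ ^ 2 := by
  have hM0 : 0 ≤ M := by
    obtain ⟨s, hs⟩ := hne
    exact (norm_nonneg s).trans (hM s hs)
  let Φ : ℝ × X → X → ℝ := fun p s => g s + p.1 * ‖s‖ ^ 2 + ⟪p.2, s⟫
  have hinf : ∀ p, ∃ I : ℝ, (∀ s ∈ S, I ≤ Φ p s) ∧ ∀ η > 0, ∃ s ∈ S, Φ p s < I + η := by
    intro p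
    have hbdd : BddBelow (Φ p '' S) := by
      refine ⟨m - |p.1| * M ^ 2 - ‖p.2‖ * M, ?_⟩
      rintro _ ⟨s, hs, rfl⟩
      have h1 := hm s hs
      have h2 := (abs_le.1 (abs_real_inner_le_norm p.2 s)).1
      have h3 := mul_le_mul_of_nonneg_left (hM s hs) (norm_nonneg p.2)
      have h4 := mul_le_mul_of_nonneg_left (pow_le_pow_left₀ (norm_nonneg s) (hM s hs) 2)
        (abs_nonneg p.1)
      have h5 := mul_le_mul_of_nonneg_right (neg_abs_le p.1) (sq_nonneg ‖s‖)
      simp only [Φ]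
      linarith
    refine ⟨sInf (Φ p '' S), fun s hs => csInf_le hbdd ⟨s, hs, rfl⟩, fun η hη => ?_⟩
    obtain ⟨_, ⟨s, hs, rfl⟩, h⟩ := exists_lt_of_csInf_lt (hne.image (Φ p))
      (show sInf (Φ p '' S) < sInf (Φ p '' S) + η by linarith)
    exact ⟨s, hs, h⟩
  let U : ℕ → Set (ℝ × X) := fun n => {p | ∃ δ > 0, ∃ s0 ∈ S, ∀ s ∈ S,
    Φ p s ≤ Φ p s0 + δ → ‖s - s0‖ ≤ 1 / ((n : ℝ) + 1)}
  have hUo : ∀ n, IsOpen (U n) := by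
    intro n
    rw [Metric.isOpen_iff]
    rintro p ⟨δ, hδ, s0, hs0, h⟩
    refine ⟨δ / (4 * (M ^ 2 + M + 1)), by positivity, ?_⟩
    intro p' hp'
    have hclose : ∀ s ∈ S, |Φ p' s - Φ p s| ≤ δ / 4 := by
      intro s hs
      have e1 : Φ p' s - Φ p s = (p'.1 - p.1) * ‖s‖ ^ 2 + ⟪p'.2 - p.2, s⟫ := by
        simp only [Φ, inner_sub_left]; ring
      rw [Metric.mem_ball, Prod.dist_eq, max_lt_iff, Real.dist_eq, dist_eq_norm] at hp'
      rw [e1]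
      refine (abs_add_le _ _).trans ?_
      rw [abs_mul, abs_of_nonneg (sq_nonneg ‖s‖)]
      have h1 := abs_real_inner_le_norm (p'.2 - p.2) s
      have hA : 0 < M ^ 2 + M + 1 := by positivity
      set k := δ / (4 * (M ^ 2 + M + 1)) with hk
      have hk0 : 0 < k := by positivity
      have hk1 : k * (M ^ 2 + M + 1) = δ / 4 := by rw [hk]; field_simp
      have h2 : |p'.1 - p.1| * ‖s‖ ^ 2 ≤ k * M ^ 2 :=
        mul_le_mul hp'.1.le (pow_le_pow_left₀ (norm_nonneg s) (hM s hs) 2) (by positivity) hk0.le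
      have h3 : ‖p'.2 - p.2‖ * ‖s‖ ≤ k * M :=
        mul_le_mul hp'.2.le (hM s hs) (by positivity) hk0.le
      nlinarith
    refine ⟨δ / 2, by positivity, s0, hs0, fun s hs hle => h s hs ?_⟩
    have h1 := abs_le.1 (hclose s hs)
    have h2 := abs_le.1 (hclose s0 hs0)
    linarith [h1.1, h2.2]
  have hUd : ∀ n, Dense (U n) := by
    intro n
    rw [Metric.dense_iff]
    intro p η hη
    set τ := η / (2 * (1 + 2 * M)) with hτ
    have hτ0 : 0 < τ := by positivity
    have hτ1 : τ * (1 + 2 * M) = η / 2 := by rw [hτ]; field_simp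
    obtain ⟨I, hI, hI2⟩ := hinf p
    obtain ⟨s0, hs0, hlt⟩ := hI2 (τ * (1 / ((n : ℝ) + 1)) ^ 2 / 2) (by positivity)
    refine ⟨(p.1 + τ, p.2 - (2 * τ) • s0), ?_, τ * (1 / ((n : ℝ) + 1)) ^ 2 / 2, by positivity,
      s0, hs0, ?_⟩
    · rw [Metric.mem_ball, Prod.dist_eq, max_lt_iff, Real.dist_eq, dist_eq_norm]
      simp only [add_sub_cancel_left, sub_sub_cancel_left, norm_neg, norm_smul, Real.norm_eq_abs]
      rw [abs_of_pos hτ0, abs_of_pos (by positivity : 0 < 2 * τ)]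
      have := mul_le_mul_of_nonneg_left (hM s0 hs0) hτ0.le
      have : 0 ≤ τ * M := by positivity
      constructor <;> nlinarith
    · intro s hs hle
      have e1 : ∀ x, Φ (p.1 + τ, p.2 - (2 * τ) • s0) x =
          Φ p x + τ * ‖x - s0‖ ^ 2 - τ * ‖s0‖ ^ 2 := by
        intro x
        simp only [Φ]
        rw [norm_sub_sq_real, inner_sub_left, real_inner_smul_left, real_inner_comm x s0]; ring
      rw [e1, e1, sub_self, norm_zero] at hle
      have := hI s hs
      have h2 : τ * ‖s - s0‖ ^ 2 ≤ τ * (1 / ((n : ℝ) + 1)) ^ 2 := by linarith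
      have h3 := le_of_mul_le_mul_left h2 hτ0
      exact (sq_le_sq₀ (norm_nonneg _) (by positivity)).1 h3
  have hdense := dense_iInter_of_isOpen hUo hUd
  set ε' := min ε (ε / (1 + 2 * M)) with hε'
  have hε'0 : 0 < ε' := by positivity
  obtain ⟨p, hpb, hpU⟩ := Metric.dense_iff.1 hdense (0, 0) ε' hε'0
  rw [Metric.mem_ball, Prod.dist_eq, max_lt_iff, Real.dist_eq, dist_eq_norm] at hpb
  simp only [sub_zero] at hpb
  rw [mem_iInter] at hpU
  obtain ⟨I, hI, hI2⟩ := hinf p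
  have hseq : ∀ k : ℕ, ∃ s ∈ S, Φ p s < I + 1 / ((k : ℝ) + 1) := fun k => hI2 _ (by positivity)
  choose t htS ht using hseq
  have hcau : CauchySeq t := by
    rw [Metric.cauchySeq_iff']
    intro η hη
    obtain ⟨n, hn⟩ := exists_nat_one_div_lt (half_pos hη)
    obtain ⟨δ, hδ, s0, hs0, h⟩ := hpU n
    obtain ⟨N, hN⟩ := exists_nat_one_div_lt hδ
    have hk : ∀ k ≥ N, ‖t k - s0‖ < η / 2 := by
      intro k hk
      refine lt_of_le_of_lt (h _ (htS k) ?_) hn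
      have h1 : 1 / ((k : ℝ) + 1) ≤ 1 / ((N : ℝ) + 1) := by
        apply one_div_le_one_div_of_le (by positivity)
        have : (N : ℝ) ≤ k := by exact_mod_cast hk
        linarith
      linarith [ht k, hI s0 hs0]
    refine ⟨N, fun k hkN => ?_⟩
    have h1 := hk k hkN
    have h2 := hk N le_rfl
    rw [← dist_eq_norm] at h1 h2
    have := dist_triangle_right (t k) (t N) s0
    linarith
  obtain ⟨s, hs⟩ := cauchySeq_tendsto_of_complete hcau
  have hsS : s ∈ S := hS.mem_of_tendsto hs (Eventually.of_forall htS)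
  have hΦc : ContinuousOn (Φ p) S := by
    simp only [Φ]
    exact (hg.add (by fun_prop)).add (by fun_prop)
  have hlim : Tendsto (fun k => Φ p (t k)) atTop (𝓝 (Φ p s)) :=
    (hΦc s hsS).tendsto.comp (tendsto_nhdsWithin_iff.2 ⟨hs, Eventually.of_forall htS⟩)
  have hlim2 : Tendsto (fun k : ℕ => I + 1 / ((k : ℝ) + 1)) atTop (𝓝 (I + 0)) :=
    tendsto_const_nhds.add tendsto_one_div_add_atTop_nhds_zero_nat
  have hle : Φ p s ≤ I := by
    have := le_of_tendsto_of_tendsto' hlim hlim2 (fun k => (ht k).le)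
    simpa using this
  have hc : |p.1| ≤ ε := hpb.1.le.trans (min_le_left _ _)
  refine ⟨s, hsS, p.2 + (2 * p.1) • s, ?_, fun s' hs' => ?_⟩
  · refine (norm_add_le _ _).trans ?_
    rw [norm_smul, Real.norm_eq_abs, abs_mul, abs_two]
    have h1 : ε' * (1 + 2 * M) ≤ ε := by
      rw [← le_div_iff₀ (by positivity)]; exact min_le_right _ _
    have h2 : |p.1| * ‖s‖ ≤ ε' * M := mul_le_mul hpb.1.le (hM s hsS) (norm_nonneg _) hε'0.le
    nlinarith [hpb.2]
  · have h1 := hle.trans (hI s' hs')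
    simp only [Φ] at h1
    have h2 : ‖s'‖ ^ 2 = ‖s‖ ^ 2 + 2 * ⟪s, s' - s⟫ + ‖s' - s‖ ^ 2 := by
      rw [← norm_add_sq_real, add_sub_cancel]
    have h3 : ⟪p.2, s'⟫ = ⟪p.2, s⟫ + ⟪p.2, s' - s⟫ := by
      rw [← inner_add_right, add_sub_cancel]
    rw [inner_add_left, real_inner_smul_left]
    have h4 : p.1 * ‖s' - s‖ ^ 2 ≤ ε * ‖s' - s‖ ^ 2 :=
      mul_le_mul_of_nonneg_right ((le_abs_self _).trans hc) (sq_nonneg _)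
    rw [h2, h3] at h1
    linarith

lemma mv1 (h : X → ℝ) (y0 : X) (R K l : ℝ) (hR : 0 < R) (hK : 0 ≤ K) (hl0 : 0 ≤ l)
    (hlip : ∀ a ∈ Metric.ball y0 (2 * R), ∀ b ∈ Metric.ball y0 (2 * R),
      |h a - h b| ≤ l * ‖a - b‖)
    (hsub : ∀ y ∈ Metric.ball y0 (2 * R), ∀ (w : X) (C : ℝ),
      (∀ᶠ y' in 𝓝 y, h y + ⟪w, y' - y⟫ - C * ‖y' - y‖ ^ 2 ≤ h y') → ‖w‖ ≤ K)
    (K' : ℝ) (hK' : K < K') (a : X) (ha : a ∈ Metric.ball y0 R)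
    (b : X) (hb : b ∈ Metric.ball y0 (2 * R)) :
    h a ≤ h b + K' * ‖b - a‖ + (2 * l / R) * ‖b - a‖ ^ 2 := by
  set C := 2 * l / R with hC
  have hC0 : 0 ≤ C := by positivity
  have hCR : C * R = 2 * l := by rw [hC]; field_simp
  have ha2 : a ∈ Metric.ball y0 (2 * R) := Metric.ball_subset_ball (by linarith) ha
  have hfar : ∀ y ∈ Metric.ball y0 (2 * R), R / 2 ≤ ‖y - a‖ →
      h a ≤ h y + K' * ‖y - a‖ + C * ‖y - a‖ ^ 2 := by
    intro y hy hyR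
    have h1 := (abs_le.1 (hlip y hy a ha2)).1
    have h2 : l * ‖y - a‖ ≤ C * ‖y - a‖ ^ 2 := by
      have : l ≤ C * ‖y - a‖ := by nlinarith
      nlinarith [norm_nonneg (y - a)]
    have : 0 ≤ K' * ‖y - a‖ := mul_nonneg (by linarith) (norm_nonneg _)
    linarith
  by_cases hbR : R / 2 ≤ ‖b - a‖
  · exact hfar b hb hbR
  by_contra hcon
  push Not at hcon hbR
  set ψ : X → ℝ := fun y => h y + K' * ‖y - a‖ + C * ‖y - a‖ ^ 2 with hψ
  set γ := h a - ψ b with hγ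
  have hγ0 : 0 < γ := by simp only [hγ, hψ]; linarith
  have hsubset : Metric.closedBall a R ⊆ Metric.ball y0 (2 * R) := by
    apply Metric.closedBall_subset_ball'
    rw [Metric.mem_ball] at ha
    linarith
  have hhc : ContinuousOn h (Metric.closedBall a R) := by
    have : LipschitzOnWith ⟨l, hl0⟩ h (Metric.ball y0 (2 * R)) := by
      apply LipschitzOnWith.of_dist_le_mul
      intro x hx y hy
      rw [Real.dist_eq, dist_eq_norm]
      exact hlip x hx y hy
    exact this.continuousOn.mono hsubset
  set ε := min (γ / (2 * (2 * R + (2 * R) ^ 2))) ((K' - K) / 2) with hε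
  have hε0 : 0 < ε := by
    have : 0 < K' - K := by linarith
    positivity
  obtain ⟨s, hs, e, he, hmin⟩ := vp (Metric.closedBall a R) Metric.isClosed_closedBall
    ⟨a, by simp [hR.le]⟩ (‖a‖ + R) (by
      intro s hs
      rw [mem_closedBall_iff_norm] at hs
      have := norm_add_le a (s - a)
      rw [add_sub_cancel] at this
      linarith) ψ ((hhc.add (by fun_prop)).add (by fun_prop)) (h a - l * R) (by
      intro s hs
      have h1 := (abs_le.1 (hlip s (hsubset hs) a ha2)).1
      rw [mem_closedBall_iff_norm] at hs
      have h2 := mul_le_mul_of_nonneg_left hs hl0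
      have : 0 ≤ K' * ‖s - a‖ := mul_nonneg (by linarith) (norm_nonneg _)
      have : 0 ≤ C * ‖s - a‖ ^ 2 := by positivity
      simp only [hψ]
      linarith) ε hε0
  have hs' := hs
  rw [mem_closedBall_iff_norm] at hs'
  have hψs : ψ s < h a := by
    have h1 := hmin b (by rw [mem_closedBall_iff_norm]; linarith)
    have hbs : ‖b - s‖ ≤ 2 * R := by
      have := norm_sub_le (b - a) (s - a)
      rw [sub_sub_sub_cancel_right] at this
      linarith
    have h2 := (abs_le.1 (abs_real_inner_le_norm e (b - s))).2
    have h3 : ‖e‖ * ‖b - s‖ ≤ ε * (2 * R) := mul_le_mul he hbs (norm_nonneg _) hε0.le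
    have h4 : ε * ‖b - s‖ ^ 2 ≤ ε * (2 * R) ^ 2 :=
      mul_le_mul_of_nonneg_left (pow_le_pow_left₀ (norm_nonneg _) hbs 2) hε0.le
    have h5 : ε * (2 * (2 * R + (2 * R) ^ 2)) ≤ γ := by
      rw [← le_div_iff₀ (by positivity)]; exact min_le_left _ _
    linarith
  have hu1 : ‖s - a‖ < R / 2 := by
    by_contra hh
    push Not at hh
    have := hfar s (hsubset hs) hh
    simp only [hψ] at hψs
    linarith
  have hu0 : 0 < ‖s - a‖ := by
    rw [norm_pos_iff, sub_ne_zero]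
    rintro rfl
    simp [hψ] at hψs
  set u := ‖s - a‖ with hu
  set κ := K' / (2 * u) + C with hκ
  have hκ0 : 0 ≤ 2 * κ := by
    have : 0 < K' := by linarith
    positivity
  have hκu : 2 * κ * u = K' + 2 * C * u := by rw [hκ]; field_simp
  have hnw := hsub s (hsubset hs) (-((2 * κ) • (s - a) + e)) (κ + ε) (by
    have hnb : Metric.closedBall a R ∈ 𝓝 s :=
      Filter.mem_of_superset (Metric.isOpen_ball.mem_nhds (by
        rw [mem_ball_iff_norm]; linarith : s ∈ Metric.ball a R)) Metric.ball_subset_closedBall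
    filter_upwards [hnb] with y' hy'
    have h1 := hmin y' hy'
    simp only [hψ] at h1
    rw [← hu] at h1
    set u' := ‖y' - a‖ with hu'
    have h2 : u' ^ 2 - u ^ 2 = 2 * ⟪s - a, y' - s⟫ + ‖y' - s‖ ^ 2 := by
      have : u' ^ 2 = u ^ 2 + 2 * ⟪s - a, y' - s⟫ + ‖y' - s‖ ^ 2 := by
        rw [hu, ← norm_add_sq_real, hu']; congr 2; abel
      linarith
    have h3 : K' * u' - K' * u ≤ K' / (2 * u) * (u' ^ 2 - u ^ 2) := by
      rw [div_mul_eq_mul_div, le_div_iff₀ (by positivity)]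
      have : 0 ≤ K' * (u' - u) ^ 2 := mul_nonneg (by linarith) (sq_nonneg _)
      nlinarith
    have h4 : h s ≤ h y' + κ * (u' ^ 2 - u ^ 2) + ⟪e, y' - s⟫ + ε * ‖y' - s‖ ^ 2 := by
      rw [hκ]; linarith
    rw [h2] at h4
    rw [inner_neg_left, inner_add_left, real_inner_smul_left]
    linarith)
  rw [norm_neg] at hnw
  have h6 : 2 * κ * u - ‖e‖ ≤ ‖(2 * κ) • (s - a) + e‖ := by
    have := norm_sub_le ((2 * κ) • (s - a) + e) e
    rw [add_sub_cancel_right, norm_smul, ← hu, Real.norm_of_nonneg hκ0] at this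
    linarith
  have h7 : ε ≤ (K' - K) / 2 := min_le_right _ _
  have h8 : 0 ≤ 2 * C * u := by positivity
  linarith

lemma mv (h : X → ℝ) (y0 : X) (R K l : ℝ) (hR : 0 < R) (hK : 0 ≤ K) (hl0 : 0 ≤ l)
    (hlip : ∀ a ∈ Metric.ball y0 (2 * R), ∀ b ∈ Metric.ball y0 (2 * R),
      |h a - h b| ≤ l * ‖a - b‖)
    (hsub : ∀ y ∈ Metric.ball y0 (2 * R), ∀ (w : X) (C : ℝ),
      (∀ᶠ y' in 𝓝 y, h y + ⟪w, y' - y⟫ - C * ‖y' - y‖ ^ 2 ≤ h y') → ‖w‖ ≤ K)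
    (a : X) (ha : a ∈ Metric.ball y0 R) (b : X) (hb : b ∈ Metric.ball y0 R) :
    h a - h b ≤ K * ‖a - b‖ := by
  set C := 2 * l / R with hC
  set D := ‖b - a‖ with hD
  have hN : ∀ K' > K, ∀ N : ℕ, h a - h b ≤ K' * D + C * D ^ 2 * (1 / ((N : ℝ) + 1)) := by
    intro K' hK' N
    have hN0 : (0 : ℝ) < (N : ℝ) + 1 := by positivity
    set τ : ℝ := 1 / ((N : ℝ) + 1) with hτ
    have hτ0 : 0 < τ := by positivity
    have hτN : ((N : ℝ) + 1) * τ = 1 := by rw [hτ]; field_simp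
    have hmem : ∀ k : ℕ, k ≤ N + 1 → a + ((k : ℝ) * τ) • (b - a) ∈ Metric.ball y0 R := by
      intro k hk
      have hk' : (k : ℝ) ≤ (N : ℝ) + 1 := by exact_mod_cast hk
      apply (convex_ball y0 R).add_smul_sub_mem ha hb
      refine ⟨by positivity, ?_⟩
      rw [← hτN]
      exact mul_le_mul_of_nonneg_right hk' hτ0.le
    have hind : ∀ k : ℕ, k ≤ N + 1 →
        h a - h (a + ((k : ℝ) * τ) • (b - a)) ≤ k * (K' * (τ * D) + C * (τ * D) ^ 2) := by
      intro k
      induction k with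
      | zero => intro _; simp
      | succ k ih =>
        intro hk
        have h1 := ih (by omega)
        have h2 := mv1 h y0 R K l hR hK hl0 hlip hsub K' hK' _ (hmem k (by omega)) _
          (Metric.ball_subset_ball (by linarith) (hmem (k + 1) hk))
        have e1 : a + (((k + 1 : ℕ) : ℝ) * τ) • (b - a) - (a + ((k : ℝ) * τ) • (b - a)) =
            τ • (b - a) := by push_cast; module
        rw [e1, norm_smul, Real.norm_of_nonneg hτ0.le, ← hD, ← hC] at h2
        have e2 : ((k + 1 : ℕ) : ℝ) * (K' * (τ * D) + C * (τ * D) ^ 2) =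
          k * (K' * (τ * D) + C * (τ * D) ^ 2) + (K' * (τ * D) + C * (τ * D) ^ 2) := by
          push_cast; ring
        rw [e2]
        linarith
    have h1 := hind (N + 1) le_rfl
    push_cast at h1
    rw [hτN, one_smul, add_sub_cancel] at h1
    calc h a - h b ≤ ((N : ℝ) + 1) * (K' * (τ * D) + C * (τ * D) ^ 2) := h1
      _ = (((N : ℝ) + 1) * τ) * (K' * D + C * D ^ 2 * τ) := by ring
      _ = _ := by rw [hτN, one_mul]
  rw [norm_sub_rev, ← hD]
  have h1 : ∀ K' > K, h a - h b ≤ K' * D := by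
    intro K' hK'
    have hlim : Tendsto (fun N : ℕ => K' * D + C * D ^ 2 * (1 / ((N : ℝ) + 1))) atTop
        (𝓝 (K' * D + C * D ^ 2 * 0)) :=
      tendsto_const_nhds.add (tendsto_const_nhds.mul tendsto_one_div_add_atTop_nhds_zero_nat)
    have := ge_of_tendsto' hlim (hN K' hK')
    simpa using this
  refine le_of_forall_pos_le_add fun η hη => ?_
  have hD0 : 0 ≤ D := norm_nonneg _
  have h2 := h1 (K + η / (D + 1)) (by have : 0 < η / (D + 1) := by positivity
                                      linarith)
  have h3 : η / (D + 1) * D ≤ η := by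
    rw [div_mul_eq_mul_div, div_le_iff₀ (by positivity)]; nlinarith
  linarith

lemma extend_strMono (σ : ℝ) (M : Set (X × X))
    (hM : ∀ p ∈ M, ∀ q ∈ M, σ * ‖p.1 - q.1‖ ^ 2 ≤ ⟪p.2 - q.2, p.1 - q.1⟫) :
    ∃ G : X → Set X, StrMaxMono σ G ∧ M ⊆ gph G := by
  obtain ⟨N, hMN, hN⟩ := zorn_subset_nonempty
    {N : Set (X × X) | ∀ p ∈ N, ∀ q ∈ N, σ * ‖p.1 - q.1‖ ^ 2 ≤ ⟪p.2 - q.2, p.1 - q.1⟫} (by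
      intro c hc hch _
      refine ⟨⋃₀ c, ?_, fun s hs => subset_sUnion_of_mem hs⟩
      rintro p ⟨A, hA, hpA⟩ q ⟨B, hB, hqB⟩
      rcases hch.total hA hB with h | h
      · exact hc hB p (h hpA) q hqB
      · exact hc hA p hpA q (h hqB)) M hM
  refine ⟨fun x => {v | (x, v) ∈ N}, ⟨hN.1, ?_⟩, hMN⟩
  intro S hS hsub
  exact subset_antisymm (hN.2 (y := gph S) hS hsub) hsub

lemma L0 (σ μ : ℝ) (hμ : 0 ≤ μ) (T : X → Set X) (W : Set (X × X))
    (hW : ∀ p ∈ gph T ∩ W, ∀ w z : X, z ∈ coderiv T p.1 p.2 w → σ * ‖w‖ ^ 2 ≤ ⟪z, w⟫)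
    (p : X × X) (hp : p ∈ gph T ∩ W) (w z : X) (C : ℝ)
    (h : ∀ᶠ q in 𝓝[gph T] p,
      ⟪z, q.1 - p.1⟫ - ⟪w, q.2 - p.2⟫ ≤ C * ‖q.2 + μ • q.1 - (p.2 + μ • p.1)‖ ^ 2) :
    σ * ‖w‖ ^ 2 ≤ ⟪z, w⟫ := by
  apply hW p hp
  intro ε hε
  have hcont : Tendsto (fun q : X × X => |C| * (1 + μ) ^ 2 * (‖q.1 - p.1‖ + ‖q.2 - p.2‖))
      (𝓝[gph T] p) (𝓝 0) := by
    have : Continuous (fun q : X × X => |C| * (1 + μ) ^ 2 * (‖q.1 - p.1‖ + ‖q.2 - p.2‖)) := by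
      fun_prop
    have h2 := this.tendsto p
    simp only [sub_self, norm_zero, add_zero, mul_zero] at h2
    exact h2.mono_left nhdsWithin_le_nhds
  filter_upwards [h, hcont.eventually_le_const hε] with q h1 h2
  rw [inner_neg_left, ← sub_eq_add_neg]
  refine h1.trans ?_
  set n := ‖q.1 - p.1‖ + ‖q.2 - p.2‖ with hn
  have hn0 : 0 ≤ n := by positivity
  have h3 : ‖q.2 + μ • q.1 - (p.2 + μ • p.1)‖ ≤ (1 + μ) * n := by
    rw [show q.2 + μ • q.1 - (p.2 + μ • p.1) = (q.2 - p.2) + μ • (q.1 - p.1) by module]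
    refine (norm_add_le _ _).trans ?_
    rw [norm_smul, Real.norm_of_nonneg hμ, hn]
    nlinarith [norm_nonneg (q.1 - p.1), norm_nonneg (q.2 - p.2),
      mul_nonneg hμ (norm_nonneg (q.2 - p.2))]
  calc C * ‖q.2 + μ • q.1 - (p.2 + μ • p.1)‖ ^ 2
      ≤ |C| * ‖q.2 + μ • q.1 - (p.2 + μ • p.1)‖ ^ 2 :=
        mul_le_mul_of_nonneg_right (le_abs_self C) (sq_nonneg _)
    _ ≤ |C| * ((1 + μ) * n) ^ 2 :=
        mul_le_mul_of_nonneg_left (pow_le_pow_left₀ (norm_nonneg _) h3 2) (abs_nonneg C)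
    _ = (|C| * (1 + μ) ^ 2 * n) * n := by ring
    _ ≤ ε * n := mul_le_mul_of_nonneg_right h2 hn0

lemma backward (σ : ℝ) (hσ : 0 < σ) (T : X → Set X) (xbar vbar : X)
    (hx : vbar ∈ T xbar) (hcl : LocClosedAt (gph T) (xbar, vbar))
    (h1 : ∃ r > 0, LocHypoAt r T xbar vbar)
    (h2 : ∃ W ∈ 𝓝 ((xbar, vbar) : X × X), ∀ p ∈ gph T ∩ W, ∀ w z : X,
          z ∈ coderiv T p.1 p.2 w → σ * ‖w‖ ^ 2 ≤ ⟪z, w⟫) :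
    LocStrMaxBAt σ T xbar vbar := by
  obtain ⟨ε0, hε0, hclosed⟩ := hcl
  obtain ⟨r, hr, W1, hW1, hypo⟩ := h1
  obtain ⟨W2, hW2, hcod⟩ := h2
  set pb : X × X := (xbar, vbar) with hpb
  obtain ⟨δ1, hδ1, hδ1W⟩ := Metric.nhds_basis_closedBall.mem_iff.1 (Filter.inter_mem hW1 hW2)
  set δ := min δ1 ε0 with hδ
  have hδ0 : 0 < δ := lt_min hδ1 hε0
  have hδW : Metric.closedBall pb δ ⊆ W1 ∩ W2 :=
    (Metric.closedBall_subset_closedBall (min_le_left _ _)).trans hδ1W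
  set Ω := gph T ∩ Metric.closedBall pb δ with hΩ
  have hΩc : IsClosed Ω := by
    have : Ω = (gph T ∩ Metric.closedBall pb ε0) ∩ Metric.closedBall pb δ := by
      rw [hΩ, inter_assoc, inter_eq_self_of_subset_right
        (Metric.closedBall_subset_closedBall (min_le_right δ1 ε0) : Metric.closedBall pb δ ⊆ _)]
    rw [this]
    exact hclosed.inter Metric.isClosed_closedBall
  have hpbΩ : pb ∈ Ω := ⟨hx, by simp [hδ0.le]⟩
  set μ := r + 1 with hμ
  have hμ0 : 0 ≤ μ := by positivity
  set Y : X × X → X := fun p => p.2 + μ • p.1 with hY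
  have hYsub : ∀ p q, Y p - Y q = (p.2 - q.2) + μ • (p.1 - q.1) := by
    intro p q; simp only [hY]; module
  have hYcont : Continuous Y := by simp only [hY]; fun_prop
  have hcontr : ∀ p ∈ Ω, ∀ q ∈ Ω, ‖p.1 - q.1‖ ≤ ‖Y p - Y q‖ := by
    intro p hp q hq
    have h1 := hypo p ⟨hp.1, (hδW hp.2).1⟩ q ⟨hq.1, (hδW hq.2).1⟩
    have h2 : ‖p.1 - q.1‖ ^ 2 ≤ ⟪Y p - Y q, p.1 - q.1⟫ := by
      rw [hYsub, inner_add_left, real_inner_smul_left, real_inner_self_eq_norm_sq, hμ]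
      linarith
    have h3 := h2.trans (real_inner_le_norm _ _)
    rcases (norm_nonneg (p.1 - q.1)).eq_or_lt with h0 | h0
    · rw [← h0]; exact norm_nonneg _
    · rw [sq] at h3; exact le_of_mul_le_mul_right h3 h0
  have hcontr2 : ∀ p ∈ Ω, ∀ q ∈ Ω, dist p q ≤ (1 + μ) * ‖Y p - Y q‖ := by
    intro p hp q hq
    have h1 := hcontr p hp q hq
    have h2 : ‖p.2 - q.2‖ ≤ ‖Y p - Y q‖ + μ * ‖p.1 - q.1‖ := by
      have := norm_sub_le (Y p - Y q) (μ • (p.1 - q.1))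
      rw [norm_smul, Real.norm_of_nonneg hμ0] at this
      rwa [hYsub p q, add_sub_cancel_right, ← hYsub p q] at this
    have h3 := mul_le_mul_of_nonneg_left h1 hμ0
    have h4 : 0 ≤ μ * ‖Y p - Y q‖ := by positivity
    rw [Prod.dist_eq, max_le_iff, dist_eq_norm, dist_eq_norm]
    constructor <;> linarith
  have hYlip : ∀ p q, ‖Y p - Y q‖ ≤ (1 + μ) * dist p q := by
    intro p q
    rw [hYsub]
    refine (norm_add_le _ _).trans ?_
    rw [norm_smul, Real.norm_of_nonneg hμ0]
    have h1 : ‖p.1 - q.1‖ ≤ dist p q := by rw [← dist_eq_norm, Prod.dist_eq]; exact le_max_left _ _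
    have h2 : ‖p.2 - q.2‖ ≤ dist p q := by rw [← dist_eq_norm, Prod.dist_eq]; exact le_max_right _ _
    have h3 := mul_le_mul_of_nonneg_left h1 hμ0
    linarith
  set yb := Y pb with hyb
  have hinj : ∀ p ∈ Ω, ∀ q ∈ Ω, Y p = Y q → p = q := by
    intro p hp q hq h
    have := hcontr2 p hp q hq
    rw [h, sub_self, norm_zero, mul_zero] at this
    exact dist_le_zero.1 this
  have hSc : IsClosed (Y '' Ω) := by
    have : CompleteSpace Ω := hΩc.completeSpace_coe
    have hanti : AntilipschitzWith ⟨1 + μ, by positivity⟩ (fun p : Ω => Y p.1) := by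
      apply AntilipschitzWith.of_le_mul_dist
      intro p q
      rw [dist_eq_norm (Y p.1)]
      exact hcontr2 p.1 p.2 q.1 q.2
    have huc : UniformContinuous (fun p : Ω => Y p.1) := by
      have : LipschitzWith ⟨1 + μ, by positivity⟩ Y := by
        apply LipschitzWith.of_dist_le_mul
        intro p q
        rw [dist_eq_norm (Y p)]
        exact hYlip p q
      exact this.uniformContinuous.comp uniformContinuous_subtype_val
    have := hanti.isClosed_range huc
    rwa [show (fun p : Ω => Y p.1) = Y ∘ Subtype.val from rfl, range_comp,
      Subtype.range_coe] at this
  -- local surjectivity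
  set ρ := δ / (3 * (1 + μ)) with hρ
  have hρ0 : 0 < ρ := by positivity
  have hρδ : (1 + μ) * (3 * ρ) = δ := by rw [hρ]; field_simp
  have hYb : ∀ p ∈ Ω, ‖Y p - yb‖ ≤ (1 + μ) * δ := by
    intro p hp
    refine (hYlip p pb).trans ?_
    exact mul_le_mul_of_nonneg_left hp.2 (by positivity)
  have hinner : ∀ p ∈ Ω, ‖Y p - yb‖ < 3 * ρ → p ∈ Metric.ball pb δ := by
    intro p hp h
    rw [Metric.mem_ball]
    refine (hcontr2 p hp pb hpbΩ).trans_lt ?_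
    rw [← hρδ]
    exact mul_lt_mul_of_pos_left h (by positivity)
  have hevΩ : ∀ p ∈ Metric.ball pb δ, ∀ᶠ q in 𝓝[gph T] p, q ∈ Ω := by
    intro p hp
    have h1 : ∀ᶠ q in 𝓝[gph T] p, q ∈ Metric.ball pb δ :=
      nhdsWithin_le_nhds (Metric.isOpen_ball.mem_nhds hp)
    filter_upwards [h1, self_mem_nhdsWithin] with q hq hq2
    exact ⟨hq2, Metric.ball_subset_closedBall hq⟩
  have hsurj : ∀ y ∈ Metric.ball yb ρ, ∃ p ∈ Ω, Y p = y := by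
    intro y0 hy0
    by_contra hcon
    have hnot : y0 ∉ Y '' Ω := hcon
    obtain ⟨η, hη, hηS⟩ := Metric.nhds_basis_ball.mem_iff.1 (hSc.isOpen_compl.mem_nhds hnot)
    have hηS' : ∀ s ∈ Y '' Ω, η ≤ ‖s - y0‖ := by
      intro s hs
      by_contra hlt
      push Not at hlt
      exact hηS (mem_ball_iff_norm.2 hlt) hs
    set D := 2 * ((1 + μ) * δ) with hD
    have hD0 : 0 < D := by positivity
    set ε := min η (ρ ^ 2 / (D + D ^ 2)) with hε
    have hεpos : 0 < ε := by positivity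
    obtain ⟨s, hs, e, he, hmin⟩ := vp (Y '' Ω) hSc ⟨yb, pb, hpbΩ, rfl⟩ (‖yb‖ + (1 + μ) * δ) (by
      rintro _ ⟨p, hp, rfl⟩
      have := norm_add_le yb (Y p - yb)
      rw [add_sub_cancel] at this
      linarith [hYb p hp]) (fun y => ‖y - y0‖ ^ 2) (by fun_prop) 0 (fun _ _ => sq_nonneg _) ε hεpos
    obtain ⟨p, hp, rfl⟩ := hs
    have hclose : ‖Y p - yb‖ < 3 * ρ := by
      have h1 := hmin yb ⟨pb, hpbΩ, rfl⟩
      have h0 : ‖yb - Y p‖ ≤ D := by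
        rw [norm_sub_rev]
        have := hYb p hp
        have : 0 ≤ (1 + μ) * δ := by positivity
        linarith
      have h2 := (abs_le.1 (abs_real_inner_le_norm e (yb - Y p))).2
      have h3 : ‖e‖ * ‖yb - Y p‖ ≤ ε * D := mul_le_mul he h0 (norm_nonneg _) hεpos.le
      have h4 : ε * ‖yb - Y p‖ ^ 2 ≤ ε * D ^ 2 :=
        mul_le_mul_of_nonneg_left (pow_le_pow_left₀ (norm_nonneg _) h0 2) hεpos.le
      have h5 : ε * (D + D ^ 2) ≤ ρ ^ 2 := by
        rw [← le_div_iff₀ (by positivity)]; exact min_le_right _ _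
      rw [Metric.mem_ball, dist_comm, dist_eq_norm] at hy0
      have h6 : ‖yb - y0‖ ^ 2 ≤ ρ ^ 2 := pow_le_pow_left₀ (norm_nonneg _) hy0.le 2
      have h7 : ‖Y p - y0‖ ^ 2 < (2 * ρ) ^ 2 := by
        nlinarith
      have h8 := (sq_lt_sq₀ (norm_nonneg _) (by positivity)).1 h7
      have h9 := norm_sub_le (Y p - y0) (yb - y0)
      rw [sub_sub_sub_cancel_right] at h9
      linarith
    have hpball := hinner p hp hclose
    set ζ := -((2 : ℝ) • (Y p - y0) + e) with hζ
    have hL := L0 σ μ hμ0 T W2 hcod p ⟨hp.1, (hδW hp.2).2⟩ (-ζ) (μ • ζ) (1 + ε) (by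
      filter_upwards [hevΩ p hpball] with q hq
      have h1 := hmin (Y q) ⟨q, hq, rfl⟩
      have h2 : ‖Y q - y0‖ ^ 2 = ‖Y p - y0‖ ^ 2 + 2 * ⟪Y p - y0, Y q - Y p⟫ + ‖Y q - Y p‖ ^ 2 := by
        rw [← norm_add_sq_real]; congr 2; abel
      have h3 : ⟪μ • ζ, q.1 - p.1⟫ - ⟪-ζ, q.2 - p.2⟫ = ⟪ζ, Y q - Y p⟫ := by
        rw [hYsub, inner_neg_left, inner_add_right, real_inner_smul_left, real_inner_smul_right]
        ring
      rw [h3]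
      change _ ≤ (1 + ε) * ‖Y q - Y p‖ ^ 2
      rw [hζ, inner_neg_left, inner_add_left, real_inner_smul_left]
      linarith)
    rw [norm_neg, inner_neg_right, real_inner_smul_left, real_inner_self_eq_norm_sq] at hL
    have hζ0 : 0 < ‖ζ‖ := by
      rw [hζ, norm_neg]
      have h1 := norm_sub_le ((2 : ℝ) • (Y p - y0) + e) e
      rw [add_sub_cancel_right, norm_smul, Real.norm_of_nonneg (by norm_num)] at h1
      have h2 := hηS' _ ⟨p, hp, rfl⟩
      have h3 : ε ≤ η := min_le_left _ _
      linarith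
    have : 0 < (σ + μ) * ‖ζ‖ ^ 2 := by positivity
    nlinarith
  have hJ : ∀ y : X, ∃ p : X × X, y ∈ Metric.ball yb ρ → p ∈ Ω ∧ Y p = y := by
    intro y
    by_cases hy : y ∈ Metric.ball yb ρ
    · obtain ⟨p, hp, hpy⟩ := hsurj y hy
      exact ⟨p, fun _ => ⟨hp, hpy⟩⟩
    · exact ⟨0, fun h => absurd h hy⟩
  choose J hJ using hJ
  set R := ρ / 2 with hR
  have hR0 : 0 < R := by positivity
  have hR2 : 2 * R = ρ := by rw [hR]; ring
  set lam := σ + μ with hlam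
  have hlam0 : 0 < lam := by positivity
  have hcoco : ∀ a ∈ Metric.ball yb R, ∀ b ∈ Metric.ball yb R, ∀ q : X,
      ⟪q, ((J a).1 - (J b).1) - (1 / (2 * lam)) • (a - b)⟫ ≤ ‖q‖ / (2 * lam) * ‖a - b‖ := by
    intro a ha b hb q
    have hmv := mv (fun y => ⟪q, (J y).1 - (1 / (2 * lam)) • y⟫) yb R (‖q‖ / (2 * lam))
      (‖q‖ * (1 + 1 / (2 * lam))) hR0 (by positivity) (by positivity) (by
        rw [hR2]
        intro a ha b hb
        obtain ⟨ha1, ha2⟩ := hJ a ha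
        obtain ⟨hb1, hb2⟩ := hJ b hb
        have h1 := hcontr _ ha1 _ hb1
        rw [ha2, hb2] at h1
        rw [← inner_sub_right]
        refine (abs_real_inner_le_norm _ _).trans ?_
        rw [mul_assoc]
        apply mul_le_mul_of_nonneg_left _ (norm_nonneg q)
        rw [show (J a).1 - (1 / (2 * lam)) • a - ((J b).1 - (1 / (2 * lam)) • b) =
          ((J a).1 - (J b).1) - (1 / (2 * lam)) • (a - b) by module]
        refine (norm_sub_le _ _).trans ?_
        rw [norm_smul, Real.norm_of_nonneg (by positivity)]
        linarith) (by
        rw [hR2]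
        intro y hy w' C hev
        obtain ⟨hp, hpy⟩ := hJ y hy
        set p := J y with hpdef
        set w := w' + (1 / (2 * lam)) • q with hw
        have hpball : p ∈ Metric.ball pb δ := by
          apply hinner p hp
          rw [hpy]
          rw [mem_ball_iff_norm] at hy
          linarith
        have hYt : Tendsto Y (𝓝[gph T] p) (𝓝 y) := by
          rw [← hpy]
          exact (hYcont.tendsto p).mono_left nhdsWithin_le_nhds
        have hL := L0 σ μ hμ0 T W2 hcod p ⟨hp.1, (hδW hp.2).2⟩ (-w) (μ • w - q) C (by
          filter_upwards [hevΩ p hpball, hYt.eventually hev,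
            hYt.eventually (Metric.isOpen_ball.mem_nhds hy)] with p' hp' h1 h2
          obtain ⟨hj1, hj2⟩ := hJ _ h2
          have hjp : J (Y p') = p' := hinj _ hj1 _ hp' hj2
          rw [hjp] at h1
          change _ ≤ C * ‖Y p' - Y p‖ ^ 2
          have h3 : ⟪μ • w - q, p'.1 - p.1⟫ - ⟪-w, p'.2 - p.2⟫ =
              ⟪w, Y p' - Y p⟫ - ⟪q, p'.1 - p.1⟫ := by
            rw [hYsub, inner_neg_left, inner_add_right, inner_sub_left, real_inner_smul_left,
              real_inner_smul_right]
            ring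
          rw [h3, hpy, hw, inner_add_left, real_inner_smul_left]
          simp only [inner_sub_right, real_inner_smul_right] at h1 ⊢
          linarith)
        rw [norm_neg, inner_neg_right, inner_sub_left, real_inner_smul_left,
          real_inner_self_eq_norm_sq] at hL
        have hL2 : lam * ‖w‖ ^ 2 ≤ ⟪q, w⟫ := by rw [hlam]; linarith
        have hw' : w' = w - (1 / (2 * lam)) • q := by rw [hw]; abel
        rw [← sq_le_sq₀ (norm_nonneg _) (by positivity), hw', norm_sub_sq_real,
          real_inner_smul_right, norm_smul, Real.norm_of_nonneg (by positivity),
          real_inner_comm]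
        have h5 : ‖w‖ ^ 2 ≤ ⟪q, w⟫ / lam := by
          rw [le_div_iff₀ hlam0]; linarith
        have h6 : 2 * (1 / (2 * lam) * ⟪q, w⟫) = ⟪q, w⟫ / lam := by field_simp
        have h7 : (1 / (2 * lam) * ‖q‖) = ‖q‖ / (2 * lam) := by ring
        rw [h6, h7]
        linarith) a ha b hb
    rw [← inner_sub_right] at hmv
    rwa [show (J a).1 - (1 / (2 * lam)) • a - ((J b).1 - (1 / (2 * lam)) • b) =
          ((J a).1 - (J b).1) - (1 / (2 * lam)) • (a - b) by module] at hmv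
  set M := {p ∈ Ω | Y p ∈ Metric.ball yb R} with hM
  have hRρ : Metric.ball yb R ⊆ Metric.ball yb ρ := Metric.ball_subset_ball (by linarith)
  have hMmono : ∀ p ∈ M, ∀ q ∈ M, σ * ‖p.1 - q.1‖ ^ 2 ≤ ⟪p.2 - q.2, p.1 - q.1⟫ := by
    rintro p ⟨hp, hpR⟩ q ⟨hq, hqR⟩
    obtain ⟨hj1, hj2⟩ := hJ _ (hRρ hpR)
    obtain ⟨hk1, hk2⟩ := hJ _ (hRρ hqR)
    have h1 := hcoco _ hpR _ hqR
    rw [hinj _ hj1 _ hp hj2, hinj _ hk1 _ hq hk2] at h1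
    have h2 := h1 ((p.1 - q.1) - (1 / (2 * lam)) • (Y p - Y q))
    set n := (p.1 - q.1) - (1 / (2 * lam)) • (Y p - Y q) with hn
    rw [real_inner_self_eq_norm_sq] at h2
    have h3 : ‖n‖ ≤ 1 / (2 * lam) * ‖Y p - Y q‖ := by
      rcases (norm_nonneg n).eq_or_lt with h0 | h0
      · rw [← h0]; positivity
      · have : ‖n‖ * ‖n‖ ≤ ‖n‖ * (1 / (2 * lam) * ‖Y p - Y q‖) := by
          calc ‖n‖ * ‖n‖ = ‖n‖ ^ 2 := by ring
            _ ≤ _ := h2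
            _ = _ := by ring
        exact le_of_mul_le_mul_left this h0
    have h4 := pow_le_pow_left₀ (norm_nonneg _) h3 2
    rw [hn, norm_sub_sq_real, real_inner_smul_right, norm_smul,
      Real.norm_of_nonneg (by positivity)] at h4
    have h6 : 2 * (1 / (2 * lam) * ⟪p.1 - q.1, Y p - Y q⟫) = ⟪p.1 - q.1, Y p - Y q⟫ / lam := by
      field_simp
    rw [h6] at h4
    have h7 : ‖p.1 - q.1‖ ^ 2 ≤ ⟪p.1 - q.1, Y p - Y q⟫ / lam := by linarith
    rw [le_div_iff₀ hlam0, hYsub, inner_add_right, real_inner_smul_right,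
      real_inner_self_eq_norm_sq, real_inner_comm] at h7
    rw [hlam] at h7
    linarith
  obtain ⟨G, hG, hMG⟩ := extend_strMono σ M hMmono
  set δ' := min δ (R / (1 + μ)) with hδ'
  have hδ'0 : 0 < δ' := by positivity
  have hYball : ∀ p ∈ Metric.ball pb δ', Y p ∈ Metric.ball yb R := by
    intro p hp
    rw [mem_ball_iff_norm]
    refine (hYlip p pb).trans_lt ?_
    have h1 : dist p pb < R / (1 + μ) := lt_of_lt_of_le hp (min_le_right _ _)
    rw [lt_div_iff₀ (by positivity)] at h1
    linarith
  refine ⟨Metric.ball xbar δ', Metric.ball_mem_nhds _ hδ'0, Metric.ball vbar δ',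
    Metric.ball_mem_nhds _ hδ'0, G, hG, ?_⟩
  rw [ball_prod_same]
  apply subset_antisymm
  · rintro p ⟨hpG, hpB⟩
    refine ⟨?_, hpB⟩
    have hpR := hYball p hpB
    obtain ⟨hj1, hj2⟩ := hJ _ (hRρ hpR)
    have hjM : J (Y p) ∈ M := ⟨hj1, by rw [hj2]; exact hpR⟩
    set q := J (Y p) with hq
    have h1 := hG.1 p hpG q (hMG hjM)
    have h2 := hYsub p q
    rw [hj2, sub_self] at h2
    have h3 : p.2 - q.2 = -(μ • (p.1 - q.1)) := by
      rw [eq_neg_iff_add_eq_zero]; exact h2.symm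
    rw [h3, inner_neg_left, real_inner_smul_left, real_inner_self_eq_norm_sq] at h1
    have h4 : ‖p.1 - q.1‖ ^ 2 = 0 := by
      have : lam * ‖p.1 - q.1‖ ^ 2 ≤ 0 := by rw [hlam]; linarith
      nlinarith [sq_nonneg ‖p.1 - q.1‖]
    have h5 : p.1 - q.1 = 0 := by simpa using h4
    have h6 : p.2 - q.2 = 0 := by rw [h3, h5]; simp
    have h7 : p = q := Prod.ext (sub_eq_zero.1 h5) (sub_eq_zero.1 h6)
    rw [h7]
    exact hj1.1
  · rintro p ⟨hpT, hpB⟩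
    refine ⟨hMG ⟨⟨hpT, ?_⟩, hYball p hpB⟩, hpB⟩
    exact Metric.ball_subset_closedBall (Metric.ball_subset_ball (min_le_left _ _) hpB)

/-- Coderivative characterization of local strong maximal monotonicity with modulus σ. -/
theorem stmt_19 (σ : ℝ) (hσ : 0 < σ) (T : X → Set X) (xbar vbar : X)
    (hx : vbar ∈ T xbar) (hcl : LocClosedAt (gph T) (xbar, vbar)) :
    LocStrMaxBAt σ T xbar vbar ↔
      ((∃ r > 0, LocHypoAt r T xbar vbar) ∧
        ∃ W ∈ 𝓝 ((xbar, vbar) : X × X), ∀ p ∈ gph T ∩ W, ∀ w z : X,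
          z ∈ coderiv T p.1 p.2 w → σ * ‖w‖ ^ 2 ≤ ⟪z, w⟫) := by
  exact ⟨forward σ hσ T xbar vbar, fun h => backward σ hσ T xbar vbar hx hcl h.1 h.2⟩
end
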